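/- Let α = 1 and C₁ = 1/(2π). There exist β₀ < 1/2, ν ≥ 2, and three pairwise distinct points z₁*, z₂*, z₃* ∈ ℝ² with intensities a₁, a₂, a₃ ∈ ℝ∖{0} forming a stationary solution of the 1-point-vortex system (so z_i*(t) = z_i* for all t), such that: for every β ∈ (β₀, 1), every ξ₁ > (4π/3)(1−β), and every sufficiently small ε > 0, there exists ω₀ : ℝ² → ℝ satisfying hypothesis (H_ε) such that every weak solution ω of the 2D incompressible Euler equation in vorticity form with initial datum ω₀ satisfies τ_{ε,β} ≤ ξ₁ |ln ε|. -/

import Mathlib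

open MeasureTheory

/-- The Biot–Savart kernel `K_α(x,y) = C_α (x−y)^⊥ / |x−y|^{α+1}`, with `ℝ²`
identified with `ℂ` (so that `v^⊥ = i·v`). -/
noncomputable def biotSavartK (α Cα : ℝ) (x y : ℂ) : ℂ :=
  (Cα / ‖x - y‖ ^ (α + 1)) • (Complex.I * (x - y))

/-- The velocity field generated by the active scalar `ω`. -/
noncomputable def velocity (α Cα : ℝ) (ω : ℂ → ℝ → ℝ) (x : ℂ) (t : ℝ) : ℂ :=
  ∫ y, ω y t • biotSavartK α Cα x y

/-- A weak solution of the gSQG equation with parameter `α` (the Euler equation in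
vorticity form when `α = 1`, `C₁ = 1/(2π)`): a family `ω(·,t) ∈ L¹ ∩ L∞`,
uniformly bounded in `L¹ ∩ L∞`, satisfying the weak formulation against all
compactly supported smooth test functions on `ℝ² × [0,∞)`. -/
def IsWeakSolution (α Cα : ℝ) (ω₀ : ℂ → ℝ) (ω : ℂ → ℝ → ℝ) : Prop :=
  (∀ t : ℝ, Integrable (fun x => ω x t)) ∧
  (∃ M : ℝ, ∀ t : ℝ, (∫ x, |ω x t|) ≤ M ∧ ∀ᵐ x ∂(volume : Measure ℂ), |ω x t| ≤ M) ∧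
  ∀ φ : ℂ → ℝ → ℝ,
    ContDiff ℝ (⊤ : ℕ∞) (fun p : ℂ × ℝ => φ p.1 p.2) →
    HasCompactSupport (fun p : ℂ × ℝ => φ p.1 p.2) →
    (∫ t in Set.Ioi (0 : ℝ), ∫ x, ω x t *
        (deriv (fun s => φ x s) t +
          fderiv ℝ (fun y => φ y t) x (velocity α Cα ω x t))) +
      (∫ x, ω₀ x * φ x 0) = 0

/-- Hypothesis (H_ε): `ω₀ = ∑ ω₀ᵢ`, `supp ω₀ᵢ ⊆ D(zᵢ*, ε)`, each `ω₀ᵢ` has a single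
sign with `∫ ω₀ᵢ = aᵢ`, and `|ω₀| ≤ C ε^{-ν}`. -/
def ConcentratedData (N : ℕ) (z : Fin N → ℂ) (a : Fin N → ℝ) (C ν ε : ℝ)
    (ω₀ : ℂ → ℝ) : Prop :=
  ∃ ω₀i : Fin N → ℂ → ℝ,
    (∀ x, ω₀ x = ∑ i, ω₀i i x) ∧
    (∀ i, Function.support (ω₀i i) ⊆ Metric.closedBall (z i) ε) ∧
    (∀ i, Integrable (ω₀i i)) ∧
    (∀ i x, 0 ≤ a i * ω₀i i x) ∧
    (∀ i, (∫ x, ω₀i i x) = a i) ∧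
    (∀ x, |ω₀ x| ≤ C * ε ^ (-ν))

/-- `τ_{ε,β} ≤ T`: every time `t ≥ 0` up to which the support of `ω` stays confined in
`⋃ᵢ D(zᵢ*, ε^β)` satisfies `t ≤ T`. -/
def ExitTimeLE (N : ℕ) (z : Fin N → ℂ) (β ε : ℝ) (ω : ℂ → ℝ → ℝ) (T : ℝ) : Prop :=
  ∀ t : ℝ, 0 ≤ t →
    (∀ s : ℝ, 0 ≤ s → s ≤ t →
      Function.support (fun x => ω x s) ⊆ ⋃ i, Metric.closedBall (z i) (ε ^ β)) →
    t ≤ T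

/-!
The vortices of intensities `1, -1/2, 1` at the points `-1, 0, 1` are stationary but unstable. Let
`D` be the displacement of the middle vortex from the midpoint of the other two. As long as the
vortices stay within `κ` of their initial places, `-Im D²` grows at an exponential rate at least
`(3 / (2π)) (1 - 10κ)`, whatever the motion of the outer pair. No trajectory has to be computed.

For the Euler equation, start from patches of radius `ε ^ 24` whose centres are displaced by about
`ε`. While the vorticity stays in disjoint discs, testing the weak formulation with functions that
are constant on each disc shows that each component has a constant mass, and it also keeps its sign.
The self-interaction drops out of the motion of the barycentres, since the kernel is antisymmetric,
and out of the second moments, since it is orthogonal to the separation. So the second moments grow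
at most exponentially with rate `O(1)`, they are a power of `ε` smaller than anything relevant
during a time `O(|log ε|)`, and the barycentres follow the point-vortex system up to an error
`O(ε ^ 4)`. Growth from `D² ~ ε²` to `D² ~ ε ^ (2β)` then takes a time
`(2π / 3) · 2 (1 - β) |log ε|`, to leading order.

The delicate step is that the components keep their sign, as a bounded weak solution is not known
to be transported by a flow in advance. By duality it is enough to transport test functions `φ`
backwards: a step `φ ↦ φ (x + h v(x))` does not increase `sup |φ|`, where `v` is the velocity
smoothed at a scale `δ`. The Lipschitz constant of `v` is only `O(log (1 / δ))`, so that over short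
times the errors vanish as `h → 0` and then `δ → 0`, and the `L¹` norm of the vorticity cannot grow.
-/

namespace EulerVortex

open Complex ComplexConjugate Filter Metric Set Topology

/-! ### The Biot–Savart kernel and radial potentials -/

/-- The Biot–Savart kernel of the Euler equation, `i (x - y) / (2π |x - y|²)`. -/
noncomputable def eulerKernel (x y : ℂ) : ℂ := biotSavartK 1 (1 / (2 * Real.pi)) x y

lemma eulerKernel_eq_smul (x y : ℂ) :
    eulerKernel x y = (1 / (2 * Real.pi) / ‖x - y‖ ^ 2 : ℝ) • (I * (x - y)) := by
  unfold eulerKernel biotSavartK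
  norm_num

lemma norm_eulerKernel (x y : ℂ) : ‖eulerKernel x y‖ = 1 / (2 * Real.pi) / ‖x - y‖ := by
  rw [eulerKernel_eq_smul, norm_smul, norm_mul, norm_I, one_mul,
    Real.norm_of_nonneg (by positivity)]
  by_cases h : ‖x - y‖ = 0
  · simp [h]
  · field_simp

lemma eulerKernel_eq_div_conj (x y : ℂ) :
    eulerKernel x y = ((1 / (2 * Real.pi) : ℝ) : ℂ) * (I / conj (x - y)) := by
  rw [eulerKernel_eq_smul]
  by_cases h : x - y = 0
  · simp [h]
  · have hconj : conj (x - y) ≠ 0 := (map_ne_zero _).2 h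
    have hsq : ((‖x - y‖ : ℝ) : ℂ) ^ 2 = (x - y) * conj (x - y) := (mul_conj' _).symm
    rw [real_smul]
    push_cast
    rw [hsq]
    field_simp

lemma eulerKernel_antisymm (x y : ℂ) : eulerKernel x y = -eulerKernel y x := by
  rw [eulerKernel_eq_div_conj, eulerKernel_eq_div_conj, ← neg_sub y x, map_neg, div_neg, mul_neg]

lemma measurable_eulerKernel : Measurable (fun p : ℂ × ℂ => eulerKernel p.1 p.2) := by
  simp only [eulerKernel_eq_smul]
  fun_prop

/-- `M` bounds the density `w` both in `L¹` and in `L^∞`. -/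
structure VorticityBound (w : ℂ → ℝ) (M : ℝ) : Prop where
  integrable : Integrable w
  integral_abs_le : ∫ x, |w x| ≤ M
  ae_abs_le : ∀ᵐ x, |w x| ≤ M

namespace VorticityBound

variable {w : ℂ → ℝ} {M : ℝ}

lemma nonneg (h : VorticityBound w M) : 0 ≤ M :=
  (integral_nonneg fun y => abs_nonneg (w y)).trans h.integral_abs_le

lemma mono (h : VorticityBound w M) {M' : ℝ} (hM : M ≤ M') : VorticityBound w M' :=
  ⟨h.integrable, h.integral_abs_le.trans hM, h.ae_abs_le.mono fun _ hx => hx.trans hM⟩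

variable {E : Type*} [NormedAddCommGroup E] [NormedSpace ℝ E]

lemma integrable_smul_of_norm_le_radial_add {g : ℝ → ℝ} {F : ℂ → E} {c : ℝ}
    (h : VorticityBound w M) (hg : ∀ r, 0 ≤ g r)
    (hgi : IntegrableOn (fun r => r * g r) (Ioi 0)) (hc : 0 ≤ c)
    (hFm : AEStronglyMeasurable F volume) (x : ℂ)
    (hF : ∀ y, w y ≠ 0 → ‖F y‖ ≤ g ‖x - y‖ + c) :
    Integrable (fun y => w y • F y) ∧
      ∫ y, ‖w y • F y‖ ≤ M * (2 * Real.pi * (∫ r in Ioi 0, r * g r) + c) := by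
  have hg_int : Integrable (fun y : ℂ => g ‖y‖) := by
    rw [integrable_fun_norm_addHaar volume]
    simpa using hgi
  have hg_val : (∫ y : ℂ, g ‖x - y‖) = 2 * Real.pi * ∫ r in Ioi 0, r * g r := by
    rw [integral_sub_left_eq_self (fun y => g ‖y‖) volume x, integral_fun_norm_addHaar volume]
    simp only [finrank_real_complex, Measure.real, volume_ball, ENNReal.ofReal_one, one_pow,
      one_mul, ENNReal.coe_toReal, NNReal.coe_real_pi, Nat.add_one_sub_one, pow_one, smul_eq_mul,
      nsmul_eq_mul, Nat.cast_ofNat]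
    ring
  have hg_int' : Integrable (fun y => g ‖x - y‖) := hg_int.comp_sub_left x
  have hmajorant : Integrable (fun y => M * g ‖x - y‖ + |w y| * c) :=
    (hg_int'.const_mul M).add (h.integrable.abs.mul_const c)
  have hle : ∀ᵐ y, ‖w y • F y‖ ≤ M * g ‖x - y‖ + |w y| * c := by
    filter_upwards [h.ae_abs_le] with y hy
    rw [norm_smul, Real.norm_eq_abs]
    by_cases hw : w y = 0
    · simpa [hw] using mul_nonneg h.nonneg (hg _)
    · calc |w y| * ‖F y‖ ≤ |w y| * (g ‖x - y‖ + c) := by gcongr; exact hF y hw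
        _ ≤ M * g ‖x - y‖ + |w y| * c := by
          rw [mul_add]; gcongr; exact hg _
  have hint : Integrable (fun y => w y • F y) :=
    hmajorant.mono' (h.integrable.aestronglyMeasurable.smul hFm) hle
  refine ⟨hint, ?_⟩
  calc ∫ y, ‖w y • F y‖ ≤ ∫ y, (M * g ‖x - y‖ + |w y| * c) :=
        integral_mono_ae hint.norm hmajorant hle
    _ = M * (2 * Real.pi * ∫ r in Ioi 0, r * g r) + (∫ y, |w y|) * c := by
      rw [integral_add (hg_int'.const_mul M) (h.integrable.abs.mul_const c), integral_const_mul,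
        integral_mul_const, hg_val]
    _ ≤ M * (2 * Real.pi * (∫ r in Ioi 0, r * g r) + c) := by
      have := mul_le_mul_of_nonneg_right h.integral_abs_le hc
      linarith

end VorticityBound

lemma mul_indicator_inv_eq_indicator_one :
    (fun r : ℝ => r * (Ioc 0 1).indicator (fun r => r⁻¹) r) =
      (Ioc (0 : ℝ) 1).indicator fun _ => 1 := by
  ext r
  by_cases hr : r ∈ Ioc (0 : ℝ) 1
  · simp only [indicator_of_mem hr]
    exact mul_inv_cancel₀ hr.1.ne'
  · simp only [indicator_of_notMem hr, mul_zero]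

lemma inv_le_indicator_add_one {r : ℝ} (hr : 0 ≤ r) :
    r⁻¹ ≤ (Ioc 0 1).indicator (fun r => r⁻¹) r + 1 := by
  by_cases h : r ∈ Ioc (0 : ℝ) 1
  · simp only [indicator_of_mem h]
    linarith
  · simp only [indicator_of_notMem h]
    rcases hr.lt_or_eq with hpos | rfl
    · have h1 : 1 < r := not_le.1 fun hle => h ⟨hpos, hle⟩
      linarith [inv_lt_one_of_one_lt₀ h1]
    · simp

lemma VorticityBound.integrable_smul_eulerKernel {w : ℂ → ℝ} {M : ℝ} (h : VorticityBound w M)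
    (x : ℂ) :
    Integrable (fun y => w y • eulerKernel x y) ∧ ∫ y, ‖w y • eulerKernel x y‖ ≤ 2 * M := by
  have hpi := Real.pi_gt_three
  have hset : Ioi (0 : ℝ) ∩ Ioc 0 1 = Ioc 0 1 := inter_eq_right.2 Ioc_subset_Ioi_self
  have hcoef : 1 / (2 * Real.pi) ≤ 1 := by
    rw [div_le_one (by positivity)]
    linarith
  obtain ⟨hint, hle⟩ := h.integrable_smul_of_norm_le_radial_add
    (g := fun r => 1 / (2 * Real.pi) * (Ioc 0 1).indicator (fun r => r⁻¹) r)
    (c := 1 / (2 * Real.pi)) (F := fun y => eulerKernel x y)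
    (fun r => mul_nonneg (by positivity) (indicator_nonneg (fun s hs => inv_nonneg.2 hs.1.le) r))
    (by
      simp_rw [mul_left_comm _ (1 / (2 * Real.pi))]
      refine Integrable.const_mul ?_ _
      rw [mul_indicator_inv_eq_indicator_one]
      refine Integrable.integrableOn ?_
      rw [integrable_indicator_iff measurableSet_Ioc]
      exact integrableOn_const (by simp))
    (by positivity)
    ((measurable_eulerKernel.comp (measurable_const.prodMk measurable_id)).aestronglyMeasurable)
    x (fun y _ => by
      rw [norm_eulerKernel, ← mul_add_one, div_eq_mul_inv]
      gcongr
      exact inv_le_indicator_add_one (norm_nonneg _))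
  refine ⟨hint, hle.trans ?_⟩
  simp_rw [mul_left_comm _ (1 / (2 * Real.pi))]
  rw [integral_const_mul, mul_indicator_inv_eq_indicator_one,
    setIntegral_indicator measurableSet_Ioc, hset, setIntegral_const]
  calc M * (2 * Real.pi * (1 / (2 * Real.pi) * (volume.real (Ioc (0 : ℝ) 1) • (1 : ℝ)))
        + 1 / (2 * Real.pi)) = M * (1 + 1 / (2 * Real.pi)) := by
        simp only [Real.volume_real_Ioc_of_le zero_le_one, smul_eq_mul]
        field_simp
        ring
    _ ≤ 2 * M := by nlinarith [h.nonneg]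

/-! ### The induced velocity and the transport rate -/

/-- The velocity field which the vorticity `w` induces through the Biot–Savart law. -/
noncomputable def inducedVelocity (w : ℂ → ℝ) (x : ℂ) : ℂ := ∫ y, w y • eulerKernel x y

/-- The rate `∫ w ∇ψ · u` at which the velocity `u` induced by `w` changes `∫ w ψ`. -/
noncomputable def transportRate (w ψ : ℂ → ℝ) : ℝ :=
  ∫ x, w x * fderiv ℝ ψ x (inducedVelocity w x)

namespace VorticityBound

variable {w : ℂ → ℝ} {M B : ℝ}

lemma aestronglyMeasurable_inducedVelocity (h : VorticityBound w M) :
    AEStronglyMeasurable (inducedVelocity w) volume := by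
  have hprod : AEStronglyMeasurable (fun p : ℂ × ℂ => w p.2 • eulerKernel p.1 p.2)
      ((volume : Measure ℂ).prod volume) :=
    h.integrable.aestronglyMeasurable.comp_snd.smul measurable_eulerKernel.aestronglyMeasurable
  exact hprod.integral_prod_right'

lemma norm_inducedVelocity_le (h : VorticityBound w M) (x : ℂ) : ‖inducedVelocity w x‖ ≤ 2 * M :=
  (norm_integral_le_integral_norm _).trans (h.integrable_smul_eulerKernel x).2

lemma integrable_mul {ψ : ℂ → ℝ} (h : VorticityBound w M) (hψ : AEStronglyMeasurable ψ volume)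
    (hb : ∀ x, w x ≠ 0 → |ψ x| ≤ B) : Integrable (fun x => w x * ψ x) := by
  refine (h.integrable.abs.mul_const B).mono' (h.integrable.aestronglyMeasurable.mul hψ)
    (.of_forall fun x => ?_)
  rw [norm_mul, Real.norm_eq_abs, Real.norm_eq_abs]
  by_cases hx : w x = 0
  · simp [hx]
  · exact mul_le_mul_of_nonneg_left (hb x hx) (abs_nonneg _)

lemma abs_integral_mul_le {ψ : ℂ → ℝ} (h : VorticityBound w M) (hB : 0 ≤ B)
    (hψ : AEStronglyMeasurable ψ volume) (hb : ∀ x, w x ≠ 0 → |ψ x| ≤ B) :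
    |∫ x, w x * ψ x| ≤ M * B := by
  calc |∫ x, w x * ψ x| ≤ ∫ x, |w x * ψ x| := abs_integral_le_integral_abs
    _ ≤ ∫ x, |w x| * B := by
      refine integral_mono (h.integrable_mul hψ hb).abs (h.integrable.abs.mul_const B) fun x => ?_
      simp only [abs_mul]
      by_cases hx : w x = 0
      · simp [hx]
      · exact mul_le_mul_of_nonneg_left (hb x hx) (abs_nonneg _)
    _ = (∫ x, |w x|) * B := integral_mul_const _ _
    _ ≤ M * B := mul_le_mul_of_nonneg_right h.integral_abs_le hB

variable {L : ℂ → ℂ →L[ℝ] ℝ}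

lemma aestronglyMeasurable_apply_inducedVelocity (h : VorticityBound w M) (hL : Continuous L) :
    AEStronglyMeasurable (fun x => L x (inducedVelocity w x)) volume :=
  isBoundedBilinearMap_apply.continuous.comp_aestronglyMeasurable
    (hL.aestronglyMeasurable.prodMk h.aestronglyMeasurable_inducedVelocity)

lemma abs_apply_inducedVelocity_le (h : VorticityBound w M) (hB : 0 ≤ B) {x : ℂ}
    (hx : ‖L x‖ ≤ B) : |L x (inducedVelocity w x)| ≤ B * (2 * M) :=
  ((L x).le_opNorm _).trans (mul_le_mul hx (h.norm_inducedVelocity_le x) (norm_nonneg _) hB)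

lemma integrable_mul_apply_inducedVelocity (h : VorticityBound w M) (hB : 0 ≤ B)
    (hL : Continuous L) (hb : ∀ x, w x ≠ 0 → ‖L x‖ ≤ B) :
    Integrable (fun x => w x * L x (inducedVelocity w x)) :=
  h.integrable_mul (h.aestronglyMeasurable_apply_inducedVelocity hL)
    fun x hx => h.abs_apply_inducedVelocity_le hB (hb x hx)

lemma abs_integral_mul_apply_inducedVelocity_le (h : VorticityBound w M) (hB : 0 ≤ B)
    (hL : Continuous L) (hb : ∀ x, w x ≠ 0 → ‖L x‖ ≤ B) :
    |∫ x, w x * L x (inducedVelocity w x)| ≤ M * (B * (2 * M)) :=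
  h.abs_integral_mul_le (by have := h.nonneg; positivity)
    (h.aestronglyMeasurable_apply_inducedVelocity hL)
    fun x hx => h.abs_apply_inducedVelocity_le hB (hb x hx)

variable {ψ : ℂ → ℝ}

lemma integrable_mul_test (h : VorticityBound w M) (hψ : Continuous ψ)
    (hψc : HasCompactSupport ψ) : Integrable (fun x => w x * ψ x) := by
  obtain ⟨B, hB⟩ := hψc.exists_bound_of_continuous hψ
  exact h.integrable_mul hψ.aestronglyMeasurable fun x _ => hB x

lemma integrable_transportRate (h : VorticityBound w M) (hψ : ContDiff ℝ 1 ψ)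
    (hψc : HasCompactSupport ψ) :
    Integrable (fun x => w x * fderiv ℝ ψ x (inducedVelocity w x)) := by
  have hd : Continuous (fderiv ℝ ψ) := hψ.continuous_fderiv one_ne_zero
  obtain ⟨B, hB⟩ := (hψc.fderiv ℝ).exists_bound_of_continuous hd
  exact h.integrable_mul_apply_inducedVelocity ((norm_nonneg _).trans (hB 0)) hd fun x _ => hB x

end VorticityBound

/-! ### A du Bois-Reymond lemma -/

/-- The equation `f' = F` on `(0, ∞)` with initial value `c`, in the sense of distributions.
Integrability is part of the notion, because the Bochner integral of a non-integrable function
is `0`. -/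
structure IsWeakPrimitive (f F : ℝ → ℝ) (c : ℝ) : Prop where
  integrableOn : ∀ χ : ℝ → ℝ, ContDiff ℝ (⊤ : ℕ∞) χ → HasCompactSupport χ →
    IntegrableOn (fun t => deriv χ t * f t + χ t * F t) (Ioi 0)
  integral_add_eq_zero : ∀ χ : ℝ → ℝ, ContDiff ℝ (⊤ : ℕ∞) χ → HasCompactSupport χ →
    (∫ t in Ioi 0, (deriv χ t * f t + χ t * F t)) + χ 0 * c = 0

lemma exists_cutoff_eventuallyEq_one {T : ℝ} (hT : 0 < T) :
    ∃ ζ : ℝ → ℝ, ContDiff ℝ (⊤ : ℕ∞) ζ ∧ HasCompactSupport ζ ∧ ∀ t ∈ Icc 0 T, ζ =ᶠ[𝓝 t] 1 := by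
  let ζ : ContDiffBump (0 : ℝ) := ⟨T + 1, T + 2, by linarith, by linarith⟩
  refine ⟨ζ, ζ.contDiff, ζ.hasCompactSupport, fun t ht => ζ.eventuallyEq_one_of_mem_ball ?_⟩
  rw [mem_ball_zero_iff, Real.norm_of_nonneg ht.1]
  exact ht.2.trans_lt (lt_add_one T)

lemma exists_test_primitive {η : ℝ → ℝ} {T : ℝ} (hT : 0 < T) (hη : ContDiff ℝ (⊤ : ℕ∞) η)
    (hηs : tsupport η ⊆ Ioo 0 T) :
    ∃ χ : ℝ → ℝ, ContDiff ℝ (⊤ : ℕ∞) χ ∧ HasCompactSupport χ ∧ (∀ t, T ≤ t → χ t = 0) ∧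
      ∀ t ∈ Icc 0 T, HasDerivAt χ (η t) t := by
  obtain ⟨ζ, hζ, hζc, hζ1⟩ := exists_cutoff_eventuallyEq_one hT
  have hderiv : ∀ t, HasDerivAt (fun t => ∫ s in T..t, η s) (η t) t := fun t =>
    (hη.continuous.integral_hasStrictDerivAt T t).hasDerivAt
  have hsmooth : ContDiff ℝ (⊤ : ℕ∞) fun t => ∫ s in T..t, η s := by
    rw [contDiff_infty_iff_deriv]
    exact ⟨fun t => (hderiv t).differentiableAt, by rwa [funext fun t => (hderiv t).deriv]⟩
  refine ⟨fun t => ζ t * ∫ s in T..t, η s, hζ.mul hsmooth, hζc.mul_right, fun t ht => ?_,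
    fun t ht => ?_⟩
  · refine mul_eq_zero_of_right _ ?_
    refine intervalIntegral.integral_zero_ae (.of_forall fun s hs => ?_)
    rw [uIoc_of_le ht] at hs
    exact image_eq_zero_of_notMem_tsupport fun h => hs.1.not_gt (hηs h).2
  · refine (hderiv t).congr_of_eventuallyEq ?_
    filter_upwards [hζ1 t ht] with s hs
    rw [hs, Pi.one_apply, one_mul]

namespace IsWeakPrimitive

variable {f F : ℝ → ℝ} {c T : ℝ}

lemma integrableOn_derivative (h : IsWeakPrimitive f F c) (hT : 0 < T) :
    IntegrableOn F (Ioc 0 T) := by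
  obtain ⟨ζ, hζ, hζc, hζ1⟩ := exists_cutoff_eventuallyEq_one hT
  refine ((h.integrableOn ζ hζ hζc).mono_set Ioc_subset_Ioi_self).congr_fun (fun t ht => ?_)
    measurableSet_Ioc
  have ht1 := hζ1 t (Ioc_subset_Icc_self ht)
  simp [ht1.deriv_eq, ht1.eq_of_nhds]

lemma intervalIntegrable (h : IsWeakPrimitive f F c) (hT : 0 < T) :
    IntervalIntegrable F volume 0 T := by
  rw [intervalIntegrable_iff_integrableOn_Ioc_of_le hT.le]
  exact h.integrableOn_derivative hT

lemma integrableOn_primitive (h : IsWeakPrimitive f F c) (hT : 0 < T) :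
    IntegrableOn f (Ioc 0 T) := by
  obtain ⟨ζ, hζ, hζc, hζ1⟩ := exists_cutoff_eventuallyEq_one hT
  have hsum := (h.integrableOn (fun t => t * ζ t) (contDiff_id.mul hζ) hζc.mul_left).mono_set
    (s := Ioc 0 T) Ioc_subset_Ioi_self
  have htF : IntegrableOn (fun t => t * F t) (Ioc 0 T) := by
    refine (h.integrableOn_derivative hT).bdd_mul (c := T) (f := fun t => t) (by fun_prop) ?_
    filter_upwards [ae_restrict_mem measurableSet_Ioc] with t ht
    rw [Real.norm_eq_abs, abs_of_pos ht.1]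
    exact ht.2
  refine (hsum.sub htF).congr_fun (fun t ht => ?_) measurableSet_Ioc
  have ht1 := hζ1 t (Ioc_subset_Icc_self ht)
  have hid : (fun t => t * ζ t) =ᶠ[𝓝 t] fun t => t := by
    filter_upwards [ht1] with s hs
    rw [hs, Pi.one_apply, mul_one]
  simp [hid.deriv_eq, ht1.eq_of_nhds]

lemma integral_mul_add_mul_eq {χ η : ℝ → ℝ} (h : IsWeakPrimitive f F c) (hT : 0 < T)
    (hχ : ContDiff ℝ (⊤ : ℕ∞) χ) (hχc : HasCompactSupport χ) (hχ0 : ∀ t, T ≤ t → χ t = 0)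
    (hd : ∀ t ∈ Icc 0 T, HasDerivAt χ (η t) t) :
    ∫ t in (0)..T, (η t * f t + χ t * F t) = -(χ 0 * c) := by
  rw [← eq_neg_of_add_eq_zero_left (h.integral_add_eq_zero χ hχ hχc),
    setIntegral_eq_of_subset_of_forall_sdiff_eq_zero (s := Ioc 0 T) measurableSet_Ioi
      Ioc_subset_Ioi_self fun t ht => ?_, intervalIntegral.integral_of_le hT.le]
  · refine setIntegral_congr_fun measurableSet_Ioc fun t ht => ?_
    simp only [(hd t (Ioc_subset_Icc_self ht)).deriv]
  · have htT : T < t := not_le.1 fun hle => ht.2 ⟨ht.1, hle⟩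
    have hzero : χ =ᶠ[𝓝 t] fun _ => 0 := by
      filter_upwards [isOpen_Ioi.mem_nhds htT] with s hs using hχ0 s (le_of_lt hs)
    simp [hzero.deriv_eq, hχ0 t htT.le]

lemma integral_mul_derivative_eq {χ η : ℝ → ℝ} (h : IsWeakPrimitive f F c) (hT : 0 < T)
    (hχ : ContDiff ℝ (⊤ : ℕ∞) χ) (hχT : χ T = 0) (hd : ∀ t ∈ Icc 0 T, HasDerivAt χ (η t) t) :
    ∫ t in (0)..T, χ t * F t = -∫ t in (0)..T, η t * ∫ s in (0)..t, F s := by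
  have hprim : AbsolutelyContinuousOnInterval (fun t => ∫ s in (0)..t, F s) 0 T :=
    (h.intervalIntegrable hT).absolutelyContinuousOnInterval_intervalIntegral (by simp)
  have hχac : AbsolutelyContinuousOnInterval χ 0 T := by
    have hlip := (hχ.of_le (by simp) : ContDiff ℝ 1 χ).contDiffOn (s := uIcc 0 T)
    obtain ⟨K, hK⟩ := hlip.exists_lipschitzOnWith one_ne_zero (convex_uIcc _ _) isCompact_uIcc
    exact hK.absolutelyContinuousOnInterval
  have hparts := hχac.integral_mul_deriv_eq_deriv_mul hprim
  rw [hχT, intervalIntegral.integral_same, zero_mul, mul_zero, sub_zero, zero_sub] at hparts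
  rw [intervalIntegral.integral_congr_ae
      (g := fun t => χ t * deriv (fun t => ∫ s in (0)..t, F s) t), hparts,
    intervalIntegral.integral_congr fun t ht => ?_]
  · rw [uIcc_of_le hT.le] at ht
    simp only [(hd t ht).deriv]
  · filter_upwards [(h.intervalIntegrable hT).ae_hasDerivAt_integral] with t ht htm
    rw [(ht (uIoc_subset_uIcc htm) 0 (by simp)).deriv]

theorem ae_eq_add_integral (h : IsWeakPrimitive f F c) (hT : 0 < T) :
    ∀ᵐ t, t ∈ Ioo 0 T → f t = c + ∫ s in (0)..t, F s := by
  have hf : IntervalIntegrable f volume 0 T :=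
    (intervalIntegrable_iff_integrableOn_Ioc_of_le hT.le).2 (h.integrableOn_primitive hT)
  have hF := h.intervalIntegrable hT
  have hΦ : ContinuousOn (fun t => ∫ s in (0)..t, F s) (uIcc 0 T) :=
    (hF.absolutelyContinuousOnInterval_intervalIntegral (by simp)).continuousOn
  have hΦi : IntervalIntegrable (fun t => ∫ s in (0)..t, F s) volume 0 T := hΦ.intervalIntegrable
  have hloc : LocallyIntegrableOn (fun t => f t - c - ∫ s in (0)..t, F s) (Ioo 0 T) :=
    (((intervalIntegrable_iff_integrableOn_Ioo_of_le hT.le).1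
      ((hf.sub intervalIntegrable_const).sub hΦi))).locallyIntegrableOn
  suffices ∀ᵐ t, t ∈ Ioo 0 T → f t - c - ∫ s in (0)..t, F s = 0 by
    filter_upwards [this] with t ht htm
    linarith [ht htm]
  refine isOpen_Ioo.ae_eq_zero_of_integral_contDiff_smul_eq_zero hloc fun η hη _ hηs => ?_
  obtain ⟨χ, hχ, hχc, hχ0, hd⟩ := exists_test_primitive hT hη hηs
  have hηc : ContinuousOn η (uIcc 0 T) := hη.continuous.continuousOn
  have hηf : IntervalIntegrable (fun t => η t * f t) volume 0 T := hf.continuousOn_mul hηc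
  have hηΦ := hΦi.continuousOn_mul hηc
  have hηi : IntervalIntegrable η volume 0 T := hηc.intervalIntegrable
  have hweak := h.integral_mul_add_mul_eq hT hχ hχc hχ0 hd
  rw [intervalIntegral.integral_add hηf (hF.continuousOn_mul hχ.continuous.continuousOn),
    h.integral_mul_derivative_eq hT hχ (hχ0 T le_rfl) hd] at hweak
  have hη0 : ∫ t in (0)..T, η t = χ T - χ 0 :=
    intervalIntegral.integral_eq_sub_of_hasDerivAt
      (fun t ht => hd t (by rwa [uIcc_of_le hT.le] at ht)) hηi
  calc ∫ t, η t • (f t - c - ∫ s in (0)..t, F s)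
      = ∫ t in (0)..T, (η t * f t - η t * c - η t * ∫ s in (0)..t, F s) := by
        rw [intervalIntegral.integral_of_le hT.le,
          setIntegral_eq_integral_of_forall_compl_eq_zero fun t ht => ?_]
        · simp only [smul_eq_mul, mul_sub]
        · have hηt : η t = 0 :=
            image_eq_zero_of_notMem_tsupport fun hmem => ht (Ioo_subset_Ioc_self (hηs hmem))
          simp [hηt]
    _ = 0 := by
      rw [intervalIntegral.integral_sub (hηf.sub (hηi.mul_const c)) hηΦ,
        intervalIntegral.integral_sub hηf (hηi.mul_const c), intervalIntegral.integral_mul_const,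
        hη0, hχ0 T le_rfl]
      linarith

end IsWeakPrimitive

/-! ### Weak solutions tested at a fixed time -/

section WeakSolution

variable {ω₀ : ℂ → ℝ} {ω : ℂ → ℝ → ℝ} {M ρ T : ℝ} {ψ : ℂ → ℝ} {χ : ℝ → ℝ}

/-- The time integrand of the weak formulation for the test function `ψ(x) χ(t)`. -/
noncomputable def weakIntegrand (ω : ℂ → ℝ → ℝ) (ψ : ℂ → ℝ) (χ : ℝ → ℝ) (t : ℝ) : ℝ :=
  deriv χ t * (∫ x, ω x t * ψ x) + χ t * transportRate (fun x => ω x t) ψ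

lemma hasCompactSupport_tensor (hψ : HasCompactSupport ψ) (hχ : HasCompactSupport χ) :
    HasCompactSupport fun p : ℂ × ℝ => ψ p.1 * χ p.2 := by
  refine HasCompactSupport.intro (hψ.isCompact.prod hχ.isCompact) ?_
  rintro ⟨x, t⟩ hx
  simp only [mem_prod, not_and_or] at hx
  rcases hx with hx | hx <;> simp [image_eq_zero_of_notMem_tsupport hx]

lemma integral_mul_tensor_eq_weakIntegrand (hB : ∀ t, VorticityBound (fun x => ω x t) M)
    (hψ : ContDiff ℝ (⊤ : ℕ∞) ψ) (hψc : HasCompactSupport ψ) (hχ : ContDiff ℝ (⊤ : ℕ∞) χ) (t : ℝ) :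
    ∫ x, ω x t * (deriv (fun s => ψ x * χ s) t +
      fderiv ℝ (fun y => ψ y * χ t) x (velocity 1 (1 / (2 * Real.pi)) ω x t)) =
        weakIntegrand ω ψ χ t := by
  have hspace : ∀ x, fderiv ℝ (fun y => ψ y * χ t) x (velocity 1 (1 / (2 * Real.pi)) ω x t) =
      χ t * fderiv ℝ ψ x (inducedVelocity (fun x => ω x t) x) := fun x => by
    rw [fderiv_mul_const (hψ.differentiable (by simp) x)]
    rfl
  have htime : ∀ x, deriv (fun s => ψ x * χ s) t = ψ x * deriv χ t := fun x =>
    deriv_const_mul _ (hχ.differentiable (by simp) t)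
  have hψi := (hB t).integrable_mul_test hψ.continuous hψc
  have hψt := (hB t).integrable_transportRate (hψ.of_le (by simp)) hψc
  simp only [hspace, htime, weakIntegrand, transportRate]
  rw [← integral_const_mul, ← integral_const_mul,
    ← integral_add (hψi.const_mul _) (hψt.const_mul _)]
  congr 1
  ext x
  ring

lemma integral_weakIntegrand_add_eq_zero (hB : ∀ t, VorticityBound (fun x => ω x t) M)
    (hω : IsWeakSolution 1 (1 / (2 * Real.pi)) ω₀ ω) (hψ : ContDiff ℝ (⊤ : ℕ∞) ψ)
    (hψc : HasCompactSupport ψ) (hχ : ContDiff ℝ (⊤ : ℕ∞) χ) (hχc : HasCompactSupport χ) :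
    (∫ t in Ioi 0, weakIntegrand ω ψ χ t) + χ 0 * ∫ x, ω₀ x * ψ x = 0 := by
  have hweak := hω.2.2 (fun x t => ψ x * χ t) (by fun_prop) (hasCompactSupport_tensor hψc hχc)
  simp only [integral_mul_tensor_eq_weakIntegrand hB hψ hψc hχ] at hweak
  have hinit : ∫ x, ω₀ x * (ψ x * χ 0) = χ 0 * ∫ x, ω₀ x * ψ x := by
    rw [← integral_const_mul]
    congr 1
    ext x
    ring
  rwa [hinit] at hweak

lemma weakIntegrand_add_left {ψ' : ℂ → ℝ} (hB : ∀ t, VorticityBound (fun x => ω x t) M)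
    (hψ : ContDiff ℝ (⊤ : ℕ∞) ψ) (hψc : HasCompactSupport ψ) (hψ' : ContDiff ℝ (⊤ : ℕ∞) ψ')
    (hψc' : HasCompactSupport ψ') (t : ℝ) :
    weakIntegrand ω (fun x => ψ x + ψ' x) χ t = weakIntegrand ω ψ χ t + weakIntegrand ω ψ' χ t := by
  have hmean : ∫ x, ω x t * (ψ x + ψ' x) = (∫ x, ω x t * ψ x) + ∫ x, ω x t * ψ' x := by
    simp only [mul_add]
    exact integral_add ((hB t).integrable_mul_test hψ.continuous hψc)
      ((hB t).integrable_mul_test hψ'.continuous hψc')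
  have hrate : transportRate (fun x => ω x t) (fun x => ψ x + ψ' x) =
      transportRate (fun x => ω x t) ψ + transportRate (fun x => ω x t) ψ' := by
    unfold transportRate
    rw [← integral_add ((hB t).integrable_transportRate (hψ.of_le (by simp)) hψc)
      ((hB t).integrable_transportRate (hψ'.of_le (by simp)) hψc')]
    congr 1
    ext x
    rw [fderiv_fun_add (hψ.differentiable (by simp) x) (hψ'.differentiable (by simp) x),
      _root_.add_apply, mul_add]
  simp only [weakIntegrand, hmean, hrate]
  ring

lemma weakIntegrand_add_right {χ' : ℝ → ℝ} (hχ : ContDiff ℝ (⊤ : ℕ∞) χ)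
    (hχ' : ContDiff ℝ (⊤ : ℕ∞) χ') (t : ℝ) :
    weakIntegrand ω ψ (fun s => χ s + χ' s) t = weakIntegrand ω ψ χ t + weakIntegrand ω ψ χ' t := by
  simp only [weakIntegrand,
    deriv_fun_add (hχ.differentiable (by simp) t) (hχ'.differentiable (by simp) t)]
  ring

-- A non-integrable time integrand has integral `0`, which contradicts the weak formulation as soon
-- as the initial term does not vanish; the other test functions are differences of such ones.
lemma integrableOn_weakIntegrand_of_ne_zero (hB : ∀ t, VorticityBound (fun x => ω x t) M)
    (hω : IsWeakSolution 1 (1 / (2 * Real.pi)) ω₀ ω) (hψ : ContDiff ℝ (⊤ : ℕ∞) ψ)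
    (hψc : HasCompactSupport ψ) (hψ0 : ∫ x, ω₀ x * ψ x ≠ 0) (hχ : ContDiff ℝ (⊤ : ℕ∞) χ)
    (hχc : HasCompactSupport χ) : IntegrableOn (weakIntegrand ω ψ χ) (Ioi 0) := by
  have hbase : ∀ {χ : ℝ → ℝ}, ContDiff ℝ (⊤ : ℕ∞) χ → HasCompactSupport χ → χ 0 ≠ 0 →
      IntegrableOn (weakIntegrand ω ψ χ) (Ioi 0) := by
    intro χ hχ hχc hχ0
    by_contra hcon
    have hweak := integral_weakIntegrand_add_eq_zero hB hω hψ hψc hχ hχc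
    rw [integral_undef hcon, zero_add] at hweak
    exact mul_ne_zero hχ0 hψ0 hweak
  by_cases hχ0 : χ 0 = 0
  · obtain ⟨ζ, hζ, hζc, hζ1⟩ := exists_cutoff_eventuallyEq_one one_pos
    have hζ0 : ζ 0 = 1 := (hζ1 0 ⟨le_rfl, zero_le_one⟩).eq_of_nhds
    refine ((hbase (hχ.add hζ) (hχc.add hζc) (by simp [hχ0, hζ0])).sub
      (hbase hζ hζc (by simp [hζ0]))).congr_fun (fun t _ => ?_) measurableSet_Ioi
    rw [Pi.sub_apply, weakIntegrand_add_right hχ hζ, add_sub_cancel_right]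
  · exact hbase hχ hχc hχ0

lemma integrableOn_weakIntegrand {ψ₀ : ℂ → ℝ} (hB : ∀ t, VorticityBound (fun x => ω x t) M)
    (h0 : VorticityBound ω₀ M) (hω : IsWeakSolution 1 (1 / (2 * Real.pi)) ω₀ ω)
    (hψ₀ : ContDiff ℝ (⊤ : ℕ∞) ψ₀) (hψ₀c : HasCompactSupport ψ₀) (hne : ∫ x, ω₀ x * ψ₀ x ≠ 0)
    (hψ : ContDiff ℝ (⊤ : ℕ∞) ψ) (hψc : HasCompactSupport ψ) (hχ : ContDiff ℝ (⊤ : ℕ∞) χ)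
    (hχc : HasCompactSupport χ) : IntegrableOn (weakIntegrand ω ψ χ) (Ioi 0) := by
  by_cases hψ0 : ∫ x, ω₀ x * ψ x = 0
  · have hsum : ∫ x, ω₀ x * (ψ x + ψ₀ x) ≠ 0 := by
      simp only [mul_add]
      rwa [integral_add (h0.integrable_mul_test hψ.continuous hψc)
        (h0.integrable_mul_test hψ₀.continuous hψ₀c), hψ0, zero_add]
    refine ((integrableOn_weakIntegrand_of_ne_zero hB hω (hψ.add hψ₀) (hψc.add hψ₀c) hsum hχ
      hχc).sub (integrableOn_weakIntegrand_of_ne_zero hB hω hψ₀ hψ₀c hne hχ hχc)).congr_fun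
      (fun t _ => ?_) measurableSet_Ioi
    rw [Pi.sub_apply, weakIntegrand_add_left hB hψ hψc hψ₀ hψ₀c, add_sub_cancel_right]
  · exact integrableOn_weakIntegrand_of_ne_zero hB hω hψ hψc hψ0 hχ hχc

lemma exists_test_eventuallyEq_one (ρ : ℝ) :
    ∃ ζ : ℂ → ℝ, ContDiff ℝ (⊤ : ℕ∞) ζ ∧ HasCompactSupport ζ ∧
      ∀ x ∈ closedBall 0 ρ, ζ =ᶠ[𝓝 x] 1 := by
  let ζ : ContDiffBump (0 : ℂ) := ⟨|ρ| + 1, |ρ| + 2, by positivity, by linarith⟩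
  refine ⟨ζ, ζ.contDiff, ζ.hasCompactSupport, fun x hx => ζ.eventuallyEq_one_of_mem_ball ?_⟩
  rw [mem_closedBall_zero_iff] at hx
  exact mem_ball_zero_iff.2 (by linarith [le_abs_self ρ])

lemma integral_mul_congr_of_eventuallyEq {w ψ' : ℂ → ℝ}
    (h : ∀ x, w x ≠ 0 → ψ =ᶠ[𝓝 x] ψ') : ∫ x, w x * ψ x = ∫ x, w x * ψ' x := by
  congr 1
  ext x
  by_cases hx : w x = 0
  · simp [hx]
  · rw [(h x hx).eq_of_nhds]

lemma transportRate_congr_of_eventuallyEq {w ψ' : ℂ → ℝ}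
    (h : ∀ x, w x ≠ 0 → ψ =ᶠ[𝓝 x] ψ') : transportRate w ψ = transportRate w ψ' := by
  unfold transportRate
  congr 1
  ext x
  by_cases hx : w x = 0
  · simp [hx]
  · rw [(h x hx).fderiv_eq]

lemma isWeakPrimitive_integral_mul (hB : ∀ t, VorticityBound (fun x => ω x t) M)
    (h0 : VorticityBound ω₀ M) (hω : IsWeakSolution 1 (1 / (2 * Real.pi)) ω₀ ω)
    (hs0 : ∀ x, ω₀ x ≠ 0 → x ∈ closedBall 0 ρ) (hne : ∫ x, ω₀ x ≠ 0)
    (hψ : ContDiff ℝ (⊤ : ℕ∞) ψ) (hψc : HasCompactSupport ψ) :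
    IsWeakPrimitive (fun t => ∫ x, ω x t * ψ x) (fun t => transportRate (fun x => ω x t) ψ)
      (∫ x, ω₀ x * ψ x) := by
  obtain ⟨ζ, hζ, hζc, hζ1⟩ := exists_test_eventuallyEq_one ρ
  have hζ0 : ∫ x, ω₀ x * ζ x ≠ 0 := by
    rw [integral_mul_congr_of_eventuallyEq fun x hx => hζ1 x (hs0 x hx)]
    simpa using hne
  exact ⟨fun χ hχ hχc => integrableOn_weakIntegrand hB h0 hω hζ hζc hζ0 hψ hψc hχ hχc,
    fun χ hχ hχc => integral_weakIntegrand_add_eq_zero hB hω hψ hψc hχ hχc⟩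

end WeakSolution

/-! ### Good times -/

/-- A vorticity `w` on `[0, T]` supported in the disc of radius `ρ`, together with a set `G` of full
measure of *good times* at which it solves the Euler equation against every smooth function. -/
structure ConfinedFlow (w : ℝ → ℂ → ℝ) (T M ρ : ℝ) (G : Set ℝ) : Prop where
  pos : 0 < T
  bound : ∀ t, VorticityBound (w t) M
  support : ∀ t ∈ Icc 0 T, ∀ x, w t x ≠ 0 → x ∈ closedBall 0 ρ
  zero_mem : 0 ∈ G
  subset : G ⊆ Ico 0 T
  ae_mem : ∀ᵐ t, t ∈ Ioo 0 T → t ∈ G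
  intervalIntegrable : ∀ ψ, ContDiff ℝ (⊤ : ℕ∞) ψ →
    IntervalIntegrable (fun s => transportRate (w s) ψ) volume 0 T
  integral_eq : ∀ ψ, ContDiff ℝ (⊤ : ℕ∞) ψ → ∀ t ∈ G,
    ∫ x, w t x * ψ x = (∫ x, w 0 x * ψ x) + ∫ s in (0)..t, transportRate (w s) ψ

theorem exists_seq_dense_smooth {E : Type*} [NormedAddCommGroup E] [NormedSpace ℝ E]
    [FiniteDimensional ℝ E] {K : Set E} (hK : IsCompact K) :
    ∃ u : ℕ → E → ℝ, (∀ n, ContDiff ℝ (⊤ : ℕ∞) (u n)) ∧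
      ∀ ψ : E → ℝ, ContDiff ℝ (⊤ : ℕ∞) ψ → ∀ η > 0, ∃ n, ∀ x ∈ K,
        |u n x - ψ x| ≤ η ∧ ‖fderiv ℝ (u n) x - fderiv ℝ ψ x‖ ≤ η := by
  have : CompactSpace K := isCompact_iff_compactSpace.1 hK
  have : ProperSpace (E →L[ℝ] ℝ) := FiniteDimensional.proper ℝ _
  let jet : {ψ : E → ℝ // ContDiff ℝ (⊤ : ℕ∞) ψ} → C(K, ℝ) × C(K, E →L[ℝ] ℝ) := fun ψ =>
    (⟨fun x => ψ.1 x, ψ.2.continuous.comp continuous_subtype_val⟩,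
     ⟨fun x => fderiv ℝ ψ.1 x, (ψ.2.continuous_fderiv (by simp)).comp continuous_subtype_val⟩)
  have : Nonempty (range jet) := ⟨⟨jet ⟨0, contDiff_const⟩, mem_range_self _⟩⟩
  obtain ⟨v, hv⟩ := TopologicalSpace.exists_dense_seq (range jet)
  choose u hu using fun n => (v n).2
  refine ⟨fun n => (u n).1, fun n => (u n).2, fun ψ hψ η hη => ?_⟩
  obtain ⟨n, hn⟩ := (denseRange_iff (f := v)).1 hv ⟨jet ⟨ψ, hψ⟩, mem_range_self _⟩ η hη
  rw [Subtype.dist_eq, ← hu n, dist_comm, Prod.dist_eq, max_lt_iff] at hn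
  refine ⟨n, fun x hx => ⟨(((ContinuousMap.dist_lt_iff hη).1 hn.1) ⟨x, hx⟩).le, ?_⟩⟩
  rw [← dist_eq_norm]
  exact (((ContinuousMap.dist_lt_iff hη).1 hn.2) ⟨x, hx⟩).le

namespace VorticityBound

variable {w : ℂ → ℝ} {M : ℝ} {K : Set ℂ} {ψ ψ' : ℂ → ℝ} {η : ℝ}

lemma integrable_mul_of_support (h : VorticityBound w M) (hK : IsCompact K)
    (hs : ∀ x, w x ≠ 0 → x ∈ K) (hψ : Continuous ψ) : Integrable (fun x => w x * ψ x) := by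
  obtain ⟨B, hB⟩ := hK.exists_bound_of_continuousOn hψ.continuousOn
  exact h.integrable_mul hψ.aestronglyMeasurable fun x hx => hB x (hs x hx)

lemma integrable_transportRate_of_support (h : VorticityBound w M) (hK : IsCompact K)
    (hs : ∀ x, w x ≠ 0 → x ∈ K) (hψ : ContDiff ℝ 1 ψ) :
    Integrable (fun x => w x * fderiv ℝ ψ x (inducedVelocity w x)) := by
  have hd : Continuous (fderiv ℝ ψ) := hψ.continuous_fderiv one_ne_zero
  obtain ⟨B, hB⟩ := hK.exists_bound_of_continuousOn hd.continuousOn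
  exact h.integrable_mul_apply_inducedVelocity (abs_nonneg B) hd
    fun x hx => (hB x (hs x hx)).trans (le_abs_self B)

lemma abs_integral_mul_sub_le (h : VorticityBound w M) (hK : IsCompact K)
    (hs : ∀ x, w x ≠ 0 → x ∈ K) (hψ : Continuous ψ) (hψ' : Continuous ψ') (hη : 0 ≤ η)
    (hc : ∀ x ∈ K, |ψ x - ψ' x| ≤ η) :
    |(∫ x, w x * ψ x) - ∫ x, w x * ψ' x| ≤ M * η := by
  rw [← integral_sub (h.integrable_mul_of_support hK hs hψ)
    (h.integrable_mul_of_support hK hs hψ')]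
  simp only [← mul_sub]
  exact h.abs_integral_mul_le hη (hψ.sub hψ').aestronglyMeasurable fun x hx => hc x (hs x hx)

lemma abs_transportRate_sub_le (h : VorticityBound w M) (hK : IsCompact K)
    (hs : ∀ x, w x ≠ 0 → x ∈ K) (hψ : ContDiff ℝ 1 ψ) (hψ' : ContDiff ℝ 1 ψ') (hη : 0 ≤ η)
    (hc : ∀ x ∈ K, ‖fderiv ℝ ψ x - fderiv ℝ ψ' x‖ ≤ η) :
    |transportRate w ψ - transportRate w ψ'| ≤ M * (η * (2 * M)) := by
  unfold transportRate
  rw [← integral_sub (h.integrable_transportRate_of_support hK hs hψ)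
    (h.integrable_transportRate_of_support hK hs hψ')]
  simp only [← mul_sub, ← _root_.sub_apply]
  exact h.abs_integral_mul_apply_inducedVelocity_le hη
    ((hψ.continuous_fderiv one_ne_zero).sub (hψ'.continuous_fderiv one_ne_zero))
    fun x hx => hc x (hs x hx)

end VorticityBound

section GoodTimes

variable {ω₀ : ℂ → ℝ} {ω : ℂ → ℝ → ℝ} {w : ℝ → ℂ → ℝ} {M ρ T : ℝ} {ψ : ℂ → ℝ}

lemma intervalIntegrable_and_ae_integral_eq_of_isWeakSolution (hT : 0 < T)
    (hB : ∀ t, VorticityBound (fun x => ω x t) M) (h0 : VorticityBound ω₀ M)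
    (hs : ∀ t ∈ Icc 0 T, ∀ x, ω x t ≠ 0 → x ∈ closedBall 0 ρ)
    (hs0 : ∀ x, ω₀ x ≠ 0 → x ∈ closedBall 0 ρ) (hne : ∫ x, ω₀ x ≠ 0)
    (hω : IsWeakSolution 1 (1 / (2 * Real.pi)) ω₀ ω) (hψ : ContDiff ℝ (⊤ : ℕ∞) ψ) :
    IntervalIntegrable (fun s => transportRate (fun x => ω x s) ψ) volume 0 T ∧
      ∀ᵐ t, t ∈ Ioo 0 T → ∫ x, ω x t * ψ x =
        (∫ x, ω₀ x * ψ x) + ∫ s in (0)..t, transportRate (fun x => ω x s) ψ := by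
  obtain ⟨ζ, hζ, hζc, hζ1⟩ := exists_test_eventuallyEq_one ρ
  have hloc : ∀ x ∈ closedBall 0 ρ, (fun x => ζ x * ψ x) =ᶠ[𝓝 x] ψ := fun x hx => by
    filter_upwards [hζ1 x hx] with y hy
    rw [hy, Pi.one_apply, one_mul]
  have hprim := isWeakPrimitive_integral_mul hB h0 hω hs0 hne (hζ.mul hψ) hζc.mul_right
  have hrate : ∀ t ∈ Icc 0 T, transportRate (fun x => ω x t) (fun x => ζ x * ψ x) =
      transportRate (fun x => ω x t) ψ := fun t ht =>
    transportRate_congr_of_eventuallyEq fun x hx => hloc x (hs t ht x hx)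
  refine ⟨(hprim.intervalIntegrable hT).congr fun t ht => hrate t ?_, ?_⟩
  · rw [uIoc_of_le hT.le] at ht
    exact Ioc_subset_Icc_self ht
  · filter_upwards [hprim.ae_eq_add_integral hT] with t ht htm
    rw [← integral_mul_congr_of_eventuallyEq fun x hx =>
        hloc x (hs t (Ioo_subset_Icc_self htm) x hx), ht htm,
      integral_mul_congr_of_eventuallyEq fun x hx => hloc x (hs0 x hx),
      intervalIntegral.integral_congr fun s hs => hrate s ?_]
    rw [uIcc_of_le htm.1.le] at hs
    exact ⟨hs.1, hs.2.trans htm.2.le⟩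

lemma integral_eq_of_forall_dense {K : Set ℂ} (hK : IsCompact K)
    (hB : ∀ t, VorticityBound (w t) M) (hs : ∀ t ∈ Icc 0 T, ∀ x, w t x ≠ 0 → x ∈ K)
    (hi : ∀ ψ, ContDiff ℝ (⊤ : ℕ∞) ψ →
      IntervalIntegrable (fun s => transportRate (w s) ψ) volume 0 T)
    {u : ℕ → ℂ → ℝ} (hu : ∀ n, ContDiff ℝ (⊤ : ℕ∞) (u n)) {t : ℝ} (ht : t ∈ Ioo 0 T)
    (hut : ∀ n, ∫ x, w t x * u n x =
      (∫ x, w 0 x * u n x) + ∫ s in (0)..t, transportRate (w s) (u n))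
    (hψ : ContDiff ℝ (⊤ : ℕ∞) ψ)
    (hd : ∀ η > 0, ∃ n, ∀ x ∈ K,
      |u n x - ψ x| ≤ η ∧ ‖fderiv ℝ (u n) x - fderiv ℝ ψ x‖ ≤ η) :
    ∫ x, w t x * ψ x = (∫ x, w 0 x * ψ x) + ∫ s in (0)..t, transportRate (w s) ψ := by
  have hM := (hB 0).nonneg
  have ht0 := ht.1
  rw [← sub_eq_zero, ← abs_nonpos_iff]
  refine le_of_forall_pos_le_add fun ε hε => ?_
  obtain ⟨n, hn⟩ := hd (ε / (2 * M + M * (2 * M) * t + 1)) (by positivity)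
  set η : ℝ := ε / (2 * M + M * (2 * M) * t + 1) with hη
  have hη0 : 0 ≤ η := by positivity
  have hsub : uIcc 0 t ⊆ uIcc 0 T := by
    rw [uIcc_of_le ht.1.le, uIcc_of_le (ht.1.trans ht.2).le]
    exact Icc_subset_Icc_right ht.2.le
  have hmean : ∀ s ∈ Icc 0 T, |(∫ x, w s x * u n x) - ∫ x, w s x * ψ x| ≤ M * η := fun s hsT =>
    (hB s).abs_integral_mul_sub_le hK (hs s hsT) (hu n).continuous hψ.continuous hη0
      fun x hx => (hn x hx).1
  have hrate : |(∫ s in (0)..t, transportRate (w s) (u n)) - ∫ s in (0)..t, transportRate (w s) ψ|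
      ≤ M * (η * (2 * M)) * t := by
    rw [← intervalIntegral.integral_sub ((hi _ (hu n)).mono_set hsub) ((hi ψ hψ).mono_set hsub)]
    refine (intervalIntegral.norm_integral_le_of_norm_le_const (C := M * (η * (2 * M)))
      (f := fun s => transportRate (w s) (u n) - transportRate (w s) ψ) (a := 0) (b := t)
      fun s hst => ?_).trans_eq (by rw [sub_zero, abs_of_pos ht.1])
    rw [uIoc_of_le ht.1.le] at hst
    exact (hB s).abs_transportRate_sub_le hK (hs s ⟨hst.1.le, hst.2.trans ht.2.le⟩)
      ((hu n).of_le (by simp)) (hψ.of_le (by simp)) hη0 fun x hx => (hn x hx).2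
  have hmean_t := abs_le.1 (hmean t (Ioo_subset_Icc_self ht))
  have hmean_0 := abs_le.1 (hmean 0 ⟨le_rfl, (ht.1.trans ht.2).le⟩)
  have hηε : η * (2 * M + M * (2 * M) * t + 1) = ε := by
    rw [hη]
    field_simp
  have hut := hut n
  rw [abs_le] at hrate
  rw [abs_le]
  constructor <;> linarith

-- Redefining the solution at time `0` as the datum makes `0` a good time.
theorem exists_confinedFlow (hT : 0 < T)
    (hB : ∀ t, VorticityBound (fun x => ω x t) M) (h0 : VorticityBound ω₀ M)
    (hs : ∀ t ∈ Icc 0 T, ∀ x, ω x t ≠ 0 → x ∈ closedBall 0 ρ)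
    (hs0 : ∀ x, ω₀ x ≠ 0 → x ∈ closedBall 0 ρ) (hne : ∫ x, ω₀ x ≠ 0)
    (hω : IsWeakSolution 1 (1 / (2 * Real.pi)) ω₀ ω) :
    ∃ G, ConfinedFlow (Function.update (fun t x => ω x t) 0 ω₀) T M ρ G := by
  set w : ℝ → ℂ → ℝ := Function.update (fun t x => ω x t) 0 ω₀
  have hw0 : w 0 = ω₀ := Function.update_self ..
  have hwt : ∀ t, t ≠ 0 → w t = fun x => ω x t := fun t ht => Function.update_of_ne ht ..
  have hwB : ∀ t, VorticityBound (w t) M := fun t => by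
    rcases eq_or_ne t 0 with rfl | ht
    exacts [hw0 ▸ h0, hwt t ht ▸ hB t]
  have hws : ∀ t ∈ Icc 0 T, ∀ x, w t x ≠ 0 → x ∈ closedBall 0 ρ := fun t htT => by
    rcases eq_or_ne t 0 with rfl | ht
    exacts [hw0 ▸ hs0, hwt t ht ▸ hs t htT]
  have hrate : ∀ (ψ : ℂ → ℝ) (t : ℝ), 0 ≤ t →
      ∫ s in (0)..t, transportRate (fun x => ω x s) ψ = ∫ s in (0)..t, transportRate (w s) ψ :=
    fun ψ t ht => intervalIntegral.integral_congr_uIoo fun s hs => by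
      rw [uIoo_of_le ht] at hs
      simp only [hwt s hs.1.ne']
  have hweak := fun (ψ : ℂ → ℝ) (hψ : ContDiff ℝ (⊤ : ℕ∞) ψ) =>
    intervalIntegrable_and_ae_integral_eq_of_isWeakSolution hT hB h0 hs hs0 hne hω hψ
  have hi : ∀ ψ, ContDiff ℝ (⊤ : ℕ∞) ψ →
      IntervalIntegrable (fun s => transportRate (w s) ψ) volume 0 T := fun ψ hψ =>
    (hweak ψ hψ).1.congr fun s hs => by
      rw [uIoc_of_le hT.le] at hs
      simp only [hwt s hs.1.ne']
  obtain ⟨u, hu, hud⟩ := exists_seq_dense_smooth (isCompact_closedBall (0 : ℂ) ρ)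
  refine ⟨insert 0 {t | t ∈ Ioo 0 T ∧ ∀ n, ∫ x, w t x * u n x =
    (∫ x, w 0 x * u n x) + ∫ s in (0)..t, transportRate (w s) (u n)}, hT, hwB, hws,
    mem_insert _ _, ?_, ?_, hi, ?_⟩
  · rintro t (rfl | ht)
    exacts [⟨le_rfl, hT⟩, Ioo_subset_Ico_self ht.1]
  · filter_upwards [ae_all_iff.2 fun n => (hweak _ (hu n)).2] with t ht htm
    refine Or.inr ⟨htm, fun n => ?_⟩
    rw [hw0, hwt t htm.1.ne', ht n htm, hrate _ _ htm.1.le]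
  · rintro ψ hψ t (rfl | ht)
    · simp
    · exact integral_eq_of_forall_dense (isCompact_closedBall 0 ρ) hwB hws hi hu ht.1 ht.2 hψ
        (hud ψ hψ)

end GoodTimes

/-! ### A regularised velocity -/

section RadialIntegrals

variable {δ : ℝ}

lemma integrableOn_and_integral_mul_kernel_defect (hδ : 0 < δ) :
    IntegrableOn (fun r => r * (δ ^ 2 / (|r| * (r ^ 2 + δ ^ 2)))) (Ioi 0) ∧
      ∫ r in Ioi 0, r * (δ ^ 2 / (|r| * (r ^ 2 + δ ^ 2))) = δ * (Real.pi / 2) := by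
  have heq : EqOn (fun r => r * (δ ^ 2 / (|r| * (r ^ 2 + δ ^ 2))))
      (fun r => (1 + (δ⁻¹ * r) ^ 2)⁻¹) (Ioi 0) := fun r (hr : 0 < r) => by
    simp only [abs_of_pos hr]
    field_simp
    ring
  constructor
  · exact (integrable_inv_one_add_sq.comp_mul_left'
      (inv_ne_zero hδ.ne')).integrableOn.congr_fun heq.symm measurableSet_Ioi
  · rw [setIntegral_congr_fun measurableSet_Ioi heq,
      integral_comp_mul_left_Ioi (fun r : ℝ => (1 + r ^ 2)⁻¹) 0 (inv_pos.2 hδ)]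
    simp

lemma integral_mul_inv_sq_add_sq_le (hδ : 0 < δ) (hδ1 : δ ≤ 1) :
    ∫ r in (0)..1, r * (r ^ 2 + δ ^ 2)⁻¹ ≤ 1 + Real.log (1 / δ) := by
  have hderiv : ∀ r ∈ uIcc (0 : ℝ) 1, HasDerivAt (fun r => Real.log (r ^ 2 + δ ^ 2) / 2)
      (r * (r ^ 2 + δ ^ 2)⁻¹) r := fun r _ => by
    have hsq : HasDerivAt (fun r : ℝ => r ^ 2 + δ ^ 2) (2 * r) r := by
      simpa using (hasDerivAt_pow 2 r).add_const (δ ^ 2)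
    refine ((hsq.log (by positivity)).div_const 2).congr_deriv ?_
    field_simp
  have hcont : Continuous fun r : ℝ => r * (r ^ 2 + δ ^ 2)⁻¹ :=
    continuous_id.mul (Continuous.inv₀ (by fun_prop) fun r => by positivity)
  rw [intervalIntegral.integral_eq_sub_of_hasDerivAt hderiv (hcont.intervalIntegrable 0 1),
    one_pow, zero_pow two_ne_zero, zero_add, Real.log_pow, one_div, Real.log_inv]
  have hlog : Real.log (1 + δ ^ 2) ≤ δ ^ 2 := by
    linarith [Real.log_le_sub_one_of_pos (show 0 < 1 + δ ^ 2 by positivity)]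
  push_cast
  nlinarith

lemma integrableOn_and_integral_mul_indicator_inv_sq_add_sq_le (hδ : 0 < δ) (hδ1 : δ ≤ 1) :
    IntegrableOn (fun r => r * (Iic 1).indicator (fun r => (r ^ 2 + δ ^ 2)⁻¹) r) (Ioi 0) ∧
      ∫ r in Ioi 0, r * (Iic 1).indicator (fun r => (r ^ 2 + δ ^ 2)⁻¹) r ≤
        1 + Real.log (1 / δ) := by
  have hcont : Continuous fun r : ℝ => r * (r ^ 2 + δ ^ 2)⁻¹ :=
    continuous_id.mul (Continuous.inv₀ (by fun_prop) fun r => by positivity)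
  have hset : Ioi (0 : ℝ) ∩ Iic 1 = Ioc 0 1 := Ioi_inter_Iic
  simp_rw [← indicator_mul_right (Iic (1 : ℝ)) fun r : ℝ => r]
  constructor
  · rw [IntegrableOn, integrable_indicator_iff measurableSet_Iic, IntegrableOn,
      Measure.restrict_restrict measurableSet_Iic, inter_comm, hset]
    exact hcont.integrableOn_Icc.mono_set Ioc_subset_Icc_self
  · rw [setIntegral_indicator measurableSet_Iic, hset,
      ← intervalIntegral.integral_of_le zero_le_one]
    exact integral_mul_inv_sq_add_sq_le hδ hδ1

end RadialIntegrals

section SmoothedInversion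

variable {E : Type*} [NormedAddCommGroup E] [InnerProductSpace ℝ E] {δ : ℝ}

/-- The inversion `v ↦ v / |v|²`, smoothed at the scale `δ`. -/
noncomputable def smoothedInversion (δ : ℝ) (v : E) : E := (‖v‖ ^ 2 + δ ^ 2)⁻¹ • v

lemma contDiff_smoothedInversion (hδ : δ ≠ 0) :
    ContDiff ℝ (⊤ : ℕ∞) (smoothedInversion δ : E → E) :=
  (((contDiff_norm_sq ℝ).add contDiff_const).inv fun v => by positivity).smul contDiff_id

lemma norm_smoothedInversion (v : E) : ‖smoothedInversion δ v‖ = ‖v‖ / (‖v‖ ^ 2 + δ ^ 2) := by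
  rw [smoothedInversion, norm_smul, Real.norm_of_nonneg (by positivity), inv_mul_eq_div]

lemma hasFDerivAt_smoothedInversion (hδ : δ ≠ 0) (v : E) :
    HasFDerivAt (smoothedInversion δ)
      ((‖v‖ ^ 2 + δ ^ 2)⁻¹ • ContinuousLinearMap.id ℝ E -
        ((2 * ((‖v‖ ^ 2 + δ ^ 2) ^ 2)⁻¹) • innerSL ℝ v).smulRight v) v := by
  have hq : ‖v‖ ^ 2 + δ ^ 2 ≠ 0 := by positivity
  have hnorm := (hasStrictFDerivAt_norm_sq v).hasFDerivAt.add_const (δ ^ 2)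
  refine (((hasDerivAt_inv hq).comp_hasFDerivAt v hnorm).smul
    (hasFDerivAt_id v)).congr_fderiv ?_
  ext z
  simp only [Function.comp_apply, _root_.add_apply, _root_.smul_apply, _root_.sub_apply,
    ContinuousLinearMap.smulRight_apply, ContinuousLinearMap.id_apply, innerSL_apply_apply, id_eq,
    smul_eq_mul, nsmul_eq_mul, Nat.cast_ofNat]
  module

lemma norm_fderiv_smoothedInversion_le (hδ : δ ≠ 0) (v : E) :
    ‖fderiv ℝ (smoothedInversion δ) v‖ ≤ 3 * (‖v‖ ^ 2 + δ ^ 2)⁻¹ := by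
  have hq : 0 < ‖v‖ ^ 2 + δ ^ 2 := by positivity
  have hfrac : ‖v‖ ^ 2 * (‖v‖ ^ 2 + δ ^ 2)⁻¹ ≤ 1 :=
    mul_inv_le_one_of_le₀ (by linarith [sq_nonneg δ]) hq.le
  rw [(hasFDerivAt_smoothedInversion hδ v).fderiv]
  have hid : ‖(‖v‖ ^ 2 + δ ^ 2)⁻¹ • ContinuousLinearMap.id ℝ E‖ ≤ (‖v‖ ^ 2 + δ ^ 2)⁻¹ := by
    rw [norm_smul, Real.norm_of_nonneg (by positivity)]
    exact mul_le_of_le_one_right (by positivity) ContinuousLinearMap.norm_id_le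
  have hrank : ‖((2 * ((‖v‖ ^ 2 + δ ^ 2) ^ 2)⁻¹) • innerSL ℝ v).smulRight v‖
      ≤ 2 * (‖v‖ ^ 2 + δ ^ 2)⁻¹ := by
    rw [ContinuousLinearMap.norm_smulRight_apply, norm_smul, innerSL_apply_norm,
      Real.norm_of_nonneg (by positivity)]
    calc 2 * ((‖v‖ ^ 2 + δ ^ 2) ^ 2)⁻¹ * ‖v‖ * ‖v‖
        = 2 * (‖v‖ ^ 2 + δ ^ 2)⁻¹ * (‖v‖ ^ 2 * (‖v‖ ^ 2 + δ ^ 2)⁻¹) := by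
          field_simp
      _ ≤ 2 * (‖v‖ ^ 2 + δ ^ 2)⁻¹ := mul_le_of_le_one_right (by positivity) hfrac
  exact (norm_sub_le _ _).trans (by linarith)

end SmoothedInversion

section RegularizedKernel

variable {ζ : ℂ → ℝ} {δ B : ℝ}

/-- The Euler kernel, as a function of `x - y`, smoothed at the scale `δ` and cut off by `ζ`. -/
noncomputable def regularizedKernel (ζ : ℂ → ℝ) (δ : ℝ) (v : ℂ) : ℂ :=
  ζ v • (((1 / (2 * Real.pi) : ℝ) * I : ℂ) * smoothedInversion δ v)

lemma norm_inv_two_pi_mul_I_le_one : ‖((1 / (2 * Real.pi) : ℝ) * I : ℂ)‖ ≤ 1 := by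
  rw [norm_mul, norm_I, mul_one, norm_real, Real.norm_of_nonneg (by positivity),
    div_le_one (by positivity)]
  linarith [Real.pi_gt_three]

lemma contDiff_regularizedKernel (hζ : ContDiff ℝ (⊤ : ℕ∞) ζ) (hδ : δ ≠ 0) :
    ContDiff ℝ (⊤ : ℕ∞) (regularizedKernel ζ δ) :=
  hζ.smul (contDiff_const.mul (contDiff_smoothedInversion hδ))

lemma norm_regularizedKernel_sub_eulerKernel_le {x y : ℂ} (hδ : δ ≠ 0) (hζ : ζ (x - y) = 1) :
    ‖regularizedKernel ζ δ (x - y) - eulerKernel x y‖ ≤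
      δ ^ 2 / (|‖x - y‖| * (‖x - y‖ ^ 2 + δ ^ 2)) := by
  rcases eq_or_ne x y with rfl | hxy
  · simp [regularizedKernel, smoothedInversion, eulerKernel_eq_smul]
  have hr : 0 < ‖x - y‖ := norm_pos_iff.2 (sub_ne_zero.2 hxy)
  have hdiff : regularizedKernel ζ δ (x - y) - eulerKernel x y =
      ((1 / (2 * Real.pi) : ℝ) * I : ℂ) *
        (((‖x - y‖ ^ 2 + δ ^ 2)⁻¹ - (‖x - y‖ ^ 2)⁻¹) • (x - y)) := by
    simp only [regularizedKernel, smoothedInversion, eulerKernel_eq_smul, hζ, real_smul]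
    push_cast
    ring
  rw [hdiff, norm_mul, norm_smul, abs_of_pos hr]
  refine (mul_le_of_le_one_left (by positivity) norm_inv_two_pi_mul_I_le_one).trans_eq ?_
  have hinv : (‖x - y‖ ^ 2 + δ ^ 2)⁻¹ - (‖x - y‖ ^ 2)⁻¹ =
      -(δ ^ 2 / (‖x - y‖ * (‖x - y‖ ^ 2 + δ ^ 2)) / ‖x - y‖) := by
    field_simp
    ring
  rw [hinv, norm_neg, Real.norm_of_nonneg (by positivity), div_mul_cancel₀ _ hr.ne']

lemma norm_fderiv_regularizedKernel_le (hζ : ContDiff ℝ (⊤ : ℕ∞) ζ) (hδ : δ ≠ 0)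
    (hζB : ∀ v, |ζ v| ≤ B) (hdζB : ∀ v, ‖fderiv ℝ ζ v‖ ≤ B)
    (hζ1 : ∀ v ∈ closedBall 0 1, ζ =ᶠ[𝓝 v] 1) (v : ℂ) :
    ‖fderiv ℝ (regularizedKernel ζ δ) v‖ ≤ B * (3 * (‖v‖ ^ 2 + δ ^ 2)⁻¹ + 1) := by
  have hB : 0 ≤ B := (abs_nonneg _).trans (hζB 0)
  have hinv := (contDiff_smoothedInversion (E := ℂ) hδ).differentiable (by simp) v
  have hderiv := ((hζ.differentiable (by simp) v).hasFDerivAt.smul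
    (hinv.hasFDerivAt.const_mul ((1 / (2 * Real.pi) : ℝ) * I : ℂ))).fderiv
  have hmain : ‖ζ v • ((1 / (2 * Real.pi) : ℝ) * I : ℂ) • fderiv ℝ (smoothedInversion δ) v‖ ≤
      B * (3 * (‖v‖ ^ 2 + δ ^ 2)⁻¹) := by
    rw [norm_smul, norm_smul]
    refine mul_le_mul (hζB v) ?_ (by positivity) hB
    exact (mul_le_of_le_one_left (norm_nonneg _) norm_inv_two_pi_mul_I_le_one).trans
      (norm_fderiv_smoothedInversion_le hδ v)
  have hcut : ‖fderiv ℝ ζ v‖ * ‖((1 / (2 * Real.pi) : ℝ) * I : ℂ) * smoothedInversion δ v‖ ≤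
      B * 1 := by
    by_cases hv : v ∈ closedBall (0 : ℂ) 1
    · rw [(hζ1 v hv).fderiv_eq, Pi.one_def, fderiv_fun_const]
      simpa using hB
    have hv : 1 < ‖v‖ := by simpa using hv
    refine mul_le_mul (hdζB v) ?_ (norm_nonneg _) hB
    rw [norm_mul, norm_smoothedInversion]
    refine mul_le_one₀ norm_inv_two_pi_mul_I_le_one (by positivity) ?_
    rw [div_le_one (by positivity)]
    nlinarith [sq_nonneg δ]
  have hsmul : fderiv ℝ (regularizedKernel ζ δ) v = _ := hderiv
  rw [hsmul]
  refine (norm_add_le _ _).trans ?_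
  rw [ContinuousLinearMap.norm_smulRight_apply]
  linarith

end RegularizedKernel

section SmoothBound

variable {E F : Type*} [NormedAddCommGroup E] [NormedSpace ℝ E] [NormedAddCommGroup F]
  [NormedSpace ℝ F]

/-- Quantitative `C²` regularity: `f` is smooth and bounded by `B`, with derivative bounded by `Λ`
and `Γ`-Lipschitz. -/
structure SmoothBound (f : E → F) (B Λ Γ : ℝ) : Prop where
  contDiff : ContDiff ℝ (⊤ : ℕ∞) f
  norm_le : ∀ x, ‖f x‖ ≤ B
  norm_fderiv_le : ∀ x, ‖fderiv ℝ f x‖ ≤ Λ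
  norm_fderiv_sub_le : ∀ x y, ‖fderiv ℝ f x - fderiv ℝ f y‖ ≤ Γ * ‖x - y‖

lemma exists_smoothBound_of_hasCompactSupport [FiniteDimensional ℝ E] {f : E → F} {B : ℝ}
    (hf : ContDiff ℝ (⊤ : ℕ∞) f) (hc : HasCompactSupport f) (hB : ∀ x, ‖f x‖ ≤ B) :
    ∃ Λ Γ, 0 ≤ Γ ∧ SmoothBound f B Λ Γ := by
  obtain ⟨Λ, hΛ⟩ := (hc.fderiv ℝ).exists_bound_of_continuous (hf.continuous_fderiv (by simp))
  obtain ⟨Γ, hΓ⟩ := ContDiff.lipschitzWith_of_hasCompactSupport (hc.fderiv ℝ)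
    (hf.fderiv_right (m := 1) (by norm_cast)) one_ne_zero
  refine ⟨Λ, Γ, Γ.2, hf, hB, hΛ, fun x y => ?_⟩
  rw [← dist_eq_norm, ← dist_eq_norm]
  exact hΓ.dist_le_mul x y

end SmoothBound

section SmoothedVelocity

variable {k : ℂ → ℂ} {w : ℂ → ℝ} {M B L Λ Γ : ℝ}

/-- The velocity which `w` induces through the convolution kernel `k`. -/
noncomputable def smoothedVelocity (k : ℂ → ℂ) (w : ℂ → ℝ) (x : ℂ) : ℂ := ∫ y, w y • k (x - y)

lemma smoothedVelocity_eq_convolution :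
    smoothedVelocity k w = convolution w k (ContinuousLinearMap.lsmul ℝ ℝ) volume := by
  ext x
  simp [smoothedVelocity, convolution]

lemma fderiv_smoothedVelocity (hk : ContDiff ℝ (⊤ : ℕ∞) k) (hkc : HasCompactSupport k)
    (hw : Integrable w) (x : ℂ) :
    fderiv ℝ (smoothedVelocity k w) x = ∫ y, w y • fderiv ℝ k (x - y) := by
  rw [smoothedVelocity_eq_convolution, (hkc.hasFDerivAt_convolution_right
    (ContinuousLinearMap.lsmul ℝ ℝ) hw.locallyIntegrable (hk.of_le (by simp)) x).fderiv]
  rfl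

namespace VorticityBound

lemma integrable_smul_of_norm_le {E : Type*} [NormedAddCommGroup E] [NormedSpace ℝ E] {g : ℂ → E}
    (h : VorticityBound w M) (hg : Continuous g) (hB : ∀ x, ‖g x‖ ≤ B) :
    Integrable fun x => w x • g x :=
  h.integrable.smul_bdd B hg.aestronglyMeasurable (Eventually.of_forall hB)

lemma norm_integral_smul_le {E : Type*} [NormedAddCommGroup E] [NormedSpace ℝ E] {g : ℂ → E}
    (h : VorticityBound w M) (hB : ∀ x, ‖g x‖ ≤ B) : ‖∫ x, w x • g x‖ ≤ M * B := by
  calc ‖∫ x, w x • g x‖ ≤ ∫ x, |w x| * B :=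
        norm_integral_le_of_norm_le (h.integrable.abs.mul_const B) (Eventually.of_forall fun x => by
          rw [norm_smul, Real.norm_eq_abs]
          exact mul_le_mul_of_nonneg_left (hB x) (abs_nonneg _))
    _ = (∫ x, |w x|) * B := integral_mul_const _ _
    _ ≤ M * B := mul_le_mul_of_nonneg_right h.integral_abs_le ((norm_nonneg _).trans (hB 0))

lemma smoothBound_smoothedVelocity (h : VorticityBound w M) (hk : SmoothBound k B Λ Γ)
    (hkc : HasCompactSupport k) (hL : ∀ x, ‖fderiv ℝ (smoothedVelocity k w) x‖ ≤ L) :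
    SmoothBound (smoothedVelocity k w) (M * B) L (M * Γ) where
  contDiff := by
    rw [smoothedVelocity_eq_convolution]
    exact hkc.contDiff_convolution_right _ h.integrable.locallyIntegrable hk.contDiff
  norm_le x := h.norm_integral_smul_le fun y => hk.norm_le (x - y)
  norm_fderiv_le := hL
  norm_fderiv_sub_le x y := by
    have hint : ∀ x, Integrable fun u => w u • fderiv ℝ k (x - u) := fun x =>
      h.integrable_smul_of_norm_le ((hk.contDiff.continuous_fderiv (by simp)).comp
        (continuous_const.sub continuous_id)) fun u => hk.norm_fderiv_le (x - u)
    rw [fderiv_smoothedVelocity hk.contDiff hkc h.integrable,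
      fderiv_smoothedVelocity hk.contDiff hkc h.integrable, ← integral_sub (hint x) (hint y),
      mul_assoc]
    simp_rw [← smul_sub]
    refine h.norm_integral_smul_le fun u => ?_
    simpa using hk.norm_fderiv_sub_le (x - u) (y - u)

lemma norm_fderiv_smoothedVelocity_le {ζ : ℂ → ℝ} {δ : ℝ} (h : VorticityBound w M)
    (hδ : 0 < δ) (hδ1 : δ ≤ 1) (hζ : ContDiff ℝ (⊤ : ℕ∞) ζ) (hζc : HasCompactSupport ζ)
    (hζB : ∀ v, |ζ v| ≤ B) (hdζB : ∀ v, ‖fderiv ℝ ζ v‖ ≤ B)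
    (hζ1 : ∀ v ∈ closedBall 0 1, ζ =ᶠ[𝓝 v] 1) (x : ℂ) :
    ‖fderiv ℝ (smoothedVelocity (regularizedKernel ζ δ) w) x‖ ≤
      M * (6 * Real.pi + 4) * B * (1 + Real.log (1 / δ)) := by
  have hB : 0 ≤ B := (abs_nonneg _).trans (hζB 0)
  have hk := contDiff_regularizedKernel hζ hδ.ne'
  have hlog : 0 ≤ Real.log (1 / δ) := Real.log_nonneg ((one_le_div hδ).2 hδ1)
  obtain ⟨hgi, hg⟩ := integrableOn_and_integral_mul_indicator_inv_sq_add_sq_le hδ hδ1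
  have hnear : ∀ r, (r ^ 2 + δ ^ 2)⁻¹ ≤ (Iic 1).indicator (fun r => (r ^ 2 + δ ^ 2)⁻¹) r + 1 :=
    fun r => by
      by_cases hr : r ∈ Iic (1 : ℝ)
      · rw [indicator_of_mem hr]
        linarith
      · rw [indicator_of_notMem hr, zero_add]
        exact inv_le_one_of_one_le₀ (by nlinarith [not_le.1 (mt mem_Iic.2 hr), sq_nonneg δ])
  have hradial := (h.integrable_smul_of_norm_le_radial_add
    (g := fun r => 3 * B * (Iic 1).indicator (fun r => (r ^ 2 + δ ^ 2)⁻¹) r) (c := 4 * B)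
    (F := fun y => fderiv ℝ (regularizedKernel ζ δ) (x - y))
    (fun r => mul_nonneg (by positivity) (indicator_nonneg (fun r _ => by positivity) r))
    (by simpa only [mul_left_comm _ (3 * B), IntegrableOn] using hgi.const_mul (3 * B))
    (by positivity)
    ((hk.continuous_fderiv (by simp)).comp
      (continuous_const.sub continuous_id)).aestronglyMeasurable x
    fun y _ => (norm_fderiv_regularizedKernel_le hζ hδ.ne' hζB hdζB hζ1 (x - y)).trans (by
      nlinarith [mul_le_mul_of_nonneg_left (hnear ‖x - y‖) hB])).2
  rw [fderiv_smoothedVelocity hk hζc.smul_right h.integrable]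
  refine (norm_integral_le_integral_norm _).trans (hradial.trans ?_)
  simp_rw [mul_left_comm _ (3 * B)]
  rw [integral_const_mul]
  calc _ ≤ M * (2 * Real.pi * (3 * B * (1 + Real.log (1 / δ))) +
        4 * B * (1 + Real.log (1 / δ))) := by
        refine mul_le_mul_of_nonneg_left (add_le_add ?_ ?_) h.nonneg
        · gcongr
        · exact le_mul_of_one_le_right (by positivity) (by linarith)
    _ = _ := by ring

lemma norm_smoothedVelocity_sub_inducedVelocity_le {ζ : ℂ → ℝ} {δ : ℝ} {x : ℂ}
    (h : VorticityBound w M) (hk : SmoothBound (regularizedKernel ζ δ) B Λ Γ) (hδ : 0 < δ)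
    (hζ : ∀ y, w y ≠ 0 → ζ (x - y) = 1) :
    ‖smoothedVelocity (regularizedKernel ζ δ) w x - inducedVelocity w x‖ ≤ M * (10 * δ) := by
  have hcont : Continuous fun y => regularizedKernel ζ δ (x - y) :=
    hk.contDiff.continuous.comp (continuous_const.sub continuous_id)
  obtain ⟨hgi, hg⟩ := integrableOn_and_integral_mul_kernel_defect hδ
  have hradial := (h.integrable_smul_of_norm_le_radial_add (c := 0)
    (F := fun y => regularizedKernel ζ δ (x - y) - eulerKernel x y) (fun r => by positivity) hgi
    le_rfl (hcont.aestronglyMeasurable.sub (measurable_eulerKernel.comp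
      (measurable_const.prodMk measurable_id)).aestronglyMeasurable) x
    fun y hy => (norm_regularizedKernel_sub_eulerKernel_le hδ.ne' (hζ y hy)).trans_eq
      (add_zero _).symm).2
  rw [hg] at hradial
  rw [smoothedVelocity, inducedVelocity, ← integral_sub
    (h.integrable_smul_of_norm_le hcont fun y => hk.norm_le (x - y))
    (h.integrable_smul_eulerKernel x).1]
  simp_rw [← smul_sub]
  refine (norm_integral_le_integral_norm _).trans (hradial.trans ?_)
  have hpi : Real.pi * Real.pi ≤ 10 := by nlinarith [Real.pi_gt_three, Real.pi_lt_d2]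
  exact mul_le_mul_of_nonneg_left (by nlinarith) h.nonneg

end VorticityBound

/-- A smooth convolution kernel `k` whose velocity is `σ`-close, on the disc of radius `ρ`, to the
true velocity of any vorticity bounded by `M` on that disc, and is `L`-Lipschitz. -/
structure ApproximatesEulerKernel (k : ℂ → ℂ) (C L M ρ σ : ℝ) : Prop where
  smoothBound : SmoothBound k C C C
  norm_fderiv_le : ∀ w, VorticityBound w M → ∀ x, ‖fderiv ℝ (smoothedVelocity k w) x‖ ≤ L
  hasCompactSupport : HasCompactSupport k
  norm_sub_le : ∀ w, VorticityBound w M → (∀ x, w x ≠ 0 → x ∈ closedBall 0 ρ) →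
    ∀ x ∈ closedBall 0 ρ, ‖smoothedVelocity k w x - inducedVelocity w x‖ ≤ σ

theorem exists_approximatesEulerKernel (ρ : ℝ) {M : ℝ} (hM : 0 ≤ M) :
    ∃ A, 0 ≤ A ∧ ∀ δ, 0 < δ → δ ≤ 1 → ∃ k C,
      ApproximatesEulerKernel k C (A * (1 + Real.log (1 / δ))) M ρ (M * (10 * δ)) := by
  obtain ⟨ζ, hζ, hζc, hζ1⟩ := exists_test_eventuallyEq_one (max (2 * ρ) 1)
  obtain ⟨B₀, hB₀⟩ := hζc.exists_bound_of_continuous hζ.continuous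
  obtain ⟨B₁, hB₁⟩ := (hζc.fderiv ℝ).exists_bound_of_continuous (hζ.continuous_fderiv (by simp))
  have hB₀' : 0 ≤ max B₀ B₁ := (norm_nonneg _).trans ((hB₀ 0).trans (le_max_left _ _))
  refine ⟨M * (6 * Real.pi + 4) * max B₀ B₁, by positivity, fun δ hδ hδ1 => ?_⟩
  have hk := contDiff_regularizedKernel hζ hδ.ne'
  have hkc : HasCompactSupport (regularizedKernel ζ δ) := hζc.smul_right
  obtain ⟨B, hB⟩ := hkc.exists_bound_of_continuous hk.continuous
  obtain ⟨Λ, Γ, -, hk'⟩ := exists_smoothBound_of_hasCompactSupport hk hkc hB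
  refine ⟨_, max B (max Λ Γ), ⟨hk, fun x => (hB x).trans (le_max_left _ _), fun x =>
    (hk'.norm_fderiv_le x).trans ((le_max_left _ _).trans (le_max_right _ _)), fun x y =>
    (hk'.norm_fderiv_sub_le x y).trans ?_⟩, fun w hw => ?_, hkc, fun w hw hs x hx => ?_⟩
  · gcongr
    exact (le_max_right _ _).trans (le_max_right _ _)
  · exact hw.norm_fderiv_smoothedVelocity_le hδ hδ1 hζ hζc
      (fun v => (hB₀ v).trans (le_max_left _ _)) (fun v => (hB₁ v).trans (le_max_right _ _))
      fun v hv => hζ1 v (closedBall_subset_closedBall (le_max_right _ _) hv)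
  · refine hw.norm_smoothedVelocity_sub_inducedVelocity_le hk' hδ fun y hy =>
      (hζ1 (x - y) (closedBall_subset_closedBall (le_max_left _ _) ?_)).eq_of_nhds
    have hy := hs y hy
    rw [mem_closedBall_zero_iff] at hx hy ⊢
    linarith [norm_sub_le x y]

end SmoothedVelocity

section SmoothBound

variable {E F : Type*} [NormedAddCommGroup E] [NormedSpace ℝ E] [NormedAddCommGroup F]
  [NormedSpace ℝ F] {f : E → F} {V : E → E} {B Λ Γ B' L Γ' h : ℝ}

namespace SmoothBound

lemma nonneg (hf : SmoothBound f B Λ Γ) : 0 ≤ Λ := (norm_nonneg _).trans (hf.norm_fderiv_le 0)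

lemma nonneg_lipschitz [Nontrivial E] (hf : SmoothBound f B Λ Γ) : 0 ≤ Γ := by
  obtain ⟨x, y, hxy⟩ := exists_pair_ne E
  exact nonneg_of_mul_nonneg_left ((norm_nonneg _).trans (hf.norm_fderiv_sub_le x y))
    (norm_pos_iff.2 (sub_ne_zero.2 hxy))

lemma differentiableAt (hf : SmoothBound f B Λ Γ) (x : E) : DifferentiableAt ℝ f x :=
  hf.contDiff.differentiable (by simp) x

lemma contDiff_fderiv (hf : SmoothBound f B Λ Γ) : ContDiff ℝ (⊤ : ℕ∞) (fderiv ℝ f) :=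
  hf.contDiff.fderiv_right (by simp)

lemma norm_add_sub_sub_fderiv_le [Nontrivial E] (hf : SmoothBound f B Λ Γ) (x v : E) :
    ‖f (x + v) - f x - fderiv ℝ f x v‖ ≤ Γ * ‖v‖ ^ 2 := by
  have hball : ∀ y ∈ closedBall x ‖v‖, ‖fderiv ℝ f y - fderiv ℝ f x‖ ≤ Γ * ‖v‖ := fun y hy =>
    (hf.norm_fderiv_sub_le y x).trans
      (mul_le_mul_of_nonneg_left (mem_closedBall_iff_norm.1 hy) hf.nonneg_lipschitz)
  have h := (convex_closedBall x ‖v‖).norm_image_sub_le_of_norm_fderiv_le'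
    (fun y _ => hf.differentiableAt y) hball (mem_closedBall_self (norm_nonneg v))
    (y := x + v) (by simp)
  rwa [add_sub_cancel_left, mul_assoc, ← sq] at h

lemma norm_fderiv_fderiv_le [Nontrivial E] (hf : SmoothBound f B Λ Γ) (x : E) :
    ‖fderiv ℝ (fderiv ℝ f) x‖ ≤ Γ :=
  (hf.contDiff_fderiv.differentiable (by simp) x).hasFDerivAt.le_of_lip' hf.nonneg_lipschitz
    (.of_forall fun y => hf.norm_fderiv_sub_le y x)

lemma norm_fderiv_fderiv_apply_le [Nontrivial E] (hf : SmoothBound f B Λ Γ)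
    (hV : SmoothBound V B' L Γ') (x : E) :
    ‖fderiv ℝ (fun x => fderiv ℝ f x (V x)) x‖ ≤ Γ * B' + Λ * L := by
  rw [((hf.contDiff_fderiv.differentiable (by simp) x).hasFDerivAt.clm_apply
    (hV.differentiableAt x).hasFDerivAt).fderiv, add_comm]
  have hflip : ‖(fderiv ℝ (fderiv ℝ f) x).flip (V x)‖ ≤ Γ * B' := by
    refine ((fderiv ℝ (fderiv ℝ f) x).flip.le_opNorm _).trans ?_
    rw [ContinuousLinearMap.opNorm_flip]
    exact mul_le_mul (hf.norm_fderiv_fderiv_le x) (hV.norm_le x) (norm_nonneg _)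
      hf.nonneg_lipschitz
  exact (norm_add_le _ _).trans (add_le_add hflip ((ContinuousLinearMap.opNorm_comp_le _ _).trans
    (mul_le_mul (hf.norm_fderiv_le x) (hV.norm_fderiv_le x) (norm_nonneg _) hf.nonneg)))

lemma hasFDerivAt_add_smul (hV : SmoothBound V B' L Γ') (h : ℝ) (x : E) :
    HasFDerivAt (fun x => x + h • V x) (ContinuousLinearMap.id ℝ E + h • fderiv ℝ V x) x :=
  (hasFDerivAt_id x).add ((hV.differentiableAt x).hasFDerivAt.const_smul h)

lemma norm_id_add_smul_fderiv_le (hV : SmoothBound V B' L Γ') (hh : 0 ≤ h) (x : E) :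
    ‖ContinuousLinearMap.id ℝ E + h • fderiv ℝ V x‖ ≤ 1 + h * L := by
  refine (norm_add_le _ _).trans (add_le_add ContinuousLinearMap.norm_id_le ?_)
  rw [norm_smul, Real.norm_of_nonneg hh]
  exact mul_le_mul_of_nonneg_left (hV.norm_fderiv_le x) hh

lemma fderiv_comp_add_smul (hf : SmoothBound f B Λ Γ) (hV : SmoothBound V B' L Γ') (h : ℝ)
    (x : E) : fderiv ℝ (fun x => f (x + h • V x)) x =
      (fderiv ℝ f (x + h • V x)).comp (ContinuousLinearMap.id ℝ E + h • fderiv ℝ V x) :=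
  ((hf.differentiableAt _).hasFDerivAt.comp x (hV.hasFDerivAt_add_smul h x)).fderiv

lemma norm_fderiv_comp_add_smul_sub_le [Nontrivial E] (hf : SmoothBound f B Λ Γ)
    (hV : SmoothBound V B' L Γ') (hh : 0 ≤ h) (x y : E) :
    ‖fderiv ℝ (fun x => f (x + h • V x)) x - fderiv ℝ (fun x => f (x + h • V x)) y‖ ≤
      (Γ * (1 + h * L) ^ 2 + Λ * (h * Γ')) * ‖x - y‖ := by
  have hL := hV.nonneg
  have hΓ := hf.nonneg_lipschitz
  have hdisp : ‖(x + h • V x) - (y + h • V y)‖ ≤ (1 + h * L) * ‖x - y‖ :=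
    convex_univ.norm_image_sub_le_of_norm_hasFDerivWithin_le
      (fun z _ => (hV.hasFDerivAt_add_smul h z).hasFDerivWithinAt)
      (fun z _ => hV.norm_id_add_smul_fderiv_le hh z) (mem_univ y) (mem_univ x)
  have houter : ‖fderiv ℝ f (x + h • V x) - fderiv ℝ f (y + h • V y)‖ ≤
      Γ * ((1 + h * L) * ‖x - y‖) :=
    (hf.norm_fderiv_sub_le _ _).trans (mul_le_mul_of_nonneg_left hdisp hΓ)
  have hinner : ‖h • (fderiv ℝ V x - fderiv ℝ V y)‖ ≤ h * (Γ' * ‖x - y‖) := by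
    rw [norm_smul, Real.norm_of_nonneg hh]
    exact mul_le_mul_of_nonneg_left (hV.norm_fderiv_sub_le x y) hh
  have hsplit : fderiv ℝ (fun x => f (x + h • V x)) x - fderiv ℝ (fun x => f (x + h • V x)) y =
      (fderiv ℝ f (x + h • V x) - fderiv ℝ f (y + h • V y)).comp
        (ContinuousLinearMap.id ℝ E + h • fderiv ℝ V x) +
      (fderiv ℝ f (y + h • V y)).comp (h • (fderiv ℝ V x - fderiv ℝ V y)) := by
    rw [fderiv_comp_add_smul hf hV, fderiv_comp_add_smul hf hV]
    ext z
    simp only [_root_.sub_apply, ContinuousLinearMap.comp_apply, _root_.add_apply,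
      ContinuousLinearMap.id_apply, _root_.smul_apply, map_add, map_sub, map_smul, smul_sub]
    abel
  calc _ ≤ Γ * ((1 + h * L) * ‖x - y‖) * (1 + h * L) + Λ * (h * (Γ' * ‖x - y‖)) := by
        rw [hsplit]
        refine (norm_add_le _ _).trans (add_le_add
          ((ContinuousLinearMap.opNorm_comp_le _ _).trans ?_)
          ((ContinuousLinearMap.opNorm_comp_le _ _).trans ?_))
        · exact mul_le_mul houter (hV.norm_id_add_smul_fderiv_le hh x) (norm_nonneg _)
            (by positivity)
        · exact mul_le_mul (hf.norm_fderiv_le _) hinner (norm_nonneg _) hf.nonneg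
    _ = _ := by ring

lemma comp_add_smul [Nontrivial E] (hf : SmoothBound f B Λ Γ) (hV : SmoothBound V B' L Γ')
    (hh : 0 ≤ h) : SmoothBound (fun x => f (x + h • V x)) B (Λ * (1 + h * L))
      (Γ * (1 + h * L) ^ 2 + Λ * (h * Γ')) where
  contDiff := hf.contDiff.comp (contDiff_id.add (contDiff_const.smul hV.contDiff))
  norm_le x := hf.norm_le _
  norm_fderiv_le x := by
    rw [fderiv_comp_add_smul hf hV]
    exact (ContinuousLinearMap.opNorm_comp_le _ _).trans (mul_le_mul (hf.norm_fderiv_le _)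
      (hV.norm_id_add_smul_fderiv_le hh x) (norm_nonneg _) hf.nonneg)
  norm_fderiv_sub_le := hf.norm_fderiv_comp_add_smul_sub_le hV hh

end SmoothBound

end SmoothBound

section TimeSteps

variable {w : ℝ → ℂ → ℝ} {T M ρ : ℝ} {G : Set ℝ} {s t : ℝ} {φ ψ : ℂ → ℝ} {V : ℂ → ℂ}
  {k : ℂ → ℂ} {Λ Γ B' L Γ' η C σ : ℝ}

namespace ConfinedFlow

lemma integral_sub_integral_eq (hF : ConfinedFlow w T M ρ G) (hs : s ∈ G) (ht : t ∈ G)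
    (hψ : ContDiff ℝ (⊤ : ℕ∞) ψ) :
    (∫ x, w t x * ψ x) - ∫ x, w s x * ψ x = ∫ r in s..t, transportRate (w r) ψ := by
  have hint : ∀ t ∈ G, IntervalIntegrable (fun s => transportRate (w s) ψ) volume 0 t :=
    fun t ht => (hF.intervalIntegrable ψ hψ).mono_set <| by
      rw [uIcc_of_le (hF.subset ht).1, uIcc_of_le hF.pos.le]
      exact Icc_subset_Icc_right (hF.subset ht).2.le
  rw [hF.integral_eq ψ hψ t ht, hF.integral_eq ψ hψ s hs,
    ← intervalIntegral.integral_interval_sub_left (hint t ht) (hint s hs)]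
  ring

lemma abs_integral_sub_integral_sub_mul_le (hF : ConfinedFlow w T M ρ G) (hs : s ∈ G) (ht : t ∈ G)
    (hst : s ≤ t) (hψ : ContDiff ℝ (⊤ : ℕ∞) ψ) {c : ℝ}
    (hη : ∀ r ∈ G, s ≤ r → r ≤ t → |transportRate (w r) ψ - c| ≤ η) :
    |(∫ x, w t x * ψ x) - (∫ x, w s x * ψ x) - (t - s) * c| ≤ η * (t - s) := by
  have hint : IntervalIntegrable (fun r => transportRate (w r) ψ) volume s t :=
    (hF.intervalIntegrable ψ hψ).mono_set <| by
      rw [uIcc_of_le hst, uIcc_of_le hF.pos.le]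
      exact Icc_subset_Icc (hF.subset hs).1 (hF.subset ht).2.le
  have hbound := intervalIntegral.norm_integral_le_of_norm_le_const_ae (a := s) (b := t) (C := η)
    (f := fun r => transportRate (w r) ψ - c) <| by
      filter_upwards [hF.ae_mem] with r hr hrst
      rw [uIoc_of_le hst] at hrst
      exact hη r (hr ⟨(hF.subset hs).1.trans_lt hrst.1, hrst.2.trans_lt (hF.subset ht).2⟩)
        hrst.1.le hrst.2
  rwa [intervalIntegral.integral_sub hint (by simp), ← hF.integral_sub_integral_eq hs ht hψ,
    intervalIntegral.integral_const, abs_of_nonneg (sub_nonneg.2 hst)] at hbound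

lemma abs_integral_sub_le (hF : ConfinedFlow w T M ρ G) (hs : s ∈ G) (ht : t ∈ G)
    (hst : s ≤ t) (hψ : ContDiff ℝ (⊤ : ℕ∞) ψ) (hΛ : ∀ x, ‖fderiv ℝ ψ x‖ ≤ Λ) :
    |(∫ x, w t x * ψ x) - ∫ x, w s x * ψ x| ≤ M * (Λ * (2 * M)) * (t - s) := by
  have h := hF.abs_integral_sub_integral_sub_mul_le hs ht hst hψ (c := 0) fun r _ _ _ => by
    rw [sub_zero]
    exact (hF.bound r).abs_integral_mul_apply_inducedVelocity_le
      ((norm_nonneg _).trans (hΛ 0)) (hψ.continuous_fderiv (by simp)) fun x _ => hΛ x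
  simpa using h

lemma abs_clm_smoothedVelocity_sub_le (hF : ConfinedFlow w T M ρ G) (hs : s ∈ G) (ht : t ∈ G)
    (hst : s ≤ t) (hk : SmoothBound k C C C) (f : ℂ →L[ℝ] ℝ) (hf : ‖f‖ ≤ 1) (x : ℂ) :
    |f (smoothedVelocity k (w t) x - smoothedVelocity k (w s) x)| ≤
      M * (C * (2 * M)) * (t - s) := by
  have hpair : ∀ r, f (smoothedVelocity k (w r) x) = ∫ y, w r y * f (k (x - y)) := fun r => by
    have hint := (hF.bound r).integrable_smul_of_norm_le (g := fun y => k (x - y))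
      (hk.contDiff.continuous.comp (continuous_const.sub continuous_id)) fun y => hk.norm_le (x - y)
    rw [smoothedVelocity, ← f.integral_comp_comm hint]
    exact integral_congr_ae (.of_forall fun y => map_smul f (w r y) (k (x - y)))
  rw [map_sub, hpair, hpair]
  refine hF.abs_integral_sub_le hs ht hst
    (f.contDiff.comp (hk.contDiff.comp (contDiff_const.sub contDiff_id))) fun y => ?_
  have hderiv : HasFDerivAt (fun y => f (k (x - y)))
      (f.comp ((fderiv ℝ k (x - y)).comp (-ContinuousLinearMap.id ℝ ℂ))) y :=
    f.hasFDerivAt.comp y ((hk.differentiableAt _).hasFDerivAt.comp y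
      ((hasFDerivAt_id y).const_sub x))
  rw [hderiv.fderiv, ContinuousLinearMap.comp_neg, ContinuousLinearMap.comp_id]
  calc _ ≤ ‖f‖ * ‖-fderiv ℝ k (x - y)‖ := ContinuousLinearMap.opNorm_comp_le _ _
    _ ≤ 1 * C := by
      rw [norm_neg]
      exact mul_le_mul hf (hk.norm_fderiv_le _) (norm_nonneg _) zero_le_one
    _ = C := one_mul C

lemma norm_smoothedVelocity_sub_le (hF : ConfinedFlow w T M ρ G) (hs : s ∈ G) (ht : t ∈ G)
    (hst : s ≤ t) (hk : SmoothBound k C C C) (x : ℂ) :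
    ‖smoothedVelocity k (w t) x - smoothedVelocity k (w s) x‖ ≤ 4 * M ^ 2 * C * (t - s) := by
  have hre := hF.abs_clm_smoothedVelocity_sub_le hs ht hst hk reCLM reCLM_norm.le x
  have him := hF.abs_clm_smoothedVelocity_sub_le hs ht hst hk imCLM imCLM_norm.le x
  rw [reCLM_apply] at hre
  rw [imCLM_apply] at him
  linarith [norm_le_abs_re_add_abs_im
    (smoothedVelocity k (w t) x - smoothedVelocity k (w s) x)]

lemma abs_transportRate_sub_integral_le (hF : ConfinedFlow w T M ρ G) (hs : s ∈ G) (ht : t ∈ G)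
    (hst : s ≤ t) (hφ : SmoothBound φ 1 Λ Γ) (hV : SmoothBound V B' L Γ') (hη0 : 0 ≤ η)
    (hη : ∀ x, w t x ≠ 0 → ‖inducedVelocity (w t) x - V x‖ ≤ η) :
    |transportRate (w t) φ - ∫ x, w s x * fderiv ℝ φ x (V x)| ≤
      M * (Λ * η) + M * ((Γ * B' + Λ * L) * (2 * M)) * (t - s) := by
  have hφV : ContDiff ℝ (⊤ : ℕ∞) fun x => fderiv ℝ φ x (V x) :=
    hφ.contDiff_fderiv.clm_apply hV.contDiff
  have hφc := hφ.contDiff_fderiv.continuous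
  have hfield : |transportRate (w t) φ - ∫ x, w t x * fderiv ℝ φ x (V x)| ≤ M * (Λ * η) := by
    rw [transportRate, ← integral_sub
      ((hF.bound t).integrable_mul_apply_inducedVelocity hφ.nonneg hφc
        fun x _ => hφ.norm_fderiv_le x)
      ((hF.bound t).integrable_mul hφV.continuous.aestronglyMeasurable fun x _ =>
        (fderiv ℝ φ x).le_of_opNorm_le_of_le (hφ.norm_fderiv_le x) (hV.norm_le x))]
    simp_rw [← mul_sub]
    refine (hF.bound t).abs_integral_mul_le (mul_nonneg hφ.nonneg hη0)
      (((hF.bound t).aestronglyMeasurable_apply_inducedVelocity hφc).sub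
        hφV.continuous.aestronglyMeasurable) fun x hx => ?_
    rw [← map_sub]
    exact (fderiv ℝ φ x).le_of_opNorm_le_of_le (hφ.norm_fderiv_le x) (hη x hx)
  exact (abs_sub_le _ _ _).trans (add_le_add hfield
    (hF.abs_integral_sub_le hs ht hst hφV (hφ.norm_fderiv_fderiv_apply_le hV)))

lemma abs_integral_comp_add_smul_sub_le (hF : ConfinedFlow w T M ρ G)
    (hφ : SmoothBound φ 1 Λ Γ) (hV : SmoothBound V B' L Γ') {h : ℝ} (hh : 0 ≤ h) :
    |(∫ x, w s x * φ (x + h • V x)) - (∫ x, w s x * φ x) - h * ∫ x, w s x * fderiv ℝ φ x (V x)| ≤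
      M * (Γ * (h * B') ^ 2) := by
  have hφV : Continuous fun x => fderiv ℝ φ x (V x) :=
    hφ.contDiff_fderiv.continuous.clm_apply hV.contDiff.continuous
  have hcomp := hφ.comp_add_smul hV hh
  have hint := (hF.bound s).integrable_mul hφ.contDiff.continuous.aestronglyMeasurable
    fun x _ => hφ.norm_le x
  have hint' := (hF.bound s).integrable_mul hcomp.contDiff.continuous.aestronglyMeasurable
    fun x _ => hcomp.norm_le x
  have hintV := (hF.bound s).integrable_mul hφV.aestronglyMeasurable fun x _ =>
    (fderiv ℝ φ x).le_of_opNorm_le_of_le (hφ.norm_fderiv_le x) (hV.norm_le x)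
  rw [← integral_const_mul, ← integral_sub hint' hint,
    ← integral_sub (by exact hint'.sub hint) (hintV.const_mul h)]
  simp_rw [mul_left_comm h, ← mul_sub]
  have hΓ := hφ.nonneg_lipschitz
  refine (hF.bound s).abs_integral_mul_le (by positivity) ((hcomp.contDiff.continuous.sub
    hφ.contDiff.continuous).sub (continuous_const.mul hφV)).aestronglyMeasurable fun x _ => ?_
  have htaylor := hφ.norm_add_sub_sub_fderiv_le x (h • V x)
  rw [map_smul, smul_eq_mul, norm_smul, Real.norm_of_nonneg hh] at htaylor
  refine htaylor.trans ?_
  gcongr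
  exact hV.norm_le x

lemma abs_integral_sub_integral_comp_le (hF : ConfinedFlow w T M ρ G) (hs : s ∈ G) (ht : t ∈ G)
    (hst : s ≤ t) (hφ : SmoothBound φ 1 Λ Γ) (hV : SmoothBound V B' L Γ') (hη0 : 0 ≤ η)
    (hη : ∀ r ∈ G, s ≤ r → r ≤ t → ∀ x, w r x ≠ 0 → ‖inducedVelocity (w r) x - V x‖ ≤ η) :
    |(∫ x, w t x * φ x) - ∫ x, w s x * φ (x + (t - s) • V x)| ≤
      (M * (Λ * η) + M * ((Γ * B' + Λ * L) * (2 * M)) * (t - s)) * (t - s) +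
        M * (Γ * ((t - s) * B') ^ 2) := by
  have hM := (hF.bound 0).nonneg
  have hcoef : 0 ≤ M * ((Γ * B' + Λ * L) * (2 * M)) := by
    have := hφ.nonneg_lipschitz
    have := hφ.nonneg
    have := hV.nonneg
    have := (norm_nonneg _).trans (hV.norm_le 0)
    positivity
  have htransport := hF.abs_integral_sub_integral_sub_mul_le hs ht hst hφ.contDiff
    (c := ∫ x, w s x * fderiv ℝ φ x (V x)) fun r hr hsr hrt =>
      (hF.abs_transportRate_sub_integral_le hs hr hsr hφ hV hη0 (hη r hr hsr hrt)).trans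
        (add_le_add_right (mul_le_mul_of_nonneg_left (sub_le_sub_right hrt s) hcoef) _)
  have htaylor := hF.abs_integral_comp_add_smul_sub_le (s := s) hφ hV (sub_nonneg.2 hst)
  rw [abs_le] at htransport htaylor ⊢
  constructor <;> linarith [htransport.1, htransport.2, htaylor.1, htaylor.2]

/-- The constant of the quadratic term in `ConfinedFlow.abs_integral_sub_integral_smoothed_le`. -/
def stepConstant (M C L : ℝ) : ℝ := 4 * M ^ 3 * C + 2 * M ^ 2 * (M * C + L) + M ^ 3 * C ^ 2

lemma abs_integral_sub_integral_smoothed_le (hF : ConfinedFlow w T M ρ G) (hs : s ∈ G) (ht : t ∈ G)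
    (hst : s ≤ t) (hk : ApproximatesEulerKernel k C L M ρ σ) (hσ : 0 ≤ σ)
    (hφ : SmoothBound φ 1 Λ Γ) :
    |(∫ x, w t x * φ x) - ∫ x, w s x * φ (x + (t - s) • smoothedVelocity k (w s) x)| ≤
      (t - s) * (M * σ * Λ) + (t - s) ^ 2 * (stepConstant M C L * (Λ + Γ)) := by
  have hM := (hF.bound 0).nonneg
  have hC := hk.smoothBound.nonneg
  have hV := (hF.bound s).smoothBound_smoothedVelocity hk.smoothBound hk.hasCompactSupport
    (hk.norm_fderiv_le (w s) (hF.bound s))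
  have hclose : ∀ r ∈ G, s ≤ r → r ≤ t → ∀ x, w r x ≠ 0 →
      ‖inducedVelocity (w r) x - smoothedVelocity k (w s) x‖ ≤ σ + 4 * M ^ 2 * C * (t - s) :=
    fun r hr hsr hrt x hx => by
      have hsupp := hF.support r (Ico_subset_Icc_self (hF.subset hr))
      refine (norm_sub_le_norm_sub_add_norm_sub _ (smoothedVelocity k (w r) x) _).trans
        (add_le_add ?_ ((hF.norm_smoothedVelocity_sub_le hs hr hsr hk.smoothBound x).trans ?_))
      · rw [norm_sub_rev]
        exact hk.norm_sub_le (w r) (hF.bound r) hsupp x (hsupp x hx)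
      · gcongr
  have hL := hV.nonneg
  have hΛ := hφ.nonneg
  have hΓ := hφ.nonneg_lipschitz
  refine (hF.abs_integral_sub_integral_comp_le hs ht hst hφ hV (by positivity) hclose).trans ?_
  have hslack : 0 ≤ (t - s) ^ 2 * (4 * M ^ 3 * C * Γ + 2 * M ^ 2 * (M * C) * Λ +
    2 * M ^ 2 * L * Γ + M ^ 3 * C ^ 2 * Λ) := by positivity
  rw [stepConstant]
  linarith

end ConfinedFlow

end TimeSteps

section IntegralAbs

lemma add_mul_exp_mul_le {X X' K c d : ℝ} (hX : 0 ≤ X) (hK : 0 ≤ K) (hc : 0 ≤ c) (hd : 0 ≤ d)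
    (h : X' ≤ (1 + K * d) * X) :
    d * X + c * Real.exp (K * c) * X' ≤ (d + c) * Real.exp (K * (d + c)) * X := by
  have hexp : X' ≤ Real.exp (K * d) * X :=
    h.trans (mul_le_mul_of_nonneg_right (by linarith [Real.add_one_le_exp (K * d)]) hX)
  have hone : 1 ≤ Real.exp (K * (d + c)) := Real.one_le_exp (by positivity)
  calc d * X + c * Real.exp (K * c) * X'
      ≤ d * (Real.exp (K * (d + c)) * X) + c * Real.exp (K * c) * (Real.exp (K * d) * X) := by
        gcongr
        exact le_mul_of_one_le_left hX hone
    _ = (d + c) * Real.exp (K * (d + c)) * X := by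
        rw [mul_add, Real.exp_add]
        ring

lemma le_of_forall_le_add_mul {X Y K : ℝ} (h : ∀ η, 0 < η → η ≤ 1 → X ≤ Y + K * η) : X ≤ Y := by
  have hlim : Tendsto (fun η => Y + K * η) (𝓝[>] 0) (𝓝 Y) := by
    have hcont : Continuous fun η => Y + K * η := by fun_prop
    exact (hcont.tendsto' 0 Y (by simp)).mono_left nhdsWithin_le_nhds
  exact ge_of_tendsto hlim <| by
    filter_upwards [Ioc_mem_nhdsGT one_pos] with η hη using h η hη.1 hη.2

lemma abs_div_sqrt_sq_add_sq_le_one (a η : ℝ) : |a / √(a ^ 2 + η ^ 2)| ≤ 1 := by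
  rw [abs_div, abs_of_nonneg (Real.sqrt_nonneg _)]
  exact div_le_one_of_le₀ (Real.abs_le_sqrt (by nlinarith)) (Real.sqrt_nonneg _)

lemma abs_le_mul_div_sqrt_add {η : ℝ} (hη : 0 < η) (a : ℝ) :
    |a| ≤ a * (a / √(a ^ 2 + η ^ 2)) + η := by
  have hpos : 0 < √(a ^ 2 + η ^ 2) := Real.sqrt_pos.2 (by positivity)
  have hle : √(a ^ 2 + η ^ 2) ≤ |a| + η :=
    Real.sqrt_le_iff.2 ⟨by positivity, by nlinarith [abs_nonneg a, sq_abs a]⟩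
  rw [← mul_div_assoc, ← sub_le_iff_le_add, le_div_iff₀ hpos]
  nlinarith [abs_nonneg a, sq_abs a]

lemma abs_integral_mul_le_integral_abs {X : Type*} [MeasurableSpace X] {μ : Measure X}
    {w φ : X → ℝ} (hw : Integrable w μ) (hφ : ∀ x, |φ x| ≤ 1) :
    |∫ x, w x * φ x ∂μ| ≤ ∫ x, |w x| ∂μ := by
  rw [← Real.norm_eq_abs]
  refine norm_integral_le_of_norm_le hw.abs (.of_forall fun x => ?_)
  rw [norm_mul]
  exact mul_le_of_le_one_right (norm_nonneg _) (hφ x)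

section Duality

variable {E : Type*} [NormedAddCommGroup E] [NormedSpace ℝ E]
  [MeasurableSpace E] [BorelSpace E] {μ : Measure E} [IsFiniteMeasureOnCompacts μ]

lemma exists_contDiff_integral_abs_sub_le [FiniteDimensional ℝ E] {w : E → ℝ}
    (hw : Integrable w μ) {κ : ℝ} (hκ : 0 < κ) :
    ∃ g : E → ℝ, HasCompactSupport g ∧ ContDiff ℝ (⊤ : ℕ∞) g ∧ ∫ x, |w x - g x| ∂μ ≤ κ := by
  obtain ⟨g, hgc, hg, hle⟩ :=
    (memLp_one_iff_integrable.2 hw).exist_eLpNorm_sub_le ENNReal.one_ne_top le_rfl hκ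
  refine ⟨g, hgc, hg, ?_⟩
  have hint := hw.sub (hg.continuous.integrable_of_hasCompactSupport hgc (μ := μ))
  rw [eLpNorm_one_eq_lintegral_enorm, ← ofReal_integral_norm_eq_lintegral_enorm hint,
    ENNReal.ofReal_le_ofReal_iff hκ.le] at hle
  exact hle

lemma exists_test_integral_abs_le_add {g : E → ℝ} (hgc : HasCompactSupport g)
    (hg : ContDiff ℝ (⊤ : ℕ∞) g) {κ : ℝ} (hκ : 0 < κ) :
    ∃ φ : E → ℝ, ContDiff ℝ (⊤ : ℕ∞) φ ∧ HasCompactSupport φ ∧ (∀ x, |φ x| ≤ 1) ∧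
      ∫ x, |g x| ∂μ ≤ (∫ x, g x * φ x ∂μ) + κ := by
  set m := μ.real (tsupport g)
  set η := κ / (m + 1)
  have hη : 0 < η := by positivity
  set φ : E → ℝ := fun x => g x / √(g x ^ 2 + η ^ 2)
  have hφ : ContDiff ℝ (⊤ : ℕ∞) φ :=
    hg.div (((hg.pow 2).add contDiff_const).sqrt fun x => by positivity)
      fun x => (Real.sqrt_pos.2 (by positivity)).ne'
  have hφc : HasCompactSupport φ := hgc.mono fun x hx hgx => hx (by simp [φ, hgx])
  have hindicator : Integrable ((tsupport g).indicator fun _ => η) μ :=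
    (integrable_indicator_iff (isClosed_tsupport g).measurableSet).2
      (integrableOn_const hgc.isCompact.measure_lt_top.ne)
  have hgφ : Integrable (fun x => g x * φ x) μ :=
    (hg.continuous.mul hφ.continuous).integrable_of_hasCompactSupport hgc.mul_right
  refine ⟨φ, hφ, hφc, fun x => abs_div_sqrt_sq_add_sq_le_one _ _, ?_⟩
  calc ∫ x, |g x| ∂μ ≤ ∫ x, g x * φ x + (tsupport g).indicator (fun _ => η) x ∂μ := by
        refine integral_mono (hg.continuous.integrable_of_hasCompactSupport hgc).abs
          (hgφ.add hindicator) fun x => ?_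
        by_cases hx : x ∈ tsupport g
        · simpa [hx] using abs_le_mul_div_sqrt_add hη (g x)
        · simp [image_eq_zero_of_notMem_tsupport hx, hx]
    _ = (∫ x, g x * φ x ∂μ) + m * η := by
        rw [integral_add hgφ hindicator, integral_indicator (isClosed_tsupport g).measurableSet,
          setIntegral_const, smul_eq_mul]
    _ ≤ (∫ x, g x * φ x ∂μ) + κ := by
        gcongr
        rw [mul_div_left_comm]
        exact mul_le_of_le_one_right hκ.le (div_le_one_of_le₀ (by linarith) (by positivity))

lemma integral_abs_le_of_forall_test [FiniteDimensional ℝ E] {w : E → ℝ}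
    (hw : Integrable w μ) {B : ℝ}
    (h : ∀ φ : E → ℝ, ContDiff ℝ (⊤ : ℕ∞) φ → HasCompactSupport φ → (∀ x, |φ x| ≤ 1) →
      ∫ x, w x * φ x ∂μ ≤ B) :
    ∫ x, |w x| ∂μ ≤ B := by
  refine le_of_forall_le_add_mul (K := 3) fun κ hκ _ => ?_
  obtain ⟨g, hgc, hg, hwg⟩ := exists_contDiff_integral_abs_sub_le hw hκ
  obtain ⟨φ, hφ, hφc, hφ1, hgφ⟩ := exists_test_integral_abs_le_add (μ := μ) hgc hg hκ
  have hgi : Integrable g μ := hg.continuous.integrable_of_hasCompactSupport hgc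
  have hmul : ∀ {f : E → ℝ}, Integrable f μ → Integrable (fun x => f x * φ x) μ := fun hf =>
    hf.mul_bdd (c := 1) hφ.continuous.aestronglyMeasurable (.of_forall hφ1)
  have hwgi : Integrable (fun x => w x - g x) μ := hw.sub hgi
  have hpair := (abs_integral_mul_le_integral_abs hwgi hφ1).trans hwg
  simp_rw [sub_mul] at hpair
  rw [integral_sub (hmul hw) (hmul hgi)] at hpair
  have htriangle : ∫ x, |w x| ∂μ ≤ (∫ x, |w x - g x| ∂μ) + ∫ x, |g x| ∂μ := by
    rw [← integral_add hwgi.abs hgi.abs]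
    exact integral_mono hw.abs (hwgi.abs.add hgi.abs) fun x => by
      simpa using abs_add_le (w x - g x) (g x)
  linarith [(abs_le.1 hpair).1, h φ hφ hφc hφ1]

end Duality

lemma exists_mem_Ioo_of_ae {P : ℝ → Prop} (hP : ∀ᵐ t, P t) {a b : ℝ} (hab : a < b) :
    ∃ t ∈ Ioo a b, P t := by
  have hfreq : ∃ᵐ t, t ∈ Ioo a b :=
    frequently_ae_mem_iff.2 (by simpa using hab)
  obtain ⟨t, ht, hPt⟩ := (hfreq.and_eventually hP).exists
  exact ⟨t, ht, hPt⟩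

variable {w : ℝ → ℂ → ℝ} {T M ρ : ℝ} {G : Set ℝ} {s t : ℝ} {φ : ℂ → ℝ} {k : ℂ → ℂ}
  {Λ Γ L C σ h : ℝ}

lemma ConfinedFlow.forall_mem_of_step (hF : ConfinedFlow w T M ρ G) {P : ℝ → Prop} (hh : 0 < h)
    (hs : s ∈ G) (hPs : P s)
    (hstep : ∀ r ∈ G, ∀ t ∈ G, s ≤ r → r ≤ t → t - r ≤ h → P r → P t) :
    ∀ t ∈ G, s ≤ t → P t := by
  suffices ∀ n : ℕ, ∀ t ∈ G, s ≤ t → t - s < n * h → P t by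
    intro t ht hst
    obtain ⟨n, hn⟩ := exists_nat_gt ((t - s) / h)
    exact this n t ht hst ((div_lt_iff₀ hh).1 hn)
  intro n
  induction n with
  | zero => exact fun t _ hst ht => absurd ht (by simpa using hst)
  | succ n ih =>
    intro t ht hst hn
    rw [Nat.cast_succ] at hn
    rcases le_or_gt (t - s) h with hle | hlt
    · exact hstep s hs t ht le_rfl hst hle hPs
    · obtain ⟨r, ⟨hr₁, hr₂⟩, hrG⟩ :=
        exists_mem_Ioo_of_ae hF.ae_mem (lt_min (sub_lt_self t hh) (by linarith : t - h < s + n * h))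
      obtain ⟨hrt, hrs⟩ := lt_min_iff.1 hr₂
      have hr : r ∈ G := hrG ⟨by linarith [(hF.subset hs).1], hrt.trans (hF.subset ht).2⟩
      exact hstep r hr t ht (by linarith) hrt.le (by linarith)
        (ih r hr (by linarith) (by linarith))

lemma add_stepped_bounds_le {d N : ℝ} (hΛ : 0 ≤ Λ) (hΓ : 0 ≤ Γ) (hL : 0 ≤ L) (hN : 0 ≤ N)
    (hd : 0 ≤ d) (hd1 : d ≤ 1) :
    Λ * (1 + d * L) + (Γ * (1 + d * L) ^ 2 + Λ * (d * N)) ≤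
      (1 + (3 * L + L ^ 2 + N) * d) * (Λ + Γ) := by
  have hsq : d ^ 2 ≤ d := by nlinarith
  have hrest : 0 ≤ d * (Λ * (2 * L + L ^ 2) + Γ * (L + N)) := by positivity
  nlinarith [mul_le_mul_of_nonneg_left hsq (by positivity : 0 ≤ Γ * L ^ 2)]

namespace ConfinedFlow

lemma abs_integral_mul_le_of_step (hF : ConfinedFlow w T M ρ G)
    (hk : ApproximatesEulerKernel k C L M ρ σ) (hσ : 0 ≤ σ) (hh : 0 < h) (hh1 : h ≤ 1)
    (hs : s ∈ G) : ∀ t ∈ G, s ≤ t → ∀ φ Λ Γ, SmoothBound φ 1 Λ Γ →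
      |∫ x, w t x * φ x| ≤ (∫ x, |w s x|) + (t - s) * Real.exp (L * (t - s)) * (M * σ * Λ) +
        (t - s) * Real.exp ((3 * L + L ^ 2 + M * C) * (t - s)) *
          (h * (stepConstant M C L * (Λ + Γ))) := by
  have hM := (hF.bound 0).nonneg
  have hC := hk.smoothBound.nonneg
  have hL : 0 ≤ L := (norm_nonneg _).trans (hk.norm_fderiv_le (w 0) (hF.bound 0) 0)
  have hA : 0 ≤ stepConstant M C L := by
    rw [stepConstant]
    positivity
  refine hF.forall_mem_of_step hh hs (fun φ Λ Γ hφ => by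
    simpa using abs_integral_mul_le_integral_abs (hF.bound s).integrable hφ.norm_le)
    fun r hr t ht hsr hrt htr ih φ Λ Γ hφ => ?_
  have hΛ := hφ.nonneg
  have hΓ := hφ.nonneg_lipschitz
  have hd : 0 ≤ t - r := sub_nonneg.2 hrt
  have hc : 0 ≤ r - s := sub_nonneg.2 hsr
  have hstep := hF.abs_integral_sub_integral_smoothed_le hr ht hrt hk hσ hφ
  have hprev := ih _ _ _ (hφ.comp_add_smul ((hF.bound r).smoothBound_smoothedVelocity
    hk.smoothBound hk.hasCompactSupport (hk.norm_fderiv_le (w r) (hF.bound r))) hd)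
  have hfirst := add_mul_exp_mul_le (X := M * σ * Λ) (X' := M * σ * (Λ * (1 + (t - r) * L)))
    (K := L) (by positivity) hL hc hd (le_of_eq (by ring))
  have hreg := add_stepped_bounds_le hΛ hΓ hL (mul_nonneg hM hC) hd (htr.trans hh1)
  have hsecond := add_mul_exp_mul_le (c := r - s) (d := t - r)
    (X := h * (stepConstant M C L * (Λ + Γ)))
    (X' := h * (stepConstant M C L * (Λ * (1 + (t - r) * L) +
      (Γ * (1 + (t - r) * L) ^ 2 + Λ * ((t - r) * (M * C))))))
    (K := 3 * L + L ^ 2 + M * C) (by positivity) (by positivity) hc hd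
    (by rw [mul_left_comm (1 + _), mul_left_comm (1 + _)]; gcongr)
  have hquad : (t - r) ^ 2 * (stepConstant M C L * (Λ + Γ)) ≤
      (t - r) * (h * (stepConstant M C L * (Λ + Γ))) := by
    rw [sq, mul_assoc]
    gcongr
  rw [sub_add_sub_cancel] at hfirst hsecond
  linarith [abs_sub_abs_le_abs_sub (∫ x, w t x * φ x)
    (∫ x, w r x * φ (x + (t - r) • smoothedVelocity k (w r) x))]

lemma abs_integral_mul_le_add (hF : ConfinedFlow w T M ρ G)
    (hk : ApproximatesEulerKernel k C L M ρ σ) (hσ : 0 ≤ σ) (hs : s ∈ G) (ht : t ∈ G)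
    (hst : s ≤ t) (hφ : SmoothBound φ 1 Λ Γ) :
    |∫ x, w t x * φ x| ≤ (∫ x, |w s x|) + (t - s) * Real.exp (L * (t - s)) * (M * σ * Λ) := by
  refine le_of_forall_le_add_mul (K := (t - s) * Real.exp ((3 * L + L ^ 2 + M * C) * (t - s)) *
    (stepConstant M C L * (Λ + Γ))) fun h hh hh1 => ?_
  linarith [hF.abs_integral_mul_le_of_step hk hσ hh hh1 hs t ht hst φ Λ Γ hφ]

-- The Lipschitz constant of the smoothed velocity grows like `log (1 / δ)`, so over a short time
-- the smoothing error `δ` is amplified only by `δ ^ (-1 / 2)`.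
lemma exists_short_time_abs_integral_mul_le (hF : ConfinedFlow w T M ρ G) :
    ∃ τ, 0 < τ ∧ ∀ s ∈ G, ∀ t ∈ G, s ≤ t → t - s ≤ τ → ∀ φ Λ Γ, SmoothBound φ 1 Λ Γ →
      |∫ x, w t x * φ x| ≤ ∫ x, |w s x| := by
  have hM := (hF.bound 0).nonneg
  obtain ⟨A, hA, hkernel⟩ := exists_approximatesEulerKernel ρ hM
  refine ⟨1 / (2 * A + 1), by positivity, fun s hs t ht hst hts φ Λ Γ hφ => ?_⟩
  have hΛ := hφ.nonneg
  have hd : 0 ≤ t - s := sub_nonneg.2 hst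
  have hAd : 2 * A * (t - s) ≤ 1 := by
    rw [le_div_iff₀ (by positivity)] at hts
    linarith
  refine le_of_forall_le_add_mul (K := (t - s) * Real.exp 1 * (M * (M * 10) * Λ)) fun η hη hη1 => ?_
  obtain ⟨k, C, hk⟩ := hkernel (η ^ 2) (by positivity) (pow_le_one₀ hη.le hη1)
  refine (hF.abs_integral_mul_le_add hk (by positivity) hs ht hst hφ).trans ?_
  have hlog : Real.log (1 / η ^ 2) = 2 * -Real.log η := by
    rw [one_div, Real.log_inv, Real.log_pow]
    push_cast
    ring
  have hexp : Real.exp (A * (1 + Real.log (1 / η ^ 2)) * (t - s)) ≤ Real.exp 1 / η := by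
    rw [← Real.exp_log hη, ← Real.exp_sub, Real.exp_log hη, hlog]
    refine Real.exp_le_exp.2 ?_
    have := Real.log_nonpos hη.le hη1
    nlinarith [mul_nonneg hA hd]
  calc _ ≤ (∫ x, |w s x|) + (t - s) * (Real.exp 1 / η) * (M * (M * (10 * η ^ 2)) * Λ) := by gcongr
    _ = _ := by field_simp

theorem integral_abs_le (hF : ConfinedFlow w T M ρ G) :
    ∀ t ∈ G, ∫ x, |w t x| ≤ ∫ x, |w 0 x| := by
  obtain ⟨τ, hτ, hshort⟩ := hF.exists_short_time_abs_integral_mul_le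
  intro t ht
  refine hF.forall_mem_of_step (P := fun t => ∫ x, |w t x| ≤ ∫ x, |w 0 x|) hτ hF.zero_mem le_rfl
    (fun s hs t ht _ hst hts ih => ?_) t ht (hF.subset ht).1
  refine (integral_abs_le_of_forall_test (hF.bound t).integrable fun φ hφ hφc hφ1 => ?_).trans ih
  obtain ⟨Λ, Γ, -, hbound⟩ := exists_smoothBound_of_hasCompactSupport hφ hφc hφ1
  exact (le_abs_self _).trans (hshort s hs t ht hst hts φ Λ Γ hbound)

end ConfinedFlow

end IntegralAbs

/-! ### Blobs of vorticity and their interaction -/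

section KernelGeometry

lemma inner_sub_eulerKernel (x y : ℂ) : inner ℝ (x - y) (eulerKernel x y) = 0 := by
  rw [eulerKernel_eq_smul, inner_smul_right, Complex.inner]
  simp only [mul_re, conj_re, conj_im, I_re, I_im, mul_im]
  ring

lemma norm_eulerKernel_sub_le {x y p q : ℂ} {δ : ℝ} (hδ : 0 < δ) (hxy : δ ≤ ‖x - y‖)
    (hpq : δ ≤ ‖p - q‖) :
    ‖eulerKernel x y - eulerKernel p q‖ ≤
      1 / (2 * Real.pi * δ ^ 2) * (‖x - p‖ + ‖y - q‖) := by
  have hxy0 : conj (x - y) ≠ 0 := (map_ne_zero _).2 (norm_pos_iff.1 (hδ.trans_le hxy))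
  have hpq0 : conj (p - q) ≠ 0 := (map_ne_zero _).2 (norm_pos_iff.1 (hδ.trans_le hpq))
  have hdiff : eulerKernel x y - eulerKernel p q = ((1 / (2 * Real.pi) : ℝ) : ℂ) *
      (I * conj ((p - x) - (q - y)) / (conj (x - y) * conj (p - q))) := by
    rw [eulerKernel_eq_div_conj, eulerKernel_eq_div_conj, ← mul_sub, div_sub_div _ _ hxy0 hpq0]
    congr 2
    simp only [map_sub]
    ring
  have hnum : ‖(p - x) - (q - y)‖ ≤ ‖x - p‖ + ‖y - q‖ := by
    rw [norm_sub_rev x p, norm_sub_rev y q]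
    exact norm_sub_le _ _
  rw [hdiff, norm_mul, norm_div, norm_mul, norm_mul, norm_I, RCLike.norm_conj, RCLike.norm_conj,
    RCLike.norm_conj, norm_real, Real.norm_of_nonneg (by positivity), one_mul]
  calc 1 / (2 * Real.pi) * (‖(p - x) - (q - y)‖ / (‖x - y‖ * ‖p - q‖))
      ≤ 1 / (2 * Real.pi) * ((‖x - p‖ + ‖y - q‖) / (δ * δ)) := by gcongr
    _ = 1 / (2 * Real.pi * δ ^ 2) * (‖x - p‖ + ‖y - q‖) := by
      field_simp

end KernelGeometry

/-- A vorticity distribution of one sign, normalised to unit mass, bounded by `M` and supported in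
the closed disc of centre `c` and radius `κ`. -/
structure VortexBlob (m : ℂ → ℝ) (M : ℝ) (c : ℂ) (κ : ℝ) : Prop where
  bound : VorticityBound m M
  nonneg : ∀ᵐ x, 0 ≤ m x
  integral_eq_one : ∫ x, m x = 1
  mem_closedBall : ∀ x, m x ≠ 0 → x ∈ closedBall c κ

/-- The centre of mass of a distribution of unit mass. -/
noncomputable def barycenter (m : ℂ → ℝ) : ℂ := ∫ x, m x • x

/-- The variance of a distribution of unit mass, which measures how concentrated it is. -/
noncomputable def dispersion (m : ℂ → ℝ) : ℝ := ∫ x, m x * ‖x - barycenter m‖ ^ 2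

namespace VortexBlob

variable {m n : ℂ → ℝ} {M M' κ κ' δ : ℝ} {c c' : ℂ}
  {E : Type*} [NormedAddCommGroup E] [NormedSpace ℝ E]

lemma integrable_smul_of_bound (hm : VortexBlob m M c κ) {f : ℂ → E}
    (hf : AEStronglyMeasurable f volume) {B : ℝ} (hB : ∀ x ∈ closedBall c κ, ‖f x‖ ≤ B) :
    Integrable (fun x => m x • f x) := by
  refine (hm.bound.integrable.abs.mul_const B).mono'
    (hm.bound.integrable.aestronglyMeasurable.smul hf) (.of_forall fun x => ?_)
  rw [norm_smul, Real.norm_eq_abs]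
  by_cases hx : m x = 0
  · simp [hx]
  · exact mul_le_mul_of_nonneg_left (hB x (hm.mem_closedBall x hx)) (abs_nonneg _)

lemma integrable_smul (hm : VortexBlob m M c κ) {f : ℂ → E} (hf : Continuous f) :
    Integrable (fun x => m x • f x) :=
  have ⟨_, hB⟩ := (isCompact_closedBall c κ).exists_bound_of_continuousOn hf.continuousOn
  hm.integrable_smul_of_bound hf.aestronglyMeasurable hB

lemma norm_integral_smul_le (hm : VortexBlob m M c κ) {f : ℂ → E} {g : ℂ → ℝ}
    (hg : Continuous g) (hfg : ∀ x ∈ closedBall c κ, ‖f x‖ ≤ g x) :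
    ‖∫ x, m x • f x‖ ≤ ∫ x, m x * g x := by
  refine norm_integral_le_of_norm_le (hm.integrable_smul hg) (hm.nonneg.mono fun x hx0 => ?_)
  rw [norm_smul, Real.norm_of_nonneg hx0]
  by_cases hx : m x = 0
  · simp [hx]
  · exact mul_le_mul_of_nonneg_left (hfg x (hm.mem_closedBall x hx)) hx0

lemma integral_smul_sub_const [CompleteSpace E] (hm : VortexBlob m M c κ) {f : ℂ → E}
    (hf : Integrable (fun x => m x • f x)) (e : E) :
    ∫ x, m x • (f x - e) = (∫ x, m x • f x) - e := by
  simp_rw [smul_sub]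
  rw [integral_sub hf (hm.bound.integrable.smul_const e), integral_smul_const, hm.integral_eq_one,
    one_smul]

lemma barycenter_mem_closedBall (hm : VortexBlob m M c κ) : barycenter m ∈ closedBall c κ := by
  rw [mem_closedBall_iff_norm, barycenter,
    ← hm.integral_smul_sub_const (hm.integrable_smul continuous_id')]
  refine (hm.norm_integral_smul_le continuous_const fun x hx => mem_closedBall_iff_norm.1 hx).trans
    (le_of_eq ?_)
  rw [integral_mul_const, hm.integral_eq_one, one_mul]

lemma integral_smul_sub_barycenter (hm : VortexBlob m M c κ) :
    ∫ x, m x • (x - barycenter m) = 0 := by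
  rw [hm.integral_smul_sub_const (hm.integrable_smul continuous_id'), barycenter, sub_self]

lemma dispersion_nonneg (hm : VortexBlob m M c κ) : 0 ≤ dispersion m :=
  integral_nonneg_of_ae <| hm.nonneg.mono fun _ hx => mul_nonneg hx (sq_nonneg _)

lemma dispersion_le (hm : VortexBlob m M c κ) : dispersion m ≤ 4 * κ ^ 2 := by
  refine (le_abs_self _).trans ((hm.norm_integral_smul_le (f := fun x => ‖x - barycenter m‖ ^ 2)
    (g := fun _ => 4 * κ ^ 2) continuous_const fun x hx => ?_).trans (le_of_eq ?_))
  · have hb := mem_closedBall_iff_norm'.1 hm.barycenter_mem_closedBall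
    have hxb : ‖x - barycenter m‖ ≤ 2 * κ := by
      linarith [norm_sub_le_norm_sub_add_norm_sub x c (barycenter m), mem_closedBall_iff_norm.1 hx]
    rw [Real.norm_of_nonneg (sq_nonneg _)]
    nlinarith [norm_nonneg (x - barycenter m)]
  · rw [integral_mul_const, hm.integral_eq_one, one_mul]

lemma dispersion_eq (hm : VortexBlob m M c κ) :
    dispersion m = (∫ x, m x * ‖x‖ ^ 2) - ‖barycenter m‖ ^ 2 := by
  have hsq : Integrable (fun x => m x * ‖x‖ ^ 2) := hm.integrable_smul (by fun_prop)
  have hcenter : Integrable (fun x => m x • (x - barycenter m)) :=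
    hm.integrable_smul (by fun_prop)
  have hexpand : ∀ x, m x * ‖x - barycenter m‖ ^ 2 = m x * ‖x‖ ^ 2 -
      2 * inner ℝ (barycenter m) (m x • (x - barycenter m)) - m x * ‖barycenter m‖ ^ 2 := by
    intro x
    rw [norm_sub_sq_real, inner_smul_right, inner_sub_right, real_inner_self_eq_norm_sq,
      real_inner_comm]
    ring
  rw [dispersion]
  simp_rw [hexpand]
  rw [integral_sub (hsq.sub' ((hcenter.const_inner _).const_mul _))
      (hm.bound.integrable.mul_const _), integral_sub hsq ((hcenter.const_inner _).const_mul _),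
    integral_const_mul, integral_inner hcenter, hm.integral_smul_sub_barycenter, inner_zero_right,
    integral_mul_const, hm.integral_eq_one]
  ring

lemma sq_integral_mul_le (hm : VortexBlob m M c κ) {ψ : ℂ → ℝ} (hψ : Continuous ψ) :
    (∫ x, m x * ψ x) ^ 2 ≤ ∫ x, m x * ψ x ^ 2 := by
  set e := ∫ x, m x * ψ x with he
  have hint : Integrable (fun x => m x * ψ x) := hm.integrable_smul hψ
  have hsq : Integrable (fun x => m x * ψ x ^ 2) := hm.integrable_smul (hψ.pow 2)
  have hvar : 0 ≤ ∫ x, m x * (ψ x - e) ^ 2 :=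
    integral_nonneg_of_ae <| hm.nonneg.mono fun _ hx => mul_nonneg hx (sq_nonneg _)
  have hexpand : ∀ x, m x * (ψ x - e) ^ 2 =
      m x * ψ x ^ 2 - 2 * e * (m x * ψ x) + m x * e ^ 2 := fun x => by ring
  simp_rw [hexpand] at hvar
  rw [integral_add (hsq.sub' (hint.const_mul _)) (hm.bound.integrable.mul_const _),
    integral_sub hsq (hint.const_mul _), integral_const_mul, integral_mul_const,
    hm.integral_eq_one, ← he] at hvar
  linarith

lemma integral_mul_norm_sub_barycenter_le (hm : VortexBlob m M c κ) :
    ∫ x, m x * ‖x - barycenter m‖ ≤ √(dispersion m) :=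
  Real.le_sqrt_of_sq_le (hm.sq_integral_mul_le (by fun_prop))

lemma integrable_smul_inducedVelocity (hm : VortexBlob m M c κ) (hn : VorticityBound n M') :
    Integrable (fun x => m x • inducedVelocity n x) :=
  hm.integrable_smul_of_bound hn.aestronglyMeasurable_inducedVelocity
    fun x _ => hn.norm_inducedVelocity_le x

lemma integrable_mul_inner_inducedVelocity (hm : VortexBlob m M c κ) (hn : VorticityBound n M')
    {g : ℂ → ℂ} (hg : Continuous g) :
    Integrable (fun x => m x * inner ℝ (g x) (inducedVelocity n x)) := by
  obtain ⟨B, hB⟩ := (isCompact_closedBall c κ).exists_bound_of_continuousOn hg.continuousOn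
  refine hm.integrable_smul_of_bound (B := B * (2 * M'))
    (hg.aestronglyMeasurable.inner hn.aestronglyMeasurable_inducedVelocity) fun x hx => ?_
  exact (norm_inner_le_norm _ _).trans (mul_le_mul (hB x hx) (hn.norm_inducedVelocity_le x)
    (norm_nonneg _) ((norm_nonneg _).trans (hB x hx)))

end VortexBlob

lemma le_norm_sub_of_mem_closedBall {c c' x y : ℂ} {κ κ' δ : ℝ}
    (hc : δ + κ + κ' ≤ dist c c')
    (hx : x ∈ closedBall c κ) (hy : y ∈ closedBall c' κ') : δ ≤ ‖x - y‖ := by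
  rw [← dist_eq_norm]
  linarith [dist_triangle4 c x y c', mem_closedBall'.1 hx, mem_closedBall.1 hy]

namespace VortexBlob

variable {m n : ℂ → ℝ} {M M' κ κ' δ : ℝ} {c c' : ℂ}

lemma integrable_prod_inner_eulerKernel (hm : VortexBlob m M c κ) {g : ℂ → ℂ} (hg : Continuous g) :
    Integrable (fun p : ℂ × ℂ => m p.1 * inner ℝ (g p.1) (m p.2 • eulerKernel p.1 p.2))
      (volume.prod volume) := by
  obtain ⟨B, hB⟩ := (isCompact_closedBall c κ).exists_bound_of_continuousOn hg.continuousOn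
  have hmeas : AEStronglyMeasurable
      (fun p : ℂ × ℂ => m p.1 * inner ℝ (g p.1) (m p.2 • eulerKernel p.1 p.2))
      ((volume : Measure ℂ).prod volume) :=
    hm.bound.integrable.aestronglyMeasurable.comp_fst.mul
      ((hg.comp continuous_fst).aestronglyMeasurable.inner
        (hm.bound.integrable.aestronglyMeasurable.comp_snd.smul
          measurable_eulerKernel.aestronglyMeasurable))
  have hsection : ∀ x, Integrable (fun y => m x * inner ℝ (g x) (m y • eulerKernel x y)) :=
    fun x => ((hm.bound.integrable_smul_eulerKernel x).1.const_inner _).const_mul _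
  refine (integrable_prod_iff hmeas).2 ⟨.of_forall hsection, ?_⟩
  refine (hm.bound.integrable.abs.mul_const (B * (2 * M))).mono'
    hmeas.norm.integral_prod_right' (.of_forall fun x => ?_)
  obtain ⟨hKint, hKle⟩ := hm.bound.integrable_smul_eulerKernel x
  rw [Real.norm_of_nonneg (integral_nonneg fun y => norm_nonneg _)]
  by_cases hx : m x = 0
  · simp [hx]
  have hgx := hB x (hm.mem_closedBall x hx)
  calc ∫ y, ‖m x * inner ℝ (g x) (m y • eulerKernel x y)‖
      ≤ ∫ y, |m x| * (B * ‖m y • eulerKernel x y‖) := by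
        refine integral_mono (hsection x).norm ((hKint.norm.const_mul _).const_mul _) fun y => ?_
        simp only [norm_mul, Real.norm_eq_abs]
        gcongr
        exact (abs_real_inner_le_norm _ _).trans (by gcongr)
    _ = |m x| * (B * ∫ y, ‖m y • eulerKernel x y‖) := by
        rw [integral_const_mul, integral_const_mul]
    _ ≤ |m x| * (B * (2 * M)) := by
        have : 0 ≤ B := (norm_nonneg _).trans hgx
        gcongr

-- Exchanging the two variables changes the sign of the double integral.
theorem integral_mul_inner_inducedVelocity_self (hm : VortexBlob m M c κ) {g : ℂ → ℂ}
    (hg : Continuous g) (hgK : ∀ x y, inner ℝ (g x - g y) (eulerKernel x y) = 0) :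
    ∫ x, m x * inner ℝ (g x) (inducedVelocity m x) = 0 := by
  set F : ℂ × ℂ → ℝ := fun p => m p.1 * inner ℝ (g p.1) (m p.2 • eulerKernel p.1 p.2) with hF
  have hdouble : ∫ x, m x * inner ℝ (g x) (inducedVelocity m x) =
      ∫ p, F p ∂(volume.prod volume) := by
    rw [integral_prod _ (hm.integrable_prod_inner_eulerKernel hg)]
    refine integral_congr_ae (.of_forall fun x => ?_)
    simp only [inducedVelocity]
    rw [integral_const_mul, integral_inner (hm.bound.integrable_smul_eulerKernel x).1]
  have hantisymm : ∀ p, F p.swap = -F p := fun ⟨x, y⟩ => by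
    have hxy := hgK x y
    rw [inner_sub_left, sub_eq_zero] at hxy
    simp only [hF, Prod.swap, inner_smul_right, eulerKernel_antisymm y x, inner_neg_right, hxy]
    ring
  have hswap : ∫ p, F p.swap ∂(volume.prod volume) = ∫ p, F p ∂(volume.prod volume) :=
    integral_prod_swap F
  simp only [hantisymm, integral_neg] at hswap
  linarith

lemma integral_mul_inner_sub_inducedVelocity_self (hm : VortexBlob m M c κ) (p : ℂ) :
    ∫ x, m x * inner ℝ (x - p) (inducedVelocity m x) = 0 :=
  hm.integral_mul_inner_inducedVelocity_self (by fun_prop) fun x y => by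
    rw [sub_sub_sub_cancel_right, inner_sub_eulerKernel]

lemma integral_smul_inducedVelocity_self (hm : VortexBlob m M c κ) :
    ∫ x, m x • inducedVelocity m x = 0 := by
  refine ext_inner_left ℝ fun v => ?_
  rw [← integral_inner (hm.integrable_smul_inducedVelocity hm.bound), inner_zero_right]
  simp_rw [inner_smul_right]
  exact hm.integral_mul_inner_inducedVelocity_self continuous_const fun x y => by
    rw [sub_self, inner_zero_left]

lemma norm_inducedVelocity_sub_eulerKernel_le (hn : VortexBlob n M c κ) (hδ : 0 < δ) {x p : ℂ}
    (hx : ∀ y ∈ closedBall c κ, δ ≤ ‖x - y‖) (hp : ∀ y ∈ closedBall c κ, δ ≤ ‖p - y‖) :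
    ‖inducedVelocity n x - eulerKernel p (barycenter n)‖ ≤
      1 / (2 * Real.pi * δ ^ 2) * (‖x - p‖ + √(dispersion n)) := by
  have hint : Integrable (fun y => n y * ‖y - barycenter n‖) := hn.integrable_smul (by fun_prop)
  rw [inducedVelocity, ← hn.integral_smul_sub_const (hn.bound.integrable_smul_eulerKernel x).1]
  refine (hn.norm_integral_smul_le
    (g := fun y => 1 / (2 * Real.pi * δ ^ 2) * (‖x - p‖ + ‖y - barycenter n‖)) (by fun_prop)
    fun y hy => norm_eulerKernel_sub_le hδ (hx y hy)
      (hp _ hn.barycenter_mem_closedBall)).trans ?_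
  have hexpand : ∀ y, n y * (1 / (2 * Real.pi * δ ^ 2) * (‖x - p‖ + ‖y - barycenter n‖)) =
      1 / (2 * Real.pi * δ ^ 2) * (n y * ‖x - p‖ + n y * ‖y - barycenter n‖) := fun y => by ring
  simp_rw [hexpand]
  rw [integral_const_mul, integral_add (hn.bound.integrable.mul_const _) hint, integral_mul_const,
    hn.integral_eq_one, one_mul]
  gcongr
  exact hn.integral_mul_norm_sub_barycenter_le

lemma norm_integral_smul_inducedVelocity_sub_le (hm : VortexBlob m M c κ)
    (hn : VortexBlob n M' c' κ') (hδ : 0 < δ) (hc : δ + κ + κ' ≤ dist c c') :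
    ‖(∫ x, m x • inducedVelocity n x) - eulerKernel (barycenter m) (barycenter n)‖ ≤
      1 / (2 * Real.pi * δ ^ 2) * (√(dispersion m) + √(dispersion n)) := by
  have hint : Integrable (fun x => m x * ‖x - barycenter m‖) := hm.integrable_smul (by fun_prop)
  have hsep : ∀ x ∈ closedBall c κ, ∀ y ∈ closedBall c' κ', δ ≤ ‖x - y‖ := fun x hx y hy =>
    le_norm_sub_of_mem_closedBall hc hx hy
  rw [← hm.integral_smul_sub_const (hm.integrable_smul_inducedVelocity hn.bound)]
  refine (hm.norm_integral_smul_le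
    (g := fun x => 1 / (2 * Real.pi * δ ^ 2) * (‖x - barycenter m‖ + √(dispersion n)))
    (by fun_prop) fun x hx => hn.norm_inducedVelocity_sub_eulerKernel_le hδ (hsep x hx)
      (hsep _ hm.barycenter_mem_closedBall)).trans ?_
  have hexpand : ∀ x, m x * (1 / (2 * Real.pi * δ ^ 2) *
      (‖x - barycenter m‖ + √(dispersion n))) = 1 / (2 * Real.pi * δ ^ 2) *
        (m x * ‖x - barycenter m‖ + m x * √(dispersion n)) := fun x => by ring
  simp_rw [hexpand]
  rw [integral_const_mul, integral_add hint (hm.bound.integrable.mul_const _), integral_mul_const,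
    hm.integral_eq_one, one_mul]
  gcongr
  exact hm.integral_mul_norm_sub_barycenter_le

-- Constants may be subtracted from the velocity: `x - barycenter m` has mean zero.
lemma integral_mul_inner_sub_barycenter_eq (hm : VortexBlob m M c κ) (hn : VorticityBound n M')
    (k : ℂ) : ∫ x, m x * inner ℝ (x - barycenter m) (inducedVelocity n x) =
      ∫ x, m x • inner ℝ (x - barycenter m) (inducedVelocity n x - k) := by
  have hcenter : Integrable (fun x => m x • (x - barycenter m)) :=
    hm.integrable_smul (by fun_prop)
  have hconst : Integrable (fun x => m x * inner ℝ (x - barycenter m) k) :=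
    hm.integrable_smul (by fun_prop)
  have hmean : ∫ x, m x * inner ℝ (x - barycenter m) k = 0 := by
    simp_rw [real_inner_comm k, ← inner_smul_right]
    rw [integral_inner hcenter, hm.integral_smul_sub_barycenter, inner_zero_right]
  simp_rw [inner_sub_right, smul_eq_mul, mul_sub]
  rw [integral_sub (hm.integrable_mul_inner_inducedVelocity hn
    (continuous_sub_right (barycenter m))) hconst, hmean, sub_zero]

lemma abs_integral_mul_inner_inducedVelocity_le (hm : VortexBlob m M c κ)
    (hn : VortexBlob n M' c' κ') (hδ : 0 < δ) (hc : δ + κ + κ' ≤ dist c c') :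
    |∫ x, m x * inner ℝ (x - barycenter m) (inducedVelocity n x)| ≤
      1 / (2 * Real.pi * δ ^ 2) * (3 / 2 * dispersion m + 1 / 2 * dispersion n) := by
  set b := barycenter m
  set s := √(dispersion n)
  have hsep : ∀ x ∈ closedBall c κ, ∀ y ∈ closedBall c' κ', δ ≤ ‖x - y‖ := fun x hx y hy =>
    le_norm_sub_of_mem_closedBall hc hx hy
  have hfirst : Integrable (fun x => m x * ‖x - b‖) := hm.integrable_smul (by fun_prop)
  have hsecond : Integrable (fun x => m x * ‖x - b‖ ^ 2) := hm.integrable_smul (by fun_prop)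
  have hYoung : dispersion m + √(dispersion m) * s ≤
      3 / 2 * dispersion m + 1 / 2 * dispersion n := by
    nlinarith [sq_nonneg (√(dispersion m) - s), Real.sq_sqrt hm.dispersion_nonneg,
      Real.sq_sqrt hn.dispersion_nonneg]
  rw [hm.integral_mul_inner_sub_barycenter_eq hn.bound (eulerKernel b (barycenter n))]
  calc ‖∫ x, m x • inner ℝ (x - b) (inducedVelocity n x - eulerKernel b (barycenter n))‖
      ≤ ∫ x, m x * (‖x - b‖ * (1 / (2 * Real.pi * δ ^ 2) * (‖x - b‖ + s))) :=
        hm.norm_integral_smul_le (by fun_prop) fun x hx => (norm_inner_le_norm _ _).trans <| by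
          gcongr
          exact hn.norm_inducedVelocity_sub_eulerKernel_le hδ (hsep x hx)
            (hsep _ hm.barycenter_mem_closedBall)
    _ = ∫ x, 1 / (2 * Real.pi * δ ^ 2) * (m x * ‖x - b‖ ^ 2 + m x * ‖x - b‖ * s) := by
        congr 1 with x
        ring
    _ = 1 / (2 * Real.pi * δ ^ 2) * (dispersion m + (∫ x, m x * ‖x - b‖) * s) := by
        rw [integral_const_mul, integral_add hsecond (hfirst.mul_const _), integral_mul_const,
          dispersion]
    _ ≤ 1 / (2 * Real.pi * δ ^ 2) * (dispersion m + √(dispersion m) * s) := by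
        gcongr
        exact hm.integral_mul_norm_sub_barycenter_le
    _ ≤ 1 / (2 * Real.pi * δ ^ 2) * (3 / 2 * dispersion m + 1 / 2 * dispersion n) := by
        gcongr

end VortexBlob

section VortexSystem

variable {ι : Type*} [Fintype ι] {a : ι → ℝ} {z : ι → ℂ} {m : ι → ℂ → ℝ}
  {M : ι → ℝ} {κ δ A : ℝ}

/-- The velocity of the `i`-th of the point vortices at positions `b` with intensities `a`. -/
noncomputable def pointVortexVelocity [DecidableEq ι] (a : ι → ℝ) (b : ι → ℂ) (i : ι) : ℂ :=
  ∑ j ∈ Finset.univ.erase i, a j • eulerKernel (b i) (b j)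

/-- A Lipschitz rate for the mutual interaction of `n` vortices which have intensities at most `A`
and stay at distance at least `δ` from each other. -/
noncomputable def interactionRate (n : ℕ) (A δ : ℝ) : ℝ := n * A / (Real.pi * δ ^ 2)

lemma integral_smul_sum_inducedVelocity [DecidableEq ι]
    (hm : ∀ i, VortexBlob (m i) (M i) (z i) κ) (i : ι) :
    ∫ x, m i x • ∑ j, a j • inducedVelocity (m j) x =
      ∑ j ∈ Finset.univ.erase i, a j • ∫ x, m i x • inducedVelocity (m j) x := by
  simp_rw [Finset.smul_sum, smul_comm (m i _)]
  rw [integral_finsetSum _ fun j _ =>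
    ((hm i).integrable_smul_inducedVelocity (hm j).bound).fun_smul (a j)]
  simp_rw [integral_smul]
  rw [← Finset.add_sum_erase _ _ (Finset.mem_univ i), (hm i).integral_smul_inducedVelocity_self,
    smul_zero, zero_add]

lemma norm_integral_smul_sum_inducedVelocity_sub_le [DecidableEq ι]
    (hm : ∀ i, VortexBlob (m i) (M i) (z i) κ)
    (hδ : 0 < δ) (hz : Pairwise fun i j => δ + κ + κ ≤ dist (z i) (z j)) (hA : ∀ i, |a i| ≤ A)
    (i : ι) :
    ‖(∫ x, m i x • ∑ j, a j • inducedVelocity (m j) x) -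
        pointVortexVelocity a (fun j => barycenter (m j)) i‖ ≤
      interactionRate (Fintype.card ι) A δ * √(∑ j, dispersion (m j)) := by
  set s := √(∑ j, dispersion (m j))
  have hA0 : 0 ≤ A := (abs_nonneg _).trans (hA i)
  have hs : ∀ j, √(dispersion (m j)) ≤ s := fun j => Real.sqrt_le_sqrt <|
    Finset.single_le_sum (fun j _ => (hm j).dispersion_nonneg) (Finset.mem_univ j)
  rw [integral_smul_sum_inducedVelocity hm, pointVortexVelocity, ← Finset.sum_sub_distrib]
  calc ‖∑ j ∈ Finset.univ.erase i, (a j • (∫ x, m i x • inducedVelocity (m j) x) -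
          a j • eulerKernel (barycenter (m i)) (barycenter (m j)))‖
      ≤ ∑ j ∈ Finset.univ.erase i, A * (1 / (2 * Real.pi * δ ^ 2) * (s + s)) := by
        refine norm_sum_le_of_le _ fun j hj => ?_
        rw [← smul_sub, norm_smul, Real.norm_eq_abs]
        gcongr
        · exact hA j
        · refine ((hm i).norm_integral_smul_inducedVelocity_sub_le (hm j) hδ
            (hz (Finset.ne_of_mem_erase hj).symm)).trans ?_
          gcongr
          exacts [hs i, hs j]
    _ ≤ ∑ _j : ι, A * (1 / (2 * Real.pi * δ ^ 2) * (s + s)) :=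
        Finset.sum_le_sum_of_subset_of_nonneg (Finset.erase_subset _ _) fun _ _ _ => by positivity
    _ = interactionRate (Fintype.card ι) A δ * s := by
        rw [Finset.sum_const, Finset.card_univ, nsmul_eq_mul, interactionRate]
        field_simp
        ring

lemma integral_mul_inner_sum_inducedVelocity [DecidableEq ι]
    (hm : ∀ i, VortexBlob (m i) (M i) (z i) κ) (i : ι) (p : ℂ) :
    ∫ x, m i x * inner ℝ (x - p) (∑ j, a j • inducedVelocity (m j) x) =
      ∑ j ∈ Finset.univ.erase i, a j * ∫ x, m i x * inner ℝ (x - p) (inducedVelocity (m j) x) := by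
  simp_rw [inner_sum, inner_smul_right, Finset.mul_sum, mul_left_comm (m i _)]
  rw [integral_finsetSum _ fun j _ => ((hm i).integrable_mul_inner_inducedVelocity (hm j).bound
    (continuous_sub_right p)).const_mul (a j)]
  simp_rw [integral_const_mul]
  rw [← Finset.add_sum_erase _ _ (Finset.mem_univ i),
    (hm i).integral_mul_inner_sub_inducedVelocity_self, mul_zero, zero_add]

lemma sum_integral_mul_inner_sum_inducedVelocity_le (hm : ∀ i, VortexBlob (m i) (M i) (z i) κ)
    (hδ : 0 < δ) (hz : Pairwise fun i j => δ + κ + κ ≤ dist (z i) (z j)) (hA : ∀ i, |a i| ≤ A) :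
    ∑ i, ∫ x, m i x * inner ℝ (x - barycenter (m i)) (∑ j, a j • inducedVelocity (m j) x) ≤
      interactionRate (Fintype.card ι) A δ * ∑ i, dispersion (m i) := by
  classical
  have hd : ∀ i, 0 ≤ dispersion (m i) := fun i => (hm i).dispersion_nonneg
  have hpair : ∀ i, ∫ x, m i x * inner ℝ (x - barycenter (m i))
      (∑ j, a j • inducedVelocity (m j) x) ≤
        ∑ j, A * (1 / (2 * Real.pi * δ ^ 2) *
          (3 / 2 * dispersion (m i) + 1 / 2 * dispersion (m j))) := by
    intro i
    have hA0 : 0 ≤ A := (abs_nonneg _).trans (hA i)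
    rw [integral_mul_inner_sum_inducedVelocity hm]
    refine (Finset.sum_le_sum fun j hj => ?_).trans (Finset.sum_le_sum_of_subset_of_nonneg
      (Finset.erase_subset i _) fun j _ _ => ?_)
    · refine (le_abs_self _).trans ((abs_mul _ _).trans_le ?_)
      gcongr
      · exact hA j
      · exact (hm i).abs_integral_mul_inner_inducedVelocity_le (hm j) hδ
          (hz (Finset.ne_of_mem_erase hj).symm)
    · have := hd i
      have := hd j
      positivity
  refine (Finset.sum_le_sum fun i _ => hpair i).trans (le_of_eq ?_)
  simp_rw [← Finset.mul_sum, Finset.sum_add_distrib, ← Finset.mul_sum, Finset.sum_const,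
    Finset.card_univ, nsmul_eq_mul, ← Finset.mul_sum, interactionRate]
  field_simp
  ring

end VortexSystem

/-! ### Splitting a flow into its vortices -/

section Pieces

variable {ι : Type*} {a : ι → ℝ} {z : ι → ℂ} {w ψ : ℂ → ℝ} {M κ δ : ℝ} {i j : ι} {x : ℂ}

/-- The discs of radius `κ` around the points `z i` lie at distance at least `δ > 0` from each
other. -/
structure SeparatedDiscs (z : ι → ℂ) (κ δ : ℝ) : Prop where
  radius_nonneg : 0 ≤ κ
  gap_pos : 0 < δ
  gap_le : Pairwise fun i j => δ + κ + κ ≤ dist (z i) (z j)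

/-- The part of the vorticity `w` in the disc of radius `κ` around `z i`, divided by the intensity
`a i`. -/
noncomputable def vortexPiece (a : ι → ℝ) (z : ι → ℂ) (κ : ℝ) (w : ℂ → ℝ) (i : ι) : ℂ → ℝ :=
  (closedBall (z i) κ).indicator fun x => w x / a i

/-- The rate `∫ m ∇ψ · u` at which the velocity `u` induced by `w` changes `∫ m ψ`, when `m` is a
part of `w`. -/
noncomputable def momentRate (m w ψ : ℂ → ℝ) : ℝ :=
  ∫ x, m x * fderiv ℝ ψ x (inducedVelocity w x)

lemma VorticityBound.vortexPiece (h : VorticityBound w M) (a : ι → ℝ) (z : ι → ℂ) (κ : ℝ) (i : ι) :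
    VorticityBound (vortexPiece a z κ w i) (M / |a i|) := by
  have hle : ∀ x, |EulerVortex.vortexPiece a z κ w i x| ≤ |w x| / |a i| := fun x => by
    rw [EulerVortex.vortexPiece, ← Real.norm_eq_abs, ← abs_div, ← Real.norm_eq_abs]
    exact norm_indicator_le_norm_self _ _
  have hint : Integrable (EulerVortex.vortexPiece a z κ w i) :=
    (h.integrable.div_const _).indicator measurableSet_closedBall
  refine ⟨hint, ?_, ?_⟩
  · calc ∫ x, |EulerVortex.vortexPiece a z κ w i x|
        ≤ ∫ x, |w x| / |a i| := integral_mono hint.abs (h.integrable.abs.div_const _) hle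
      _ ≤ M / |a i| := by
        rw [integral_div]
        gcongr
        exact h.integral_abs_le
  · filter_upwards [h.ae_abs_le] with x hx
    exact (hle x).trans (by gcongr)

lemma mem_closedBall_of_vortexPiece_ne_zero (h : vortexPiece a z κ w i x ≠ 0) :
    x ∈ closedBall (z i) κ :=
  mem_of_indicator_ne_zero h

lemma mul_eq_mul_vortexPiece_mul (ha : a i ≠ 0) (hw : w x ≠ 0 → ∃ j, x ∈ closedBall (z j) κ)
    {b b' : ℝ} (hi : x ∈ closedBall (z i) κ → b = b')
    (hj : ∀ j ≠ i, x ∈ closedBall (z j) κ → b = 0) :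
    w x * b = a i * (vortexPiece a z κ w i x * b') := by
  by_cases hx : x ∈ closedBall (z i) κ
  · rw [vortexPiece, indicator_of_mem hx, hi hx]
    field_simp
  · rw [vortexPiece, indicator_of_notMem hx, zero_mul, mul_zero]
    by_cases hwx : w x = 0
    · rw [hwx, zero_mul]
    · obtain ⟨j, hxj⟩ := hw hwx
      rw [hj j (fun hji => hx (hji ▸ hxj)) hxj, mul_zero]

namespace SeparatedDiscs

lemma notMem_closedBall (hz : SeparatedDiscs z κ δ) (hij : i ≠ j) (hx : x ∈ closedBall (z j) κ) :
    x ∉ closedBall (z i) κ := fun hxi => by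
  have hsep := hz.gap_le hij
  have htri := dist_triangle_left (z i) (z j) x
  rw [mem_closedBall] at hx hxi
  linarith [hz.gap_pos]

lemma exists_localized_test (hz : SeparatedDiscs z κ δ) (hψ : ContDiff ℝ (⊤ : ℕ∞) ψ) (i : ι) :
    ∃ φ : ℂ → ℝ, ContDiff ℝ (⊤ : ℕ∞) φ ∧ (∀ x ∈ closedBall (z i) κ, φ =ᶠ[𝓝 x] ψ) ∧
      ∀ j ≠ i, ∀ x ∈ closedBall (z j) κ, φ =ᶠ[𝓝 x] 0 := by
  have hδ := hz.gap_pos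
  have hκ := hz.radius_nonneg
  let χ : ContDiffBump (z i) := ⟨κ + δ / 4, κ + δ / 2, by linarith, by linarith⟩
  refine ⟨fun x => χ x * ψ x, χ.contDiff.mul hψ, fun x hx => ?_, fun j hj x hx => ?_⟩
  · have hxlt : dist x (z i) < κ + δ / 4 := by linarith [mem_closedBall.1 hx]
    filter_upwards [isOpen_ball.mem_nhds (mem_ball.2 hxlt)] with y hy
    rw [χ.one_of_mem_closedBall (ball_subset_closedBall hy), one_mul]
  · have hxlt : κ + δ / 2 < dist x (z i) := by
      linarith [mem_closedBall.1 hx, hz.gap_le hj, dist_triangle_left (z j) (z i) x]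
    filter_upwards [(isOpen_lt continuous_const (continuous_id'.dist continuous_const)).mem_nhds
      hxlt] with y hy
    rw [χ.zero_of_le_dist (le_of_lt hy), zero_mul, Pi.zero_apply]

lemma exists_test_momentRate (hz : SeparatedDiscs z κ δ) (hψ : ContDiff ℝ (⊤ : ℕ∞) ψ)
    (ha : a i ≠ 0) :
    ∃ φ : ℂ → ℝ, ContDiff ℝ (⊤ : ℕ∞) φ ∧
      ∀ w : ℂ → ℝ, (∀ x, w x ≠ 0 → ∃ j, x ∈ closedBall (z j) κ) →
        ∫ x, w x * φ x = a i * ∫ x, vortexPiece a z κ w i x * ψ x ∧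
        transportRate w φ = a i * momentRate (vortexPiece a z κ w i) w ψ := by
  obtain ⟨φ, hφ, hφi, hφj⟩ := hz.exists_localized_test hψ i
  refine ⟨φ, hφ, fun w hw => ⟨?_, ?_⟩⟩
  · rw [← integral_const_mul]
    exact integral_congr_ae <| .of_forall fun x => mul_eq_mul_vortexPiece_mul ha (hw x)
      (fun hx => (hφi x hx).eq_of_nhds) fun j hj hx => (hφj j hj x hx).eq_of_nhds
  · rw [transportRate, momentRate, ← integral_const_mul]
    refine integral_congr_ae <| .of_forall fun x => mul_eq_mul_vortexPiece_mul ha (hw x)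
      (fun hx => ?_) fun j hj hx => ?_
    · rw [(hφi x hx).fderiv_eq]
    · rw [(hφj j hj x hx).fderiv_eq, fderiv_zero, Pi.zero_apply, zero_apply]

variable [Fintype ι]

lemma sum_mul_vortexPiece (hz : SeparatedDiscs z κ δ) (ha : ∀ i, a i ≠ 0)
    (hw : w x ≠ 0 → ∃ j, x ∈ closedBall (z j) κ) :
    ∑ i, a i * vortexPiece a z κ w i x = w x := by
  by_cases hx : ∃ j, x ∈ closedBall (z j) κ
  · obtain ⟨j, hj⟩ := hx
    rw [Finset.sum_eq_single j, vortexPiece, indicator_of_mem hj, mul_div_cancel₀ _ (ha j)]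
    · intro i _ hij
      rw [vortexPiece, indicator_of_notMem (hz.notMem_closedBall hij hj), mul_zero]
    · exact fun hj => absurd (Finset.mem_univ j) hj
  · have hwx : w x = 0 := not_not.1 (mt hw hx)
    refine (Finset.sum_eq_zero fun i _ => ?_).trans hwx.symm
    rw [vortexPiece, indicator_of_notMem (fun hi => hx ⟨i, hi⟩), mul_zero]

lemma sum_abs_mul_abs_vortexPiece_le (hz : SeparatedDiscs z κ δ) (ha : ∀ i, a i ≠ 0) :
    ∑ i, |a i| * |vortexPiece a z κ w i x| ≤ |w x| := by
  by_cases hx : ∃ j, x ∈ closedBall (z j) κ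
  · obtain ⟨j, hj⟩ := hx
    rw [Finset.sum_eq_single j, ← abs_mul, vortexPiece, indicator_of_mem hj,
      mul_div_cancel₀ _ (ha j)]
    · intro i _ hij
      rw [vortexPiece, indicator_of_notMem (hz.notMem_closedBall hij hj), abs_zero, mul_zero]
    · exact fun hj => absurd (Finset.mem_univ j) hj
  · refine (Finset.sum_eq_zero fun i _ => ?_).trans_le (abs_nonneg _)
    rw [vortexPiece, indicator_of_notMem (fun hi => hx ⟨i, hi⟩), abs_zero, mul_zero]

end SeparatedDiscs

lemma inducedVelocity_eq_sum [Fintype ι] (h : VorticityBound w M) (hz : SeparatedDiscs z κ δ)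
    (ha : ∀ i, a i ≠ 0) (hw : ∀ x, w x ≠ 0 → ∃ j, x ∈ closedBall (z j) κ) (x : ℂ) :
    inducedVelocity w x = ∑ j, a j • inducedVelocity (vortexPiece a z κ w j) x := by
  simp_rw [inducedVelocity, ← integral_smul]
  rw [← integral_finsetSum _ fun j _ =>
    ((h.vortexPiece a z κ j).integrable_smul_eulerKernel x).1.fun_smul (a j)]
  refine integral_congr_ae <| .of_forall fun y => ?_
  simp_rw [← mul_smul, ← Finset.sum_smul, hz.sum_mul_vortexPiece ha (hw y)]

end Pieces

/-- A confined flow whose vorticity stays in separated discs around the points `z i` and starts as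
a superposition of blobs with intensities `a i`. -/
structure ClusteredFlow {ι : Type*} (w : ℝ → ℂ → ℝ) (T M ρ : ℝ) (G : Set ℝ) (a : ι → ℝ)
    (z : ι → ℂ) (κ δ : ℝ) : Prop extends ConfinedFlow w T M ρ G, SeparatedDiscs z κ δ where
  intensity_ne_zero : ∀ i, a i ≠ 0
  mem_disc : ∀ t ∈ Icc 0 T, ∀ x, w t x ≠ 0 → ∃ i, x ∈ closedBall (z i) κ
  initial_nonneg : ∀ i, ∀ᵐ x, 0 ≤ vortexPiece a z κ (w 0) i x
  initial_integral : ∀ i, ∫ x, vortexPiece a z κ (w 0) i x = 1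

namespace ClusteredFlow

variable {ι : Type*} {w : ℝ → ℂ → ℝ} {T M ρ : ℝ} {G : Set ℝ} {a : ι → ℝ} {z : ι → ℂ} {κ δ t : ℝ}
  {ψ : ℂ → ℝ}

lemma mem_disc_of_mem (hF : ClusteredFlow w T M ρ G a z κ δ) (ht : t ∈ G) :
    ∀ x, w t x ≠ 0 → ∃ i, x ∈ closedBall (z i) κ :=
  hF.mem_disc t (Ico_subset_Icc_self (hF.subset ht))

lemma intervalIntegrable_momentRate (hF : ClusteredFlow w T M ρ G a z κ δ)
    (hψ : ContDiff ℝ (⊤ : ℕ∞) ψ) (i : ι) :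
    IntervalIntegrable (fun s => momentRate (vortexPiece a z κ (w s) i) (w s) ψ) volume 0 T := by
  obtain ⟨φ, hφ, hφw⟩ := hF.exists_test_momentRate hψ (hF.intensity_ne_zero i)
  refine ((hF.intervalIntegrable φ hφ).const_mul (a i)⁻¹).congr fun s hs => ?_
  rw [uIoc_of_le hF.pos.le] at hs
  rw [(hφw (w s) (hF.mem_disc s (Ioc_subset_Icc_self hs))).2,
    inv_mul_cancel_left₀ (hF.intensity_ne_zero i)]

lemma integral_vortexPiece_mul_eq (hF : ClusteredFlow w T M ρ G a z κ δ)
    (hψ : ContDiff ℝ (⊤ : ℕ∞) ψ) (i : ι) (ht : t ∈ G) :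
    ∫ x, vortexPiece a z κ (w t) i x * ψ x = (∫ x, vortexPiece a z κ (w 0) i x * ψ x) +
      ∫ s in (0)..t, momentRate (vortexPiece a z κ (w s) i) (w s) ψ := by
  obtain ⟨φ, hφ, hφw⟩ := hF.exists_test_momentRate hψ (hF.intensity_ne_zero i)
  have hrate : ∫ s in (0)..t, transportRate (w s) φ =
      a i * ∫ s in (0)..t, momentRate (vortexPiece a z κ (w s) i) (w s) ψ := by
    rw [← intervalIntegral.integral_const_mul]
    refine intervalIntegral.integral_congr fun s hs => (hφw (w s) (hF.mem_disc s ?_)).2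
    rw [uIcc_of_le (hF.subset ht).1] at hs
    exact ⟨hs.1, hs.2.trans (hF.subset ht).2.le⟩
  have heq := hF.integral_eq φ hφ t ht
  rw [(hφw (w t) (hF.mem_disc_of_mem ht)).1, (hφw (w 0) (hF.mem_disc_of_mem hF.zero_mem)).1,
    hrate, ← mul_add] at heq
  exact mul_left_cancel₀ (hF.intensity_ne_zero i) heq

lemma integral_vortexPiece (hF : ClusteredFlow w T M ρ G a z κ δ) (i : ι) (ht : t ∈ G) :
    ∫ x, vortexPiece a z κ (w t) i x = 1 := by
  have heq := hF.integral_vortexPiece_mul_eq (ψ := fun _ => 1) contDiff_const i ht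
  simp only [momentRate, fderiv_fun_const, Pi.zero_apply, zero_apply, mul_zero, integral_zero,
    intervalIntegral.integral_zero, mul_one, add_zero] at heq
  rw [heq, hF.initial_integral]

lemma integral_abs_initial_vortexPiece (hF : ClusteredFlow w T M ρ G a z κ δ) (i : ι) :
    ∫ x, |vortexPiece a z κ (w 0) i x| = 1 := by
  rw [← hF.initial_integral i]
  exact integral_congr_ae ((hF.initial_nonneg i).mono fun x hx => abs_of_nonneg hx)

lemma integral_abs_initial_le [Fintype ι] (hF : ClusteredFlow w T M ρ G a z κ δ) :
    ∫ x, |w 0 x| ≤ ∑ i, |a i| := by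
  have hint : ∀ i, Integrable fun x => |a i| * |vortexPiece a z κ (w 0) i x| := fun i =>
    ((hF.bound 0).vortexPiece a z κ i).integrable.abs.const_mul _
  calc ∫ x, |w 0 x| ≤ ∫ x, ∑ i, |a i| * |vortexPiece a z κ (w 0) i x| := by
        refine integral_mono (hF.bound 0).integrable.abs
          (integrable_finsetSum _ fun i _ => hint i) fun x => ?_
        dsimp only
        rw [← hF.sum_mul_vortexPiece hF.intensity_ne_zero (hF.mem_disc_of_mem hF.zero_mem x)]
        simpa only [abs_mul] using Finset.abs_sum_le_sum_abs
          (fun i => a i * vortexPiece a z κ (w 0) i x) Finset.univ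
    _ = ∑ i, |a i| := by
        rw [integral_finsetSum _ fun i _ => hint i]
        simp_rw [integral_const_mul, hF.integral_abs_initial_vortexPiece, mul_one]

lemma sum_abs_mul_integral_abs_le [Fintype ι] (hF : ClusteredFlow w T M ρ G a z κ δ) (ht : t ∈ G) :
    ∑ i, |a i| * ∫ x, |vortexPiece a z κ (w t) i x| ≤ ∑ i, |a i| := by
  have hint : ∀ i, Integrable fun x => |a i| * |vortexPiece a z κ (w t) i x| := fun i =>
    ((hF.bound t).vortexPiece a z κ i).integrable.abs.const_mul _
  simp_rw [← integral_const_mul]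
  rw [← integral_finsetSum _ fun i _ => hint i]
  calc ∫ x, ∑ i, |a i| * |vortexPiece a z κ (w t) i x|
      ≤ ∫ x, |w t x| := integral_mono (integrable_finsetSum _ fun i _ => hint i)
        (hF.bound t).integrable.abs fun x =>
          hF.sum_abs_mul_abs_vortexPiece_le hF.intensity_ne_zero
    _ ≤ ∑ i, |a i| := (hF.integral_abs_le t ht).trans hF.integral_abs_initial_le

-- Each piece keeps its mass while the total variation cannot grow, so no piece changes sign.
lemma vortexPiece_nonneg [Finite ι] (hF : ClusteredFlow w T M ρ G a z κ δ) (ht : t ∈ G) (i : ι) :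
    ∀ᵐ x, 0 ≤ vortexPiece a z κ (w t) i x := by
  have := Fintype.ofFinite ι
  have hint := fun j => ((hF.bound t).vortexPiece a z κ j).integrable
  have hone : ∀ j, 1 ≤ ∫ x, |vortexPiece a z κ (w t) j x| := fun j => by
    rw [← hF.integral_vortexPiece j ht]
    exact integral_mono (hint j) (hint j).abs fun x => le_abs_self _
  have hmul : ∀ j, |a j| ≤ |a j| * ∫ x, |vortexPiece a z κ (w t) j x| := fun j =>
    le_mul_of_one_le_right (abs_nonneg _) (hone j)
  have hmul_eq : |a i| = |a i| * ∫ x, |vortexPiece a z κ (w t) i x| :=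
    (Finset.sum_eq_sum_iff_of_le fun j _ => hmul j).1
      ((Finset.sum_le_sum fun j _ => hmul j).antisymm (hF.sum_abs_mul_integral_abs_le ht)) i
      (Finset.mem_univ i)
  have habs : ∫ x, |vortexPiece a z κ (w t) i x| = 1 :=
    (left_eq_mul₀ (abs_pos.2 (hF.intensity_ne_zero i)).ne').1 hmul_eq
  have hzero : ∫ x, (|vortexPiece a z κ (w t) i x| - vortexPiece a z κ (w t) i x) = 0 := by
    rw [integral_sub (hint i).abs (hint i), habs, hF.integral_vortexPiece i ht, sub_self]
  rw [integral_eq_zero_iff_of_nonneg (fun x => sub_nonneg.2 (le_abs_self _))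
    ((hint i).abs.sub' (hint i))] at hzero
  filter_upwards [hzero] with x hx
  exact abs_eq_self.1 (sub_eq_zero.1 hx)

theorem vortexBlob [Finite ι] (hF : ClusteredFlow w T M ρ G a z κ δ) (ht : t ∈ G) (i : ι) :
    VortexBlob (vortexPiece a z κ (w t) i) (M / |a i|) (z i) κ :=
  ⟨(hF.bound t).vortexPiece a z κ i, hF.vortexPiece_nonneg ht i, hF.integral_vortexPiece i ht,
    fun _ => mem_closedBall_of_vortexPiece_ne_zero⟩

end ClusteredFlow

/-! ### Centres and dispersion of the vortices along the flow -/

lemma le_mul_exp_of_ae_hasDerivAt_le {f : ℝ → ℝ} {K T : ℝ} (hT : 0 ≤ T)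
    (hf : AbsolutelyContinuousOnInterval f 0 T)
    (hf' : ∀ᵐ t, t ∈ Ioo 0 T → ∃ v ≤ K * f t, HasDerivAt f v t) :
    f T ≤ f 0 * Real.exp (K * T) := by
  set g : ℝ → ℝ := fun t => Real.exp (-(K * t)) * f t with hg
  have hexp : AbsolutelyContinuousOnInterval (fun t => Real.exp (-(K * t))) 0 T :=
    ContDiff.contDiffOn (by fun_prop) |>.absolutelyContinuousOnInterval
  have hgT : g T ≤ g 0 := by
    rw [← sub_nonpos, ← (hexp.fun_mul hf).integral_deriv_eq_sub,
      intervalIntegral.integral_of_le hT, ← restrict_Ioo_eq_restrict_Ioc]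
    refine integral_nonpos_of_ae ?_
    filter_upwards [(ae_restrict_iff' measurableSet_Ioo).2 hf'] with t ⟨v, hvle, hv⟩
    have hderiv := ((((hasDerivAt_id' t).const_mul K).fun_neg).exp.fun_mul hv).deriv
    rw [hderiv]
    have := mul_le_mul_of_nonneg_left hvle (Real.exp_nonneg (-(K * t)))
    simp only [Pi.zero_apply]
    linarith
  calc f T = g T * Real.exp (K * T) := by
        rw [hg, mul_right_comm, ← Real.exp_add, neg_add_cancel, Real.exp_zero, one_mul]
    _ ≤ g 0 * Real.exp (K * T) := by gcongr
    _ = f 0 * Real.exp (K * T) := by simp [hg]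

lemma absolutelyContinuousOnInterval_sum {ι : Type*} {s : Finset ι} {f : ι → ℝ → ℝ} {a b : ℝ}
    (hf : ∀ i ∈ s, AbsolutelyContinuousOnInterval (f i) a b) :
    AbsolutelyContinuousOnInterval (fun t => ∑ i ∈ s, f i t) a b := by
  have hzero : AbsolutelyContinuousOnInterval (0 : ℝ → ℝ) a b :=
    (LipschitzWith.const 0).lipschitzOnWith.absolutelyContinuousOnInterval
  rw [← Finset.sum_fn]
  exact Finset.sum_induction f (AbsolutelyContinuousOnInterval · a b) (fun _ _ => .add) hzero hf

section Paths

variable {ι : Type*} {w : ℝ → ℂ → ℝ} {T M ρ : ℝ} {G : Set ℝ} {a : ι → ℝ} {z : ι → ℂ} {κ δ A t : ℝ}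
  {ψ : ℂ → ℝ}

/-- The absolutely continuous function of time that agrees at good times with the integral of `ψ`
against the `i`-th vortex. -/
noncomputable def momentPath (a : ι → ℝ) (z : ι → ℂ) (κ : ℝ) (w : ℝ → ℂ → ℝ) (ψ : ℂ → ℝ) (i : ι)
    (t : ℝ) : ℝ :=
  (∫ x, vortexPiece a z κ (w 0) i x * ψ x) +
    ∫ s in (0)..t, momentRate (vortexPiece a z κ (w s) i) (w s) ψ

/-- The continuous path of the centre of mass of the `i`-th vortex. -/
noncomputable def centerPath (a : ι → ℝ) (z : ι → ℂ) (κ : ℝ) (w : ℝ → ℂ → ℝ) (i : ι) (t : ℝ) : ℂ :=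
  ⟨momentPath a z κ w re i t, momentPath a z κ w im i t⟩

/-- The total dispersion of the vortices, as a continuous function of time. -/
noncomputable def dispersionPath [Fintype ι] (a : ι → ℝ) (z : ι → ℂ) (κ : ℝ) (w : ℝ → ℂ → ℝ)
    (t : ℝ) : ℝ :=
  ∑ i, (momentPath a z κ w (fun x => ‖x‖ ^ 2) i t - ‖centerPath a z κ w i t‖ ^ 2)

lemma contDiff_re : ContDiff ℝ (⊤ : ℕ∞) re := reCLM.contDiff

lemma contDiff_im : ContDiff ℝ (⊤ : ℕ∞) im := imCLM.contDiff

namespace ClusteredFlow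

lemma momentPath_eq (hF : ClusteredFlow w T M ρ G a z κ δ) (hψ : ContDiff ℝ (⊤ : ℕ∞) ψ) (i : ι)
    (ht : t ∈ G) : momentPath a z κ w ψ i t = ∫ x, vortexPiece a z κ (w t) i x * ψ x :=
  (hF.integral_vortexPiece_mul_eq hψ i ht).symm

lemma absolutelyContinuousOnInterval_momentPath (hF : ClusteredFlow w T M ρ G a z κ δ)
    (hψ : ContDiff ℝ (⊤ : ℕ∞) ψ) (i : ι) :
    AbsolutelyContinuousOnInterval (momentPath a z κ w ψ i) 0 T :=
  (LipschitzWith.const _).lipschitzOnWith.absolutelyContinuousOnInterval.fun_add <|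
    (hF.intervalIntegrable_momentRate hψ i).absolutelyContinuousOnInterval_intervalIntegral
      left_mem_uIcc

lemma ae_hasDerivAt_momentPath (hF : ClusteredFlow w T M ρ G a z κ δ)
    (hψ : ContDiff ℝ (⊤ : ℕ∞) ψ) (i : ι) :
    ∀ᵐ t, t ∈ Ioo 0 T → HasDerivAt (momentPath a z κ w ψ i)
      (momentRate (vortexPiece a z κ (w t) i) (w t) ψ) t := by
  filter_upwards [(hF.intervalIntegrable_momentRate hψ i).ae_hasDerivAt_integral] with t ht htT
  refine (ht ?_ 0 left_mem_uIcc).const_add _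
  rw [uIcc_of_le hF.pos.le]
  exact Ioo_subset_Icc_self htT

lemma centerPath_eq_barycenter [Finite ι] (hF : ClusteredFlow w T M ρ G a z κ δ) (i : ι)
    (ht : t ∈ G) : centerPath a z κ w i t = barycenter (vortexPiece a z κ (w t) i) := by
  have hint := (hF.vortexBlob ht i).integrable_smul continuous_id'
  apply Complex.ext
  · rw [barycenter, ← reCLM_apply (∫ x, _), ← reCLM.integral_comp_comm hint, centerPath,
      hF.momentPath_eq contDiff_re i ht]
    simp only [reCLM_apply, smul_re, smul_eq_mul]
  · rw [barycenter, ← imCLM_apply (∫ x, _), ← imCLM.integral_comp_comm hint, centerPath,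
      hF.momentPath_eq contDiff_im i ht]
    simp only [imCLM_apply, smul_im, smul_eq_mul]

lemma dispersionPath_eq_sum_dispersion [Fintype ι] (hF : ClusteredFlow w T M ρ G a z κ δ)
    (ht : t ∈ G) :
    dispersionPath a z κ w t = ∑ i, dispersion (vortexPiece a z κ (w t) i) :=
  Finset.sum_congr rfl fun i _ => by
    rw [(hF.vortexBlob ht i).dispersion_eq, hF.centerPath_eq_barycenter i ht,
      hF.momentPath_eq (contDiff_norm_sq ℝ) i ht]

lemma ae_hasDerivAt_centerPath [Finite ι] (hF : ClusteredFlow w T M ρ G a z κ δ) (i : ι) :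
    ∀ᵐ t, t ∈ Ioo 0 T → HasDerivAt (centerPath a z κ w i)
      (∫ x, vortexPiece a z κ (w t) i x • inducedVelocity (w t) x) t := by
  filter_upwards [hF.ae_mem, hF.ae_hasDerivAt_momentPath contDiff_re i,
    hF.ae_hasDerivAt_momentPath contDiff_im i] with t htG hre him htT
  have hint := (hF.vortexBlob (htG htT) i).integrable_smul_inducedVelocity (hF.bound t)
  have hre_eq : momentRate (vortexPiece a z κ (w t) i) (w t) re =
      (∫ x, vortexPiece a z κ (w t) i x • inducedVelocity (w t) x).re := by
    rw [← reCLM_apply (∫ x, _), ← reCLM.integral_comp_comm hint, momentRate]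
    exact integral_congr_ae <| .of_forall fun x => by
      dsimp only
      rw [show (re : ℂ → ℝ) = reCLM from rfl, reCLM.fderiv, map_smul, smul_eq_mul]
  have him_eq : momentRate (vortexPiece a z κ (w t) i) (w t) im =
      (∫ x, vortexPiece a z κ (w t) i x • inducedVelocity (w t) x).im := by
    rw [← imCLM_apply (∫ x, _), ← imCLM.integral_comp_comm hint, momentRate]
    exact integral_congr_ae <| .of_forall fun x => by
      dsimp only
      rw [show (im : ℂ → ℝ) = imCLM from rfl, imCLM.fderiv, map_smul, smul_eq_mul]
  have hpair := ((hre htT).prodMk (him htT))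
  have := (equivRealProdCLM.symm.hasFDerivAt).comp_hasDerivAt t hpair
  rw [hre_eq, him_eq] at this
  exact this

lemma ae_hasDerivAt_dispersionPath [Fintype ι] (hF : ClusteredFlow w T M ρ G a z κ δ) :
    ∀ᵐ t, t ∈ Ioo 0 T → HasDerivAt (dispersionPath a z κ w)
      (2 * ∑ i, ∫ x, vortexPiece a z κ (w t) i x *
        inner ℝ (x - barycenter (vortexPiece a z κ (w t) i)) (inducedVelocity (w t) x)) t := by
  filter_upwards [hF.ae_mem, eventually_countable_forall.2 hF.ae_hasDerivAt_centerPath,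
    eventually_countable_forall.2 (hF.ae_hasDerivAt_momentPath (contDiff_norm_sq ℝ))]
    with t htG hcenter hsq htT
  rw [Finset.mul_sum]
  refine HasDerivAt.fun_sum fun i _ => ((hsq i htT).sub (hcenter i htT).norm_sq).congr_deriv ?_
  have hm := hF.vortexBlob (htG htT) i
  have hu := hF.bound t
  simp_rw [momentRate, fderiv_norm_sq_apply, hF.centerPath_eq_barycenter i (htG htT),
    inner_sub_left, mul_sub, smul_apply, innerSL_apply_apply, nsmul_eq_mul, Nat.cast_ofNat,
    mul_left_comm _ (2 : ℝ), integral_const_mul]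
  rw [integral_sub (hm.integrable_mul_inner_inducedVelocity hu continuous_id')
    (hm.integrable_mul_inner_inducedVelocity hu continuous_const), mul_sub,
    ← integral_inner (hm.integrable_smul_inducedVelocity hu)]
  simp_rw [inner_smul_right]

lemma absolutelyContinuousOnInterval_dispersionPath [Fintype ι]
    (hF : ClusteredFlow w T M ρ G a z κ δ) :
    AbsolutelyContinuousOnInterval (dispersionPath a z κ w) 0 T := by
  have hre := hF.absolutelyContinuousOnInterval_momentPath contDiff_re
  have him := hF.absolutelyContinuousOnInterval_momentPath contDiff_im
  have hsq := hF.absolutelyContinuousOnInterval_momentPath (contDiff_norm_sq ℝ)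
  have hnorm : ∀ i, AbsolutelyContinuousOnInterval (fun t => ‖centerPath a z κ w i t‖ ^ 2) 0 T :=
    fun i => by
      simp_rw [Complex.sq_norm, centerPath, normSq_mk]
      exact ((hre i).fun_mul (hre i)).fun_add ((him i).fun_mul (him i))
  exact absolutelyContinuousOnInterval_sum fun i _ => (hsq i).fun_sub (hnorm i)

lemma dispersionPath_le [Fintype ι] (hF : ClusteredFlow w T M ρ G a z κ δ)
    (hA : ∀ i, |a i| ≤ A) (ht : t ∈ Icc 0 T) :
    dispersionPath a z κ w t ≤ dispersionPath a z κ w 0 *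
      Real.exp (2 * interactionRate (Fintype.card ι) A δ * t) := by
  refine le_mul_exp_of_ae_hasDerivAt_le ht.1
    (hF.absolutelyContinuousOnInterval_dispersionPath.mono ?_) ?_
  · rw [uIcc_of_le ht.1, uIcc_of_le hF.pos.le]
    exact Icc_subset_Icc_right ht.2
  · filter_upwards [hF.ae_mem, hF.ae_hasDerivAt_dispersionPath] with s hsG hs hst
    have hsT : s ∈ Ioo 0 T := ⟨hst.1, hst.2.trans_le ht.2⟩
    refine ⟨_, ?_, hs hsT⟩
    rw [hF.dispersionPath_eq_sum_dispersion (hsG hsT), mul_assoc]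
    simp_rw [inducedVelocity_eq_sum (hF.bound s) hF.toSeparatedDiscs hF.intensity_ne_zero
      (hF.mem_disc_of_mem (hsG hsT))]
    gcongr
    exact sum_integral_mul_inner_sum_inducedVelocity_le (hF.vortexBlob (hsG hsT)) hF.gap_pos
      hF.gap_le hA

theorem ae_hasDerivAt_centerPath_norm_sub_le [Fintype ι] [DecidableEq ι]
    (hF : ClusteredFlow w T M ρ G a z κ δ) (hA : ∀ i, |a i| ≤ A) (i : ι) :
    ∀ᵐ t, t ∈ Ioo 0 T → ∃ v, HasDerivAt (centerPath a z κ w i) v t ∧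
      ‖v - pointVortexVelocity a (fun j => centerPath a z κ w j t) i‖ ≤
        interactionRate (Fintype.card ι) A δ *
          √((∑ j, dispersion (vortexPiece a z κ (w 0) j)) *
            Real.exp (2 * interactionRate (Fintype.card ι) A δ * T)) := by
  filter_upwards [hF.ae_mem, hF.ae_hasDerivAt_centerPath i] with t htG ht htT
  have hA0 : 0 ≤ A := (abs_nonneg _).trans (hA i)
  have hrate : 0 ≤ interactionRate (Fintype.card ι) A δ := by
    unfold interactionRate
    positivity
  refine ⟨_, ht htT, ?_⟩
  simp_rw [inducedVelocity_eq_sum (hF.bound t) hF.toSeparatedDiscs hF.intensity_ne_zero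
    (hF.mem_disc_of_mem (htG htT)), hF.centerPath_eq_barycenter _ (htG htT)]
  refine (norm_integral_smul_sum_inducedVelocity_sub_le (hF.vortexBlob (htG htT)) hF.gap_pos
    hF.gap_le hA i).trans ?_
  gcongr
  rw [← hF.dispersionPath_eq_sum_dispersion (htG htT),
    ← hF.dispersionPath_eq_sum_dispersion hF.zero_mem]
  refine (hF.dispersionPath_le hA (Ioo_subset_Icc_self htT)).trans ?_
  gcongr
  · rw [hF.dispersionPath_eq_sum_dispersion hF.zero_mem]
    exact Finset.sum_nonneg fun j _ => (hF.vortexBlob hF.zero_mem j).dispersion_nonneg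
  · exact htT.2.le

end ClusteredFlow

end Paths

/-! ### Instability of three collinear vortices -/

/-- The curves `b i` stay in the discs of radius `κ` around `z i` on `[0, T]` and solve there the
point-vortex system up to an error `η` in the velocity. -/
structure ApproxVortexOrbit {ι : Type*} [Fintype ι] [DecidableEq ι] (a : ι → ℝ) (z : ι → ℂ)
    (κ T η : ℝ) (b : ι → ℝ → ℂ) : Prop where
  re_absolutelyContinuous : ∀ i, AbsolutelyContinuousOnInterval (fun t => (b i t).re) 0 T
  im_absolutelyContinuous : ∀ i, AbsolutelyContinuousOnInterval (fun t => (b i t).im) 0 T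
  mem_closedBall : ∀ i, ∀ t ∈ Icc 0 T, b i t ∈ closedBall (z i) κ
  ae_hasDerivAt : ∀ i, ∀ᵐ t, t ∈ Ioo 0 T →
    ∃ v, HasDerivAt (b i) v t ∧ ‖v - pointVortexVelocity a (fun j => b j t) i‖ ≤ η

lemma ApproxVortexOrbit.mono {ι : Type*} [Fintype ι] [DecidableEq ι] {a : ι → ℝ} {z : ι → ℂ}
    {κ T η η' : ℝ} {b : ι → ℝ → ℂ} (hb : ApproxVortexOrbit a z κ T η b) (h : η ≤ η') :
    ApproxVortexOrbit a z κ T η' b :=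
  { hb with
    ae_hasDerivAt := fun i => (hb.ae_hasDerivAt i).mono fun _ ht htT =>
      have ⟨v, hv, hle⟩ := ht htT
      ⟨v, hv, hle.trans h⟩ }

lemma ClusteredFlow.centerPath_mem_closedBall {ι : Type*} [Finite ι] {w : ℝ → ℂ → ℝ}
    {T M ρ : ℝ} {G : Set ℝ} {a : ι → ℝ} {z : ι → ℂ} {κ δ t : ℝ}
    (hF : ClusteredFlow w T M ρ G a z κ δ) (i : ι) (ht : t ∈ Icc 0 T) :
    centerPath a z κ w i t ∈ closedBall (z i) κ := by
  have hcont : ContinuousOn (centerPath a z κ w i) (Icc 0 T) := by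
    rw [← uIcc_of_le hF.pos.le]
    exact equivRealProdCLM.symm.continuous.comp_continuousOn <|
      (hF.absolutelyContinuousOnInterval_momentPath contDiff_re i).continuousOn.prodMk
        (hF.absolutelyContinuousOnInterval_momentPath contDiff_im i).continuousOn
  set S := Ioo 0 T ∩ {s | s ∈ Ioo 0 T → s ∈ G}
  have hwithin : ContinuousWithinAt (centerPath a z κ w i) S t :=
    (hcont t ht).mono (inter_subset_left.trans Ioo_subset_Icc_self)
  have hclosure : t ∈ closure S := by
    rw [← closure_Ioo hF.pos.ne] at ht
    exact closure_minimal ((Measure.dense_of_ae hF.ae_mem).open_subset_closure_inter isOpen_Ioo)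
      isClosed_closure ht
  have hmaps : MapsTo (centerPath a z κ w i) S (closedBall (z i) κ) := fun s hs => by
    rw [hF.centerPath_eq_barycenter i (hs.2 hs.1)]
    exact (hF.vortexBlob (hs.2 hs.1) i).barycenter_mem_closedBall
  exact isClosed_closedBall.closure_subset (hwithin.mem_closure hclosure hmaps)

theorem ClusteredFlow.approxVortexOrbit {ι : Type*} [Fintype ι] [DecidableEq ι] {w : ℝ → ℂ → ℝ}
    {T M ρ : ℝ} {G : Set ℝ} {a : ι → ℝ} {z : ι → ℂ} {κ δ A : ℝ}
    (hF : ClusteredFlow w T M ρ G a z κ δ) (hA : ∀ i, |a i| ≤ A) :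
    ApproxVortexOrbit a z κ T (interactionRate (Fintype.card ι) A δ *
      √((∑ j, dispersion (vortexPiece a z κ (w 0) j)) *
        Real.exp (2 * interactionRate (Fintype.card ι) A δ * T))) (centerPath a z κ w) where
  re_absolutelyContinuous := hF.absolutelyContinuousOnInterval_momentPath contDiff_re
  im_absolutelyContinuous := hF.absolutelyContinuousOnInterval_momentPath contDiff_im
  mem_closedBall i _ := hF.centerPath_mem_closedBall i
  ae_hasDerivAt := hF.ae_hasDerivAt_centerPath_norm_sub_le hA

section Collinear

/-- The positions of the unstable stationary configuration. -/
def collinearCenters : Fin 3 → ℂ := ![-1, 0, 1]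

/-- The intensities of the unstable stationary configuration. -/
noncomputable def collinearIntensities : Fin 3 → ℝ := ![1, -1 / 2, 1]

/-- The displacement of the middle vortex from the midpoint of the outer ones; it spans the
unstable direction of the configuration. -/
noncomputable def middleDisplacement (b : Fin 3 → ℂ) : ℂ := b 1 - (b 0 + b 2) / 2

lemma pointVortexVelocity_collinearIntensities (b : Fin 3 → ℂ) (i : Fin 3) :
    pointVortexVelocity collinearIntensities b i = ((1 / (2 * Real.pi) : ℝ) : ℂ) *
      (I / conj (b i - b 0) - I / conj (b i - b 1) / 2 + I / conj (b i - b 2)) := by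
  have hself : collinearIntensities i • eulerKernel (b i) (b i) = 0 := by
    simp [eulerKernel_eq_div_conj]
  rw [pointVortexVelocity,
    Finset.sum_erase (f := fun j => collinearIntensities j • eulerKernel (b i) (b j)) _ hself,
    Fin.sum_univ_three]
  simp only [eulerKernel_eq_div_conj, collinearIntensities, Matrix.cons_val, real_smul]
  push_cast
  ring

lemma pointVortexVelocity_collinearCenters (i : Fin 3) :
    pointVortexVelocity collinearIntensities collinearCenters i = 0 := by
  rw [pointVortexVelocity_collinearIntensities]
  refine mul_eq_zero_of_right _ ?_
  fin_cases i <;> simp [collinearCenters] <;> norm_num <;> ring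

lemma middleDisplacement_pointVortexVelocity {b : Fin 3 → ℂ} (h₀ : b 1 ≠ b 0) (h₂ : b 1 ≠ b 2) :
    middleDisplacement (pointVortexVelocity collinearIntensities b) =
      (3 / (4 * Real.pi) : ℝ) *
        (I * conj (middleDisplacement b / ((b 1 - b 0) * (b 1 - b 2)))) := by
  have hp : conj (b 1) - conj (b 0) ≠ 0 := by
    rw [← map_sub]; exact (map_ne_zero _).2 (sub_ne_zero.2 h₀)
  have hq : conj (b 1) - conj (b 2) ≠ 0 := by
    rw [← map_sub]; exact (map_ne_zero _).2 (sub_ne_zero.2 h₂)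
  have hp' : conj (b 0) - conj (b 1) = -(conj (b 1) - conj (b 0)) := by ring
  have hq' : conj (b 2) - conj (b 1) = -(conj (b 1) - conj (b 2)) := by ring
  have hr : conj (b 2) - conj (b 0) = -(conj (b 0) - conj (b 2)) := by ring
  simp only [middleDisplacement, pointVortexVelocity_collinearIntensities, map_div₀, map_mul,
    map_sub, map_add, sub_self, map_zero, div_zero, map_ofNat, hp', hq', hr, div_neg]
  push_cast
  have hpi : (Real.pi : ℂ) ≠ 0 := ofReal_ne_zero.2 Real.pi_ne_zero
  field_simp
  ring

variable {b : Fin 3 → ℂ} {κ : ℝ}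

lemma norm_middleDisplacement_le {c : Fin 3 → ℂ} (h : ∀ i, ‖c i‖ ≤ κ) :
    ‖middleDisplacement c‖ ≤ 2 * κ := by
  have htri := norm_sub_le (c 1) ((c 0 + c 2) / 2)
  have htri' := norm_add_le (c 0) (c 2)
  rw [norm_div, norm_ofNat] at htri
  rw [middleDisplacement]
  linarith [h 0, h 1, h 2]

lemma norm_middleDisplacement_le_of_mem (hb : ∀ i, b i ∈ closedBall (collinearCenters i) κ) :
    ‖middleDisplacement b‖ ≤ 2 * κ := by
  have heq : middleDisplacement b = middleDisplacement fun i => b i - collinearCenters i := by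
    simp [middleDisplacement, collinearCenters]
  rw [heq]
  exact norm_middleDisplacement_le fun i => mem_closedBall_iff_norm.1 (hb i)

lemma norm_mul_add_one_le {u v : ℂ} (hκ : κ ≤ 1 / 10) (hu : ‖u - 1‖ ≤ 2 * κ)
    (hv : ‖v + 1‖ ≤ 2 * κ) : ‖u * v + 1‖ ≤ 5 * κ := by
  have heq : u * v + 1 = (v + 1) - (u - 1) + (u - 1) * (v + 1) := by ring
  have hmul : ‖(u - 1) * (v + 1)‖ ≤ 2 * κ * (2 * κ) := by
    rw [norm_mul]
    exact mul_le_mul hu hv (norm_nonneg _) ((norm_nonneg _).trans hu)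
  rw [heq]
  have := norm_add_le ((v + 1) - (u - 1)) ((u - 1) * (v + 1))
  have := norm_sub_le (v + 1) (u - 1)
  nlinarith [norm_nonneg (u - 1)]

lemma re_inv_le_of_norm_add_one_le {s : ℂ} {σ : ℝ} (hσ : σ ≤ 1 / 2) (hs : ‖s + 1‖ ≤ σ) :
    (s⁻¹).re ≤ -(1 - 2 * σ) := by
  have hnorm : 1 / 2 ≤ ‖s‖ := by
    have := norm_add_le (s + 1) (-s)
    rw [add_neg_cancel_comm, norm_one, norm_neg] at this
    linarith
  have hs0 : s ≠ 0 := norm_pos_iff.1 (by linarith)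
  have hle : ‖s⁻¹ + 1‖ ≤ 2 * σ := by
    have heq : s⁻¹ + 1 = (s + 1) / s := by rw [add_div, div_self hs0, one_div, add_comm]
    rw [heq, norm_div, div_le_iff₀ (norm_pos_iff.2 hs0)]
    nlinarith [norm_nonneg (s + 1)]
  have hre := (re_le_norm (s⁻¹ + 1)).trans hle
  rw [add_re, one_re] at hre
  linarith

lemma re_inv_gaps_le (hκ : κ ≤ 1 / 10)
    (hb : ∀ i, b i ∈ closedBall (collinearCenters i) κ) :
    (((b 1 - b 0) * (b 1 - b 2))⁻¹).re ≤ -(1 - 10 * κ) := by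
  have hdist : ∀ i, ‖b i - collinearCenters i‖ ≤ κ := fun i => mem_closedBall_iff_norm.1 (hb i)
  have hgap : ∀ i, ‖b 1 - b i - (collinearCenters 1 - collinearCenters i)‖ ≤ 2 * κ := fun i => by
    rw [sub_sub_sub_comm, two_mul]
    exact norm_sub_le_of_le (hdist 1) (hdist i)
  have hle := re_inv_le_of_norm_add_one_le (by linarith) <| norm_mul_add_one_le hκ
    (by simpa [collinearCenters] using hgap 0) (by simpa [collinearCenters] using hgap 2)
  linarith

end Collinear

section Instability

/-- A lower bound for the growth rate of `-Im D²`, where `D` is the middle displacement, while the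
vortices remain within `κ` of the collinear configuration. -/
noncomputable def growthRate (κ : ℝ) : ℝ := 3 / (2 * Real.pi) * (1 - 10 * κ)

lemma middleDisplacement_sub (b c : Fin 3 → ℂ) :
    middleDisplacement (b - c) = middleDisplacement b - middleDisplacement c := by
  simp only [middleDisplacement, Pi.sub_apply]
  ring

lemma growthRate_pos {κ : ℝ} (hκ : κ < 1 / 10) : 0 < growthRate κ :=
  mul_pos (by positivity) (by linarith)

lemma gaps_ne_zero {b : Fin 3 → ℂ} {κ : ℝ} (hκ : κ < 1 / 10)
    (hb : ∀ i, b i ∈ closedBall (collinearCenters i) κ) : (b 1 - b 0) * (b 1 - b 2) ≠ 0 := by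
  intro h
  have := re_inv_gaps_le hκ.le hb
  rw [h, inv_zero, zero_re] at this
  linarith

lemma growthRate_mul_le_of_pointVortexVelocity {b : Fin 3 → ℂ} {κ : ℝ} (hκ : κ < 1 / 10)
    (hb : ∀ i, b i ∈ closedBall (collinearCenters i) κ) :
    growthRate κ * -(middleDisplacement b ^ 2).im ≤ -(2 * (middleDisplacement b *
      middleDisplacement (pointVortexVelocity collinearIntensities b))).im := by
  obtain ⟨h₀, h₂⟩ := mul_ne_zero_iff.1 (gaps_ne_zero hκ hb)
  set D := middleDisplacement b
  set s := (b 1 - b 0) * (b 1 - b 2) with hs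
  have hvelocity : -(2 * (D * middleDisplacement (pointVortexVelocity collinearIntensities b))).im =
      3 / (2 * Real.pi) * (‖D‖ ^ 2 * -(s⁻¹).re) := by
    have hprod : 2 * (D * middleDisplacement (pointVortexVelocity collinearIntensities b)) =
        ((3 / (2 * Real.pi) * ‖D‖ ^ 2 : ℝ) : ℂ) * (I * conj s⁻¹) := by
      rw [middleDisplacement_pointVortexVelocity (sub_ne_zero.1 h₀) (sub_ne_zero.1 h₂), ← hs,
        div_eq_mul_inv D, map_mul, ofReal_mul (3 / (2 * Real.pi)), ofReal_pow, ← mul_conj']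
      push_cast
      ring
    rw [hprod, im_ofReal_mul, I_mul_im, conj_re]
    ring
  have hle : -(D ^ 2).im ≤ ‖D‖ ^ 2 := by
    rw [← norm_pow]
    exact (neg_le_abs _).trans (abs_im_le_norm _)
  calc growthRate κ * -(D ^ 2).im ≤ growthRate κ * ‖D‖ ^ 2 := by
        gcongr
        exact (growthRate_pos hκ).le
    _ = 3 / (2 * Real.pi) * (‖D‖ ^ 2 * (1 - 10 * κ)) := by rw [growthRate]; ring
    _ ≤ 3 / (2 * Real.pi) * (‖D‖ ^ 2 * -(s⁻¹).re) := by
        gcongr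
        linarith [re_inv_gaps_le hκ.le hb]
    _ = _ := hvelocity.symm

lemma growthRate_mul_sub_le {b v : Fin 3 → ℂ} {κ η : ℝ} (hκ : κ < 1 / 10)
    (hb : ∀ i, b i ∈ closedBall (collinearCenters i) κ)
    (hv : ∀ i, ‖v i - pointVortexVelocity collinearIntensities b i‖ ≤ η) :
    growthRate κ * -(middleDisplacement b ^ 2).im - η ≤
      -(2 * (middleDisplacement b * middleDisplacement v)).im := by
  have hmain := growthRate_mul_le_of_pointVortexVelocity hκ hb
  set D := middleDisplacement b
  set V := pointVortexVelocity collinearIntensities b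
  have herr : |(2 * (D * middleDisplacement (v - V))).im| ≤ η := by
    refine (abs_im_le_norm _).trans ?_
    rw [norm_mul, norm_mul, norm_ofNat]
    have hη : ‖middleDisplacement (v - V)‖ ≤ 2 * η := norm_middleDisplacement_le hv
    have hD : ‖D‖ ≤ 1 / 4 := (norm_middleDisplacement_le_of_mem hb).trans (by linarith)
    nlinarith [norm_nonneg D, norm_nonneg (middleDisplacement (v - V))]
  rw [middleDisplacement_sub, mul_sub, mul_sub, sub_im] at herr
  linarith [(abs_le.1 herr).2]

namespace ApproxVortexOrbit

variable {κ T η : ℝ} {b : Fin 3 → ℝ → ℂ}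

lemma absolutelyContinuousOnInterval_im_middleDisplacement_sq {z : Fin 3 → ℂ} {a : Fin 3 → ℝ}
    (hb : ApproxVortexOrbit a z κ T η b) :
    AbsolutelyContinuousOnInterval (fun t => (middleDisplacement (fun i => b i t) ^ 2).im) 0 T := by
  have hre := (hb.re_absolutelyContinuous 1).sub <|
    ((hb.re_absolutelyContinuous 0).add (hb.re_absolutelyContinuous 2)).const_mul (1 / 2)
  have him := (hb.im_absolutelyContinuous 1).sub <|
    ((hb.im_absolutelyContinuous 0).add (hb.im_absolutelyContinuous 2)).const_mul (1 / 2)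
  convert (hre.mul him).const_mul 2 using 2 with t
  simp [middleDisplacement, sq]
  ring

lemma ae_hasDerivAt_im_middleDisplacement_sq
    (hb : ApproxVortexOrbit collinearIntensities collinearCenters κ T η b) (hκ : κ < 1 / 10) :
    ∀ᵐ t, t ∈ Ioo 0 T → ∃ d,
      HasDerivAt (fun s => (middleDisplacement (fun i => b i s) ^ 2).im) d t ∧
        growthRate κ * -(middleDisplacement (fun i => b i t) ^ 2).im - η ≤ -d := by
  filter_upwards [ae_all_iff.2 hb.ae_hasDerivAt] with t ht htT
  choose v hv hle using fun i => ht i htT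
  have hD : HasDerivAt (fun s => middleDisplacement fun i => b i s) (middleDisplacement v) t :=
    (hv 1).sub (((hv 0).add (hv 2)).div_const 2)
  refine ⟨_, imCLM.hasFDerivAt.comp_hasDerivAt t (hD.pow 2), ?_⟩
  convert growthRate_mul_sub_le hκ (fun i => hb.mem_closedBall i t (Ioo_subset_Icc_self htT)) hle
    using 3
  simp [mul_assoc]

theorem exp_growthRate_mul_le
    (hb : ApproxVortexOrbit collinearIntensities collinearCenters κ T η b) (hT : 0 ≤ T)
    (hη : 0 ≤ η) (hκ : κ < 1 / 10) :
    (-(middleDisplacement (fun i => b i 0) ^ 2).im - η / growthRate κ) *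
      Real.exp (growthRate κ * T) ≤ (2 * κ) ^ 2 := by
  have hμ := growthRate_pos hκ
  set h : ℝ → ℝ := fun t => (middleDisplacement (fun i => b i t) ^ 2).im
  have hgronwall : h T + η / growthRate κ ≤
      (h 0 + η / growthRate κ) * Real.exp (growthRate κ * T) := by
    refine le_mul_exp_of_ae_hasDerivAt_le (f := fun t => h t + η / growthRate κ) hT
      (hb.absolutelyContinuousOnInterval_im_middleDisplacement_sq.add
        (LipschitzWith.const _).lipschitzOnWith.absolutelyContinuousOnInterval) ?_
    filter_upwards [hb.ae_hasDerivAt_im_middleDisplacement_sq hκ] with t ht htT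
    obtain ⟨d, hd, hle⟩ := ht htT
    refine ⟨d, ?_, hd.add_const _⟩
    rw [mul_add, mul_div_cancel₀ _ hμ.ne']
    linarith
  have hexit : -h T ≤ (2 * κ) ^ 2 :=
    calc -h T ≤ ‖middleDisplacement (fun i => b i T) ^ 2‖ :=
          (neg_le_abs _).trans (abs_im_le_norm _)
      _ = ‖middleDisplacement (fun i => b i T)‖ ^ 2 := norm_pow _ _
      _ ≤ (2 * κ) ^ 2 := by
          gcongr
          exact norm_middleDisplacement_le_of_mem fun i =>
            hb.mem_closedBall i T (right_mem_Icc.2 hT)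
  have hrest : 0 ≤ η / growthRate κ := div_nonneg hη hμ.le
  linarith

end ApproxVortexOrbit

end Instability

/-! ### From weak solutions to approximate point vortices -/

section Superposition

variable {ι : Type*} [Fintype ι] {a : ι → ℝ} {m : ι → ℂ → ℝ} {M : ℝ} {x : ℂ}

/-- The vorticity made of the unit distributions `m i` with intensities `a i`. -/
def superposition (a : ι → ℝ) (m : ι → ℂ → ℝ) (x : ℂ) : ℝ := ∑ i, a i * m i x

lemma exists_ne_zero_of_superposition_ne_zero (h : superposition a m x ≠ 0) : ∃ i, m i x ≠ 0 :=
  have ⟨i, _, hi⟩ := Finset.exists_ne_zero_of_sum_ne_zero h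
  ⟨i, right_ne_zero_of_mul hi⟩

lemma abs_superposition_le (a : ι → ℝ) (m : ι → ℂ → ℝ) (x : ℂ) :
    |superposition a m x| ≤ ∑ i, |a i| * |m i x| :=
  (Finset.abs_sum_le_sum_abs _ _).trans_eq (by simp_rw [abs_mul])

lemma integral_superposition (hm : ∀ i, Integrable (m i)) (h1 : ∀ i, ∫ x, m i x = 1) :
    ∫ x, superposition a m x = ∑ i, a i := by
  simp_rw [superposition, integral_finsetSum _ fun i _ => (hm i).const_mul (a i),
    integral_const_mul, h1, mul_one]

lemma VorticityBound.superposition (hm : ∀ i, VorticityBound (m i) M) :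
    VorticityBound (superposition a m) (∑ i, |a i| * M) := by
  have hint : Integrable (EulerVortex.superposition a m) :=
    integrable_finsetSum _ fun i _ => (hm i).integrable.const_mul (a i)
  have habs : ∀ i ∈ Finset.univ, Integrable (fun x => |a i| * |m i x|) := fun i _ =>
    (hm i).integrable.abs.const_mul _
  refine ⟨hint, ?_, ?_⟩
  · calc ∫ x, |EulerVortex.superposition a m x|
        ≤ ∫ x, ∑ i, |a i| * |m i x| :=
          integral_mono hint.abs (integrable_finsetSum _ habs) (abs_superposition_le a m)
      _ = ∑ i, |a i| * ∫ x, |m i x| := by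
          simp_rw [integral_finsetSum _ habs, integral_const_mul]
      _ ≤ ∑ i, |a i| * M := by
          gcongr with i
          exact (hm i).integral_abs_le
  · filter_upwards [ae_all_iff.2 fun i => (hm i).ae_abs_le] with x hx
    refine (abs_superposition_le a m x).trans ?_
    gcongr with i
    exact hx i

lemma SeparatedDiscs.vortexPiece_superposition {z : ι → ℂ} {κ δ : ℝ}
    (hz : SeparatedDiscs z κ δ) (ha : ∀ i, a i ≠ 0) (hm : ∀ i, VortexBlob (m i) M (z i) κ) :
    vortexPiece a z κ (superposition a m) = m := by
  ext i x
  have hzero : ∀ j, x ∉ closedBall (z j) κ → m j x = 0 := fun j hx =>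
    not_not.1 (mt ((hm j).mem_closedBall x) hx)
  by_cases hx : x ∈ closedBall (z i) κ
  · rw [vortexPiece, indicator_of_mem hx, superposition, Finset.sum_eq_single i,
      mul_div_cancel_left₀ _ (ha i)]
    · intro j _ hji
      rw [hzero j (hz.notMem_closedBall hji hx), mul_zero]
    · exact fun hi => absurd (Finset.mem_univ i) hi
  · rw [vortexPiece, indicator_of_notMem hx, hzero i hx]

end Superposition

section WeakToOrbit

variable {ι : Type*} [Fintype ι] {a : ι → ℝ} {z : ι → ℂ} {m : ι → ℂ → ℝ} {ω : ℂ → ℝ → ℝ}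
  {M κ δ T A : ℝ}

lemma exists_vorticityBound_of_isWeakSolution {ω₀ : ℂ → ℝ}
    (hω : IsWeakSolution 1 (1 / (2 * Real.pi)) ω₀ ω) (h0 : VorticityBound ω₀ M) :
    ∃ M', (∀ t, VorticityBound (fun x => ω x t) M') ∧ VorticityBound ω₀ M' := by
  obtain ⟨M', hM'⟩ := hω.2.1
  refine ⟨max M' M, fun t => ?_, h0.mono (le_max_right _ _)⟩
  exact VorticityBound.mono ⟨hω.1 t, (hM' t).1, (hM' t).2⟩ (le_max_left _ _)

theorem exists_clusteredFlow (hT : 0 < T) (hz : SeparatedDiscs z κ δ) (ha : ∀ i, a i ≠ 0)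
    (hsum : ∑ i, a i ≠ 0) (hm : ∀ i, VortexBlob (m i) M (z i) κ)
    (hω : IsWeakSolution 1 (1 / (2 * Real.pi)) (superposition a m) ω)
    (hs : ∀ t ∈ Icc 0 T, ∀ x, ω x t ≠ 0 → ∃ i, x ∈ closedBall (z i) κ) :
    ∃ w M' ρ G, ClusteredFlow w T M' ρ G a z κ δ ∧ w 0 = superposition a m := by
  obtain ⟨ρ, hρ⟩ := (Bornology.isBounded_iUnion.2 fun i =>
    isBounded_closedBall (x := z i) (r := κ)).subset_closedBall 0
  have hball : ∀ x, (∃ i, x ∈ closedBall (z i) κ) → x ∈ closedBall 0 ρ := fun x hx =>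
    hρ (mem_iUnion.2 hx)
  have hs0 : ∀ x, superposition a m x ≠ 0 → ∃ i, x ∈ closedBall (z i) κ := fun x hx =>
    have ⟨i, hi⟩ := exists_ne_zero_of_superposition_ne_zero hx
    ⟨i, (hm i).mem_closedBall x hi⟩
  have hne : ∫ x, superposition a m x ≠ 0 := by
    rwa [integral_superposition (fun i => (hm i).bound.integrable) fun i => (hm i).integral_eq_one]
  obtain ⟨M', hB, h0⟩ := exists_vorticityBound_of_isWeakSolution hω
    (VorticityBound.superposition fun i => (hm i).bound)
  obtain ⟨G, hG⟩ := exists_confinedFlow hT hB h0 (fun t ht x hx => hball x (hs t ht x hx))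
    (fun x hx => hball x (hs0 x hx)) hne hω
  have hw0 : Function.update (fun t x => ω x t) 0 (superposition a m) 0 = superposition a m :=
    Function.update_self ..
  have hpiece := hz.vortexPiece_superposition ha hm
  refine ⟨_, M', ρ, G, ⟨hG, hz, ha, fun t ht => ?_, fun i => ?_, fun i => ?_⟩, hw0⟩
  · rcases eq_or_ne t 0 with rfl | ht0
    · rwa [hw0]
    · rw [Function.update_of_ne ht0]
      exact hs t ht
  · rw [hw0, hpiece]
    exact (hm i).nonneg
  · rw [hw0, hpiece]
    exact (hm i).integral_eq_one

theorem exists_approxVortexOrbit [DecidableEq ι] (hT : 0 < T) (hz : SeparatedDiscs z κ δ)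
    (ha : ∀ i, a i ≠ 0) (hA : ∀ i, |a i| ≤ A) (hsum : ∑ i, a i ≠ 0)
    (hm : ∀ i, VortexBlob (m i) M (z i) κ)
    (hω : IsWeakSolution 1 (1 / (2 * Real.pi)) (superposition a m) ω)
    (hs : ∀ t ∈ Icc 0 T, ∀ x, ω x t ≠ 0 → ∃ i, x ∈ closedBall (z i) κ) :
    ∃ b, ApproxVortexOrbit a z κ T (interactionRate (Fintype.card ι) A δ *
        √((∑ j, dispersion (m j)) * Real.exp (2 * interactionRate (Fintype.card ι) A δ * T))) b ∧
      ∀ i, b i 0 = barycenter (m i) := by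
  obtain ⟨w, M', ρ, G, hF, hw0⟩ := exists_clusteredFlow hT hz ha hsum hm hω hs
  have hpiece : vortexPiece a z κ (w 0) = m := hw0 ▸ hz.vortexPiece_superposition ha hm
  refine ⟨centerPath a z κ w, hpiece ▸ hF.approxVortexOrbit hA, fun i => ?_⟩
  rw [hF.centerPath_eq_barycenter i hF.zero_mem, hpiece]

end WeakToOrbit

/-! ### Concentrated data that escape in logarithmic time -/

section DiscPatch

variable {c : ℂ} {r : ℝ}

/-- The uniform distribution on the disc of centre `c` and radius `r`, normalised to unit mass. -/
noncomputable def discPatch (c : ℂ) (r : ℝ) : ℂ → ℝ :=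
  (closedBall c r).indicator fun _ => (Real.pi * r ^ 2)⁻¹

lemma discPatch_nonneg (x : ℂ) : 0 ≤ discPatch c r x :=
  indicator_nonneg (fun _ _ => by positivity) x

lemma discPatch_le (x : ℂ) : discPatch c r x ≤ (Real.pi * r ^ 2)⁻¹ :=
  indicator_le_self' (fun _ _ => by positivity) x

lemma integral_discPatch (hr : 0 < r) : ∫ x, discPatch c r x = 1 := by
  rw [discPatch, integral_indicator measurableSet_closedBall, setIntegral_const, Measure.real,
    Complex.volume_closedBall, ENNReal.toReal_mul, ENNReal.toReal_pow, ENNReal.toReal_ofReal hr.le,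
    ENNReal.coe_toReal, NNReal.coe_real_pi, smul_eq_mul, mul_comm (r ^ 2)]
  exact mul_inv_cancel₀ (by positivity)

lemma vortexBlob_discPatch (hr : 0 < r) :
    VortexBlob (discPatch c r) (max 1 (Real.pi * r ^ 2)⁻¹) c r where
  bound :=
    { integrable := by
        exact (integrable_indicator_iff measurableSet_closedBall).2
          (integrableOn_const measure_closedBall_lt_top.ne)
      integral_abs_le := by
        simp_rw [abs_of_nonneg (discPatch_nonneg _), integral_discPatch hr]
        exact le_max_left _ _
      ae_abs_le := .of_forall fun x => by
        rw [abs_of_nonneg (discPatch_nonneg x)]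
        exact (discPatch_le x).trans (le_max_right _ _) }
  nonneg := .of_forall discPatch_nonneg
  integral_eq_one := integral_discPatch hr
  mem_closedBall _ := mem_of_indicator_ne_zero

lemma VortexBlob.mono {m : ℂ → ℝ} {M κ : ℝ} {c' : ℂ} (hm : VortexBlob m M c r)
    (h : closedBall c r ⊆ closedBall c' κ) : VortexBlob m M c' κ :=
  { hm with mem_closedBall := fun x hx => h (hm.mem_closedBall x hx) }

end DiscPatch

section PerturbedVortices

variable {ε : ℝ}

/-- The collinear configuration with its middle vortex moved by about `ε` in the unstable
direction. -/
noncomputable def perturbedCenters (ε : ℝ) : Fin 3 → ℂ := ![-1, ((ε / 4 : ℝ) : ℂ) * (1 - I), 1]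

/-- Disc patches at the perturbed positions. The radius `ε ^ 24` is so small that the dispersion
remains negligible against `ε ^ 2` during a time `5 |log ε|`. -/
noncomputable def perturbedVortices (ε : ℝ) (i : Fin 3) : ℂ → ℝ :=
  discPatch (perturbedCenters ε i) (ε ^ 24)

lemma norm_perturbedCenters_sub_le (hε : 0 < ε) (i : Fin 3) :
    ‖perturbedCenters ε i - collinearCenters i‖ ≤ ε / 2 := by
  have hmid : ‖((ε / 4 : ℝ) : ℂ) * (1 - I)‖ ≤ ε / 2 := by
    have := norm_sub_le (1 : ℂ) I
    rw [norm_one, norm_I] at this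
    rw [norm_mul, norm_real, Real.norm_of_nonneg (by positivity)]
    nlinarith
  have hε2 : 0 ≤ ε / 2 := by positivity
  fin_cases i
  · simpa [perturbedCenters, collinearCenters]
  · simpa only [perturbedCenters, collinearCenters, Fin.mk_one, Matrix.cons_val, sub_zero]
  · simpa [perturbedCenters, collinearCenters]

lemma vortexBlob_perturbedVortices (hε : 0 < ε) (i : Fin 3) :
    VortexBlob (perturbedVortices ε i) (max 1 (Real.pi * (ε ^ 24) ^ 2)⁻¹) (perturbedCenters ε i)
      (ε ^ 24) :=
  vortexBlob_discPatch (by positivity)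

lemma closedBall_perturbedCenters_subset (hε : 0 < ε) (hε2 : ε ≤ 1 / 2) (i : Fin 3) :
    closedBall (perturbedCenters ε i) (ε ^ 24) ⊆ closedBall (collinearCenters i) ε := by
  refine closedBall_subset_closedBall' ?_
  have hpow : ε ^ 23 ≤ ε ^ 1 := pow_le_pow_of_le_one hε.le (by linarith) (by norm_num)
  rw [dist_eq_norm]
  nlinarith [norm_perturbedCenters_sub_le hε i]

lemma abs_collinearIntensities_le (i : Fin 3) : |collinearIntensities i| ≤ 1 := by
  fin_cases i <;> norm_num [collinearIntensities, abs_le]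

lemma concentratedData_superposition_perturbedVortices (hε : 0 < ε) (hε2 : ε ≤ 1 / 2) :
    ConcentratedData 3 collinearCenters collinearIntensities 3 48 ε
      (superposition collinearIntensities (perturbedVortices ε)) := by
  refine ⟨fun i x => collinearIntensities i * perturbedVortices ε i x, fun x => rfl,
    fun i x hx => ?_, fun i => ?_, fun i x => ?_, fun i => ?_, fun x => ?_⟩
  · exact closedBall_perturbedCenters_subset hε hε2 i
      ((vortexBlob_perturbedVortices hε i).mem_closedBall x (right_ne_zero_of_mul hx))
  · exact (vortexBlob_perturbedVortices hε i).bound.integrable.const_mul _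
  · rw [← mul_assoc]
    exact mul_nonneg (mul_self_nonneg _) (discPatch_nonneg x)
  · rw [integral_const_mul, (vortexBlob_perturbedVortices hε i).integral_eq_one, mul_one]
  · have hpatch : ∀ i, |collinearIntensities i| * |perturbedVortices ε i x| ≤ ε ^ (-48 : ℝ) :=
      fun i => by
        rw [perturbedVortices, abs_of_nonneg (discPatch_nonneg x)]
        calc |collinearIntensities i| * discPatch (perturbedCenters ε i) (ε ^ 24) x
            ≤ 1 * (Real.pi * (ε ^ 24) ^ 2)⁻¹ := by
              gcongr
              exacts [discPatch_nonneg x, abs_collinearIntensities_le i, discPatch_le x]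
          _ ≤ (1 * ε ^ 48)⁻¹ := by
              rw [one_mul, ← pow_mul]
              gcongr
              linarith [Real.pi_gt_three]
          _ = ε ^ (-48 : ℝ) := by
              rw [one_mul, Real.rpow_neg hε.le]
              norm_cast
    refine (abs_superposition_le _ _ x).trans ((Finset.sum_le_sum fun i _ => hpatch i).trans ?_)
    simp

lemma sum_dispersion_perturbedVortices_le (hε : 0 < ε) :
    ∑ i, dispersion (perturbedVortices ε i) ≤ (4 * ε ^ 24) ^ 2 := by
  have hle := fun i => (vortexBlob_perturbedVortices hε i).dispersion_le
  rw [Fin.sum_univ_three]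
  nlinarith [hle 0, hle 1, hle 2]

lemma le_neg_im_middleDisplacement_sq (hε : 0 < ε) (hε2 : ε ≤ 1 / 10) :
    ε ^ 2 / 10 ≤
      -(middleDisplacement (fun i => barycenter (perturbedVortices ε i)) ^ 2).im := by
  set D := middleDisplacement fun i => barycenter (perturbedVortices ε i)
  set o : ℂ := middleDisplacement (perturbedCenters ε) with ho
  have ho_eq : o = ((ε / 4 : ℝ) : ℂ) * (1 - I) := by
    simp [ho, middleDisplacement, perturbedCenters]
  have hdist : ‖D - o‖ ≤ 2 * ε ^ 24 := by
    rw [← middleDisplacement_sub]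
    exact norm_middleDisplacement_le fun i =>
      mem_closedBall_iff_norm.1 (vortexBlob_perturbedVortices hε i).barycenter_mem_closedBall
  have hre := (abs_re_le_norm _).trans hdist
  have him := (abs_im_le_norm _).trans hdist
  have hsmall : 2 * ε ^ 24 ≤ ε / 100 :=
    calc 2 * ε ^ 24 = 2 * ε * ε ^ 23 := by ring
      _ ≤ 2 * ε * ε ^ 3 := by
          gcongr 2 * ε * ?_
          exact pow_le_pow_of_le_one hε.le (by linarith) (by norm_num)
      _ ≤ 2 * ε * (1 / 10) ^ 3 := by gcongr
      _ ≤ ε / 100 := by linarith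
  have hD_re : 6 / 25 * ε ≤ D.re := by
    have ho_re : o.re = ε / 4 := by simp [ho_eq]
    rw [sub_re, ho_re] at hre
    linarith [(abs_le.1 hre).1]
  have hD_im : 6 / 25 * ε ≤ -D.im := by
    have ho_im : o.im = -(ε / 4) := by simp [ho_eq]
    rw [sub_im, ho_im] at him
    linarith [(abs_le.1 him).2]
  have hprod : 6 / 25 * ε * (6 / 25 * ε) ≤ D.re * -D.im :=
    mul_le_mul hD_re hD_im (by positivity) (by linarith)
  rw [sq D, mul_im]
  nlinarith

end PerturbedVortices

section ExitTime

variable {β ξ ε : ℝ}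

lemma separatedDiscs_collinearCenters {κ : ℝ} (hκ : 0 ≤ κ) (hκ2 : κ ≤ 1 / 4) :
    SeparatedDiscs collinearCenters κ (1 / 2) where
  radius_nonneg := hκ
  gap_pos := by norm_num
  gap_le := by
    have hsep : Pairwise fun i j => 1 ≤ dist (collinearCenters i) (collinearCenters j) := by
      intro i j hij
      rw [dist_eq_norm]
      fin_cases i <;> fin_cases j <;> first | exact absurd rfl hij | norm_num [collinearCenters]
    exact hsep.mono fun i j hij => by linarith

lemma collinearIntensities_ne_zero (i : Fin 3) : collinearIntensities i ≠ 0 := by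
  fin_cases i <;> norm_num [collinearIntensities]

lemma sum_collinearIntensities_ne_zero : ∑ i, collinearIntensities i ≠ 0 := by
  rw [Fin.sum_univ_three]
  simp only [collinearIntensities, Matrix.cons_val]
  norm_num

lemma growthRate_ge {κ : ℝ} (hκ : κ ≤ 1 / 100) : 2 / 5 ≤ growthRate κ := by
  rw [growthRate, div_mul_eq_mul_div, le_div_iff₀ (by positivity)]
  linarith [Real.pi_lt_d2]

lemma interactionRate_collinear_le : interactionRate (Fintype.card (Fin 3)) 1 (1 / 2) ≤ 4 := by
  rw [interactionRate, Fintype.card_fin, div_le_iff₀ (by positivity)]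
  norm_num
  linarith [Real.pi_gt_three]

lemma velocity_error_le {Λ s T : ℝ} (hε : 0 < ε) (hε1 : ε ≤ 1) (hΛ : Λ ≤ 4)
    (hs : s ≤ (4 * ε ^ 24) ^ 2) (hT : T ≤ 5 * |Real.log ε|) (hT0 : 0 ≤ T) :
    Λ * √(s * Real.exp (2 * Λ * T)) ≤ 16 * ε ^ 4 := by
  have hexp : Real.exp (2 * Λ * T) ≤ ((ε ^ 20)⁻¹) ^ 2 := by
    rw [← Real.exp_log (show 0 < ((ε ^ 20)⁻¹) ^ 2 by positivity)]
    gcongr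
    rw [Real.log_pow, Real.log_inv, Real.log_pow]
    rw [abs_of_nonpos (Real.log_nonpos hε.le hε1)] at hT
    push_cast
    nlinarith
  calc Λ * √(s * Real.exp (2 * Λ * T))
      ≤ 4 * √((4 * ε ^ 24) ^ 2 * ((ε ^ 20)⁻¹) ^ 2) := by gcongr
    _ = 4 * (4 * ε ^ 24 * (ε ^ 20)⁻¹) := by
        rw [← mul_pow, Real.sqrt_sq (by positivity)]
    _ = 16 * ε ^ 4 := by field_simp; ring

lemma tendsto_rpow_nhdsGT_zero (hβ : 0 < β) :
    Tendsto (fun ε : ℝ => ε ^ β) (𝓝[>] 0) (𝓝 0) := by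
  have hcont := (Real.continuousAt_rpow_const 0 β (.inr hβ.le)).tendsto
  rw [Real.zero_rpow hβ.ne'] at hcont
  exact hcont.mono_left nhdsWithin_le_nhds

lemma eventually_lt_exp_growthRate (hβ : 0 < β) (hξ : 4 * Real.pi / 3 * (1 - β) < ξ) (K : ℝ) :
    ∀ᶠ ε in 𝓝[>] 0,
      K * (ε ^ β) ^ 2 < ε ^ 2 * Real.exp (growthRate (ε ^ β) * (ξ * |Real.log ε|)) := by
  have hrate : 2 * (1 - β) < 3 / (2 * Real.pi) * ξ := by
    have := Real.pi_pos
    rw [div_mul_eq_mul_div, lt_div_iff₀ (by positivity)]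
    linarith
  obtain ⟨c, hcβ, hcξ⟩ := exists_between hrate
  have hlim : Tendsto (fun ε : ℝ => growthRate (ε ^ β) * ξ) (𝓝[>] 0)
      (𝓝 (3 / (2 * Real.pi) * ξ)) := by
    simpa [growthRate] using ((((tendsto_rpow_nhdsGT_zero hβ).const_mul 10).const_sub 1).const_mul
      (3 / (2 * Real.pi))).mul_const ξ
  have hblow : Tendsto (fun ε : ℝ => ε ^ (2 - c - 2 * β)) (𝓝[>] 0) atTop :=
    tendsto_rpow_neg_nhdsGT_zero (by linarith)
  filter_upwards [hlim.eventually_const_lt hcξ, hblow.eventually_gt_atTop K, self_mem_nhdsWithin,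
    Ioo_mem_nhdsGT one_pos] with ε hμ hK hε hε1
  have hε : 0 < ε := hε
  have hlog : |Real.log ε| = -Real.log ε := abs_of_nonpos (Real.log_nonpos hε.le hε1.2.le)
  have hexp : ε ^ (-c) ≤ Real.exp (growthRate (ε ^ β) * (ξ * |Real.log ε|)) := by
    rw [Real.rpow_def_of_pos hε, Real.exp_le_exp, ← mul_assoc, hlog]
    nlinarith [Real.log_nonpos hε.le hε1.2.le]
  calc K * (ε ^ β) ^ 2 < ε ^ (2 - c - 2 * β) * (ε ^ β) ^ 2 := by gcongr
    _ = ε ^ 2 * ε ^ (-c) := by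
        rw [← Real.rpow_natCast, ← Real.rpow_natCast, ← Real.rpow_mul hε.le, ← Real.rpow_add hε,
          ← Real.rpow_add hε]
        congr 1
        push_cast
        ring
    _ ≤ _ := by gcongr

theorem exitTimeLE_of_isWeakSolution {ω : ℂ → ℝ → ℝ} (hε : 0 < ε) (hε1 : ε ≤ 1 / 100)
    (hκ : ε ^ β ≤ 1 / 100) (hεκ : ε ≤ ε ^ β) (hξ : 0 < ξ) (hξ5 : ξ ≤ 5)
    (hgrowth : 80 * (ε ^ β) ^ 2 <
      ε ^ 2 * Real.exp (growthRate (ε ^ β) * (ξ * |Real.log ε|)))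
    (hω : IsWeakSolution 1 (1 / (2 * Real.pi))
      (superposition collinearIntensities (perturbedVortices ε)) ω) :
    ExitTimeLE 3 collinearCenters β ε ω (ξ * |Real.log ε|) := by
  intro t _ hsupp
  by_contra! hlt
  set T := ξ * |Real.log ε|
  have hT : 0 < T := mul_pos hξ (abs_pos.2 (Real.log_neg hε (by linarith)).ne)
  have hblob : ∀ i, VortexBlob (perturbedVortices ε i) _ (collinearCenters i) (ε ^ β) := fun i =>
    (vortexBlob_perturbedVortices hε i).mono <|
      (closedBall_perturbedCenters_subset hε (by linarith) i).trans
        (closedBall_subset_closedBall hεκ)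
  obtain ⟨b, hb, hb0⟩ := exists_approxVortexOrbit hT
    (separatedDiscs_collinearCenters (by positivity) (by linarith)) collinearIntensities_ne_zero
    abs_collinearIntensities_le sum_collinearIntensities_ne_zero hblob hω
    fun s hs x hx => mem_iUnion.1 (hsupp s hs.1 (hs.2.trans hlt.le) hx)
  have hη := velocity_error_le hε (by linarith) interactionRate_collinear_le
    (sum_dispersion_perturbedVortices_le hε) (by unfold T; gcongr) hT.le
  have hquot : 16 * ε ^ 4 / growthRate (ε ^ β) ≤ ε ^ 2 / 20 := by
    have hrate := growthRate_ge hκ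
    have hsq : ε ^ 2 ≤ (1 / 100) ^ 2 := by gcongr
    rw [div_le_iff₀ (by linarith)]
    calc 16 * ε ^ 4 = ε ^ 2 / 20 * (320 * ε ^ 2) := by ring
      _ ≤ ε ^ 2 / 20 * growthRate (ε ^ β) := by gcongr; linarith
  have hexit := (hb.mono hη).exp_growthRate_mul_le hT.le (by positivity) (by linarith)
  simp only [hb0] at hexit
  have hstart := le_neg_im_middleDisplacement_sq hε (by linarith)
  have hamplified : ε ^ 2 / 20 * Real.exp (growthRate (ε ^ β) * T) ≤ (2 * ε ^ β) ^ 2 :=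
    le_trans (by gcongr; linarith) hexit
  linarith

theorem exists_forall_exitTimeLE (hβ : 0 < β) (hβ1 : β < 1)
    (hξ : 4 * Real.pi / 3 * (1 - β) < ξ) :
    ∃ ε₀ > 0, ∀ ε : ℝ, 0 < ε → ε < ε₀ → ∃ ω₀ : ℂ → ℝ,
      ConcentratedData 3 collinearCenters collinearIntensities 3 48 ε ω₀ ∧
        ∀ ω : ℂ → ℝ → ℝ, IsWeakSolution 1 (1 / (2 * Real.pi)) ω₀ ω →
          ExitTimeLE 3 collinearCenters β ε ω (ξ * |Real.log ε|) := by
  have hlow : 4 * Real.pi / 3 * (1 - β) < min ξ 5 := by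
    refine lt_min hξ ?_
    nlinarith [Real.pi_lt_d2, Real.pi_pos]
  have hpos : 0 < min ξ 5 := lt_of_le_of_lt (mul_nonneg (by positivity) (by linarith)) hlow
  have hsmall : ∀ᶠ ε : ℝ in 𝓝[>] 0, ε ^ β < 1 / 100 :=
    (tendsto_rpow_nhdsGT_zero hβ).eventually_lt_const (by norm_num)
  obtain ⟨ε₀, hε₀, hev⟩ := mem_nhdsGT_iff_exists_Ioo_subset.1 <|
    (eventually_lt_exp_growthRate hβ hlow 80).and hsmall
  refine ⟨min ε₀ (1 / 100), lt_min hε₀ (by norm_num), fun ε hε hlt => ?_⟩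
  obtain ⟨hgrowth, hκ⟩ := hev ⟨hε, hlt.trans_le (min_le_left _ _)⟩
  have hε1 : ε ≤ 1 / 100 := hlt.le.trans (min_le_right _ _)
  have hεκ : ε ≤ ε ^ β := by
    simpa using Real.rpow_le_rpow_of_exponent_ge hε (by linarith) hβ1.le
  refine ⟨_, concentratedData_superposition_perturbedVortices hε (by linarith), fun ω hω => ?_⟩
  have hexit := exitTimeLE_of_isWeakSolution hε hε1 hκ.le hεκ hpos (min_le_right _ _) hgrowth hω
  exact fun t ht hsupp => (hexit t ht hsupp).trans (by gcongr; exact min_le_left _ _)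

end ExitTime

end EulerVortex

/-- optimality of the logarithmic confinement bound for the 2D Euler
equations in the plane, around an unstable stationary configuration of three vortices. -/
theorem euler_long_time_confinement_optimal :
    ∃ (β₀ ν : ℝ) (z : Fin 3 → ℂ) (a : Fin 3 → ℝ) (C : ℝ),
      β₀ < 1 / 2 ∧ 2 ≤ ν ∧ 0 < C ∧
      (∀ i j : Fin 3, i ≠ j → z i ≠ z j) ∧
      (∀ i, a i ≠ 0) ∧
      (∀ i, ∑ j ∈ Finset.univ.erase i,
          a j • biotSavartK 1 (1 / (2 * Real.pi)) (z i) (z j) = 0) ∧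
      ∀ β : ℝ, β₀ < β → β < 1 →
      ∀ ξ₁ : ℝ, 4 * Real.pi / 3 * (1 - β) < ξ₁ →
      ∃ ε₀ > 0, ∀ ε : ℝ, 0 < ε → ε < ε₀ →
      ∃ ω₀ : ℂ → ℝ, ConcentratedData 3 z a C ν ε ω₀ ∧
        ∀ ω : ℂ → ℝ → ℝ, IsWeakSolution 1 (1 / (2 * Real.pi)) ω₀ ω →
          ExitTimeLE 3 z β ε ω (ξ₁ * |Real.log ε|) := by
  refine ⟨0, 48, EulerVortex.collinearCenters, EulerVortex.collinearIntensities, 3,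
    by norm_num, by norm_num, by norm_num, ?_, EulerVortex.collinearIntensities_ne_zero,
    EulerVortex.pointVortexVelocity_collinearCenters,
    fun β hβ hβ1 ξ₁ hξ => EulerVortex.exists_forall_exitTimeLE hβ hβ1 hξ⟩
  intro i j hij
  have hgap := (EulerVortex.separatedDiscs_collinearCenters le_rfl (by norm_num)).gap_le hij
  exact dist_pos.1 (by linarith)
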